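/- arXiv:1302.2638 — 4 statements merged into one kernel-verified Lean document; each statement's English description precedes it below -/
import Mathlib

section
/- Let n be a positive integer and let α ≥ 0 be a real number. For G drawn from the induced real Ginibre ensemble of size 2n with parameter α, and for every complex number z, ⟨det(z·I − G)·Tr(G)⟩ = −2(n+α)·z^{2n−1}. Consequently the odd-degree skew orthogonal polynomial Q_{2n+1}(z) := z·⟨det(z·I − G)⟩ + ⟨det(z·I − G)·Tr(G)⟩ equals z^{2n+1} − 2(n+α)·z^{2n−1}. -/
open MeasureTheory Matrix

/-- The (unnormalized) density of the induced real Ginibre ensemble of size `N`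
with parameter `α`: `det(G Gᵀ)^α exp(-Tr(G Gᵀ)/2)`. -/
noncomputable def inducedRealGinibreWeight (N : ℕ) (α : ℝ) (g : Fin N → Fin N → ℝ) : ℝ :=
  (Matrix.of g * (Matrix.of g)ᵀ).det ^ α *
    Real.exp (-(Matrix.of g * (Matrix.of g)ᵀ).trace / 2)

/-!
The law of `G` is invariant under right multiplication by orthogonal matrices. Averaging over the
sign changes of the columns turns `det (z - G)` into `z ^ N` and `det (z - G) * tr G` into
`-z ^ (N - 1) * ∑ k, G k k ^ 2`; permuting the columns shows that `N * ⟨∑ k, G k k ^ 2⟩` is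
`⟨tr (G Gᵀ)⟩`. Finally, substituting `G ↦ √(1 - 2t) G` shows that the moment generating function of
`tr (G Gᵀ)` is `(1 - 2t) ^ (-N (N + 2α) / 2)`, so that `⟨tr (G Gᵀ)⟩ = N (N + 2α)`.
-/

section SignAveraging

variable {ι R : Type*} [Fintype ι] [DecidableEq ι] [CommRing R]

theorem sum_units_int {M : Type*} [AddCommMonoid M] (f : ℤˣ → M) : ∑ s, f s = f 1 + f (-1) := by
  rw [UnitsInt.univ, Finset.sum_pair (units_ne_neg_self 1)]

theorem sum_det_of_choose_col {κ : Type*} [Fintype κ] (M : ι → κ → ι → R) :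
    ∑ f : ι → κ, (of fun i j => M j (f j) i).det = (of fun i j => ∑ s, M j s i).det := by
  classical
  have h := (detRowAlternating (n := ι) (R := R)).toMultilinearMap.map_sum M
  calc ∑ f : ι → κ, (of fun i j => M j (f j) i).det
      = ∑ f : ι → κ, (of fun j i => M j (f j) i).det :=
        Finset.sum_congr rfl fun f _ => (det_transpose _).symm
    _ = (of fun j => ∑ s, M j s).det := h.symm
    _ = (of fun i j => ∑ s, M j s i).det := by
        rw [← det_transpose]
        congr 1 with i j
        simp

theorem det_updateCol_smul_one (z : R) (k : ι) (b : ι → R) :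
    ((z • (1 : Matrix ι ι R)).updateCol k b).det = z ^ (Fintype.card ι - 1) * b k := by
  rw [← cramer_apply, cramer_eq_adjugate_mulVec, adjugate_smul, adjugate_one, smul_mulVec,
    one_mulVec, Pi.smul_apply, smul_eq_mul]

theorem sum_det_smul_one_sub_mul_diagonal_units (z : R) (A : Matrix ι ι R) :
    ∑ ε : ι → ℤˣ, (z • (1 : Matrix ι ι R) - A * diagonal fun j => ((ε j : ℤ) : R)).det =
      2 ^ Fintype.card ι * z ^ Fintype.card ι := by
  calc _ = ∑ ε : ι → ℤˣ, (of fun i j =>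
          (z • (1 : Matrix ι ι R)) i j - A i j * ((ε j : ℤ) : R)).det := by
        refine Finset.sum_congr rfl fun ε _ => congrArg det ?_
        ext i j
        simp [mul_diagonal]
    _ = ((2 * z) • (1 : Matrix ι ι R)).det := by
        rw [sum_det_of_choose_col fun j (s : ℤˣ) i =>
          (z • (1 : Matrix ι ι R)) i j - A i j * ((s : ℤ) : R)]
        congr 1 with i j
        simp only [of_apply, sum_units_int, Matrix.smul_apply, smul_eq_mul, Units.val_one,
          Units.val_neg, Int.cast_one, Int.cast_neg]
        ring
    _ = 2 ^ Fintype.card ι * z ^ Fintype.card ι := by simp [mul_pow]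

theorem sum_unit_mul_det_smul_one_sub_mul_diagonal_units (z : R) (A : Matrix ι ι R) (k : ι) :
    ∑ ε : ι → ℤˣ, ((ε k : ℤ) : R) *
        (z • (1 : Matrix ι ι R) - A * diagonal fun j => ((ε j : ℤ) : R)).det =
      -(2 ^ Fintype.card ι * z ^ (Fintype.card ι - 1) * A k k) := by
  calc _ = ∑ ε : ι → ℤˣ, (of fun i j => (if j = k then ((ε j : ℤ) : R) else 1) *
          ((z • (1 : Matrix ι ι R)) i j - A i j * ((ε j : ℤ) : R))).det := by
        refine Finset.sum_congr rfl fun ε _ => ?_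
        have h := det_mul_row (fun j => if j = k then ((ε j : ℤ) : R) else 1)
          (z • (1 : Matrix ι ι R) - A * diagonal fun j => ((ε j : ℤ) : R))
        rw [Finset.prod_ite_eq' Finset.univ k, if_pos (Finset.mem_univ k)] at h
        simpa only [Matrix.sub_apply, mul_diagonal] using h.symm
    _ = ((2 : R) • (z • (1 : Matrix ι ι R)).updateCol k fun i => -A i k).det := by
        rw [sum_det_of_choose_col fun j (s : ℤˣ) i => (if j = k then ((s : ℤ) : R) else 1) *
          ((z • (1 : Matrix ι ι R)) i j - A i j * ((s : ℤ) : R))]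
        congr 1 with i j
        simp only [of_apply, sum_units_int, Matrix.smul_apply, smul_eq_mul, updateCol_apply,
          Units.val_one, Units.val_neg, Int.cast_one, Int.cast_neg]
        split_ifs with hj
        · rw [hj]
          ring
        · ring
    _ = _ := by
        rw [det_smul, det_updateCol_smul_one]
        ring

theorem sum_det_smul_one_sub_mul_diagonal_units_mul_trace (z : R) (A : Matrix ι ι R) :
    ∑ ε : ι → ℤˣ, (z • (1 : Matrix ι ι R) - A * diagonal fun j => ((ε j : ℤ) : R)).det *
        (A * diagonal fun j => ((ε j : ℤ) : R)).trace =
      -(2 ^ Fintype.card ι * z ^ (Fintype.card ι - 1) * ∑ k, A k k ^ 2) := by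
  simp only [trace, diag_apply, mul_diagonal, Finset.mul_sum, ← Finset.sum_neg_distrib]
  rw [Finset.sum_comm]
  refine Finset.sum_congr rfl fun k _ => ?_
  calc _ = A k k * ∑ ε : ι → ℤˣ, ((ε k : ℤ) : R) *
          (z • (1 : Matrix ι ι R) - A * diagonal fun j => ((ε j : ℤ) : R)).det := by
        rw [Finset.mul_sum]
        exact Finset.sum_congr rfl fun ε _ => by ring
    _ = _ := by
        rw [sum_unit_mul_det_smul_one_sub_mul_diagonal_units]
        ring

end SignAveraging

section Gram

variable {ι : Type*} [Fintype ι]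

theorem trace_mul_transpose_self_eq_sum (g : ι → ι → ℝ) :
    (of g * (of g)ᵀ).trace = ∑ i, ∑ j, g i j ^ 2 := by
  simp [trace, mul_apply, sq]

theorem norm_le_one_add_trace_mul_transpose_self (g : ι → ι → ℝ) :
    ‖g‖ ≤ 1 + (of g * (of g)ᵀ).trace := by
  rw [trace_mul_transpose_self_eq_sum]
  have hsum (i : ι) : 0 ≤ ∑ j, g i j ^ 2 := Finset.sum_nonneg fun j _ => sq_nonneg _
  have htot : 0 ≤ 1 + ∑ i, ∑ j, g i j ^ 2 :=
    add_nonneg zero_le_one (Finset.sum_nonneg fun i _ => hsum i)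
  refine (pi_norm_le_iff_of_nonneg htot).2 fun i => (pi_norm_le_iff_of_nonneg htot).2 fun j => ?_
  calc ‖g i j‖ ≤ 1 + g i j ^ 2 := by
        rw [Real.norm_eq_abs, ← sq_abs]
        nlinarith [sq_nonneg (|g i j| - 1)]
    _ ≤ 1 + ∑ i, ∑ j, g i j ^ 2 := by
        gcongr
        exact (Finset.single_le_sum (fun j _ => sq_nonneg (g i j)) (Finset.mem_univ j)).trans
          (Finset.single_le_sum (fun i _ => hsum i) (Finset.mem_univ i))

variable [DecidableEq ι]

theorem det_mul_transpose_self {R : Type*} [CommRing R] (A : Matrix ι ι R) :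
    (A * Aᵀ).det = A.det ^ 2 := by
  rw [det_mul, det_transpose, sq]

theorem det_mul_transpose_self_nonneg (A : Matrix ι ι ℝ) : 0 ≤ (A * Aᵀ).det :=
  det_mul_transpose_self A ▸ sq_nonneg A.det

end Gram

section Invariance

theorem integral_sum_comp_of_measurePreserving {X E κ : Type*} [MeasurableSpace X] [Fintype κ]
    [NormedAddCommGroup E] [NormedSpace ℝ E] {ν : Measure X} {T : κ → X → X}
    (hT : ∀ k, MeasurePreserving (T k) ν ν) {f : X → E} (hf : Integrable f ν) :
    ∫ x, ∑ k, f (T k x) ∂ν = Fintype.card κ • ∫ x, f x ∂ν := by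
  rw [integral_finsetSum (f := fun k x => f (T k x)) _
    fun k _ => (hT k).integrable_comp_of_integrable hf]
  have hcomp (k : κ) : ∫ x, f (T k x) ∂ν = ∫ x, f x ∂ν := by
    have hmap := (hT k).map_eq
    rw [← integral_map (hT k).aemeasurable (hmap.symm ▸ hf.aestronglyMeasurable), hmap]
  simp [hcomp]

theorem measurePreserving_withDensity_of_comp_eq {X : Type*} [MeasurableSpace X] {ν : Measure X}
    {T : X → X} (hT : MeasurePreserving T ν ν) {w : X → ENNReal} (hw : Measurable w)
    (hwT : ∀ x, w (T x) = w x) : MeasurePreserving T (ν.withDensity w) (ν.withDensity w) := by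
  refine ⟨hT.measurable, Measure.ext fun s hs => ?_⟩
  rw [Measure.map_apply hT.measurable hs, withDensity_apply _ (hT.measurable hs),
    withDensity_apply _ hs, ← hT.setLIntegral_comp_preimage hs hw]
  simp only [hwT]

variable {ι : Type*} [Fintype ι] [DecidableEq ι]

/-- Invariance of the law `ν` of a random real matrix under right multiplication by the orthogonal
group. A matrix is encoded by its family of rows. -/
def IsRightOrthogonallyInvariant (ν : Measure (ι → ι → ℝ)) : Prop :=
  ∀ O ∈ orthogonalGroup ι ℝ, MeasurePreserving (fun g i => g i ᵥ* O) ν ν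

theorem diagonal_units_mem_orthogonalGroup (ε : ι → ℤˣ) :
    (diagonal fun j => ((ε j : ℤ) : ℝ)) ∈ orthogonalGroup ι ℝ := by
  have hsq (s : ℤˣ) : ((s : ℤ) : ℝ) * (s : ℤ) = 1 := by
    rw [← Int.cast_mul, ← Units.val_mul, Int.units_mul_self, Units.val_one, Int.cast_one]
  rw [mem_orthogonalGroup_iff, diagonal_transpose, diagonal_mul_diagonal]
  simp [hsq]

theorem permMatrix_mem_orthogonalGroup (σ : Equiv.Perm ι) :
    σ.permMatrix ℝ ∈ orthogonalGroup ι ℝ := by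
  rw [mem_orthogonalGroup_iff, transpose_permMatrix, ← permMatrix_mul,
    inv_mul_cancel, permMatrix_one]

theorem volume_isRightOrthogonallyInvariant :
    IsRightOrthogonallyInvariant (volume : Measure (ι → ι → ℝ)) := by
  intro O hO
  have hdet : |O.det| = 1 := by
    have h := congrArg det ((mem_orthogonalGroup_iff _ _).1 hO)
    rw [det_mul, det_transpose, det_one] at h
    rw [← abs_one, ← sq_eq_sq_iff_abs_eq_abs, sq, h, one_pow]
  have hvec : (fun x : ι → ℝ => x ᵥ* O) = toLin' Oᵀ := by
    ext x : 1
    rw [toLin'_apply, mulVec_transpose]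
  refine volume_preserving_pi (f := fun _ x => x ᵥ* O) fun _ => ⟨by fun_prop, ?_⟩
  have hne : Oᵀ.det ≠ 0 := by
    rw [det_transpose, ← abs_pos, hdet]
    exact one_pos
  rw [hvec, Real.map_matrix_volume_pi_eq_smul_volume_pi hne, abs_inv, det_transpose, hdet, inv_one,
    ENNReal.ofReal_one, one_smul]

namespace IsRightOrthogonallyInvariant

variable {ν : Measure (ι → ι → ℝ)} (hν : IsRightOrthogonallyInvariant ν)
include hν

theorem withDensity {w : (ι → ι → ℝ) → ENNReal} (hw : Measurable w)
    (hwO : ∀ O ∈ orthogonalGroup ι ℝ, ∀ g, w (fun i => g i ᵥ* O) = w g) :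
    IsRightOrthogonallyInvariant (ν.withDensity w) := fun O hO =>
  measurePreserving_withDensity_of_comp_eq (hν O hO) hw (hwO O hO)

theorem two_pow_mul_integral {f : Matrix ι ι ℂ → ℂ}
    (hf : Integrable (fun g => f ((of g).map ((↑) : ℝ → ℂ))) ν) :
    2 ^ Fintype.card ι * ∫ g, f ((of g).map ((↑) : ℝ → ℂ)) ∂ν =
      ∫ g, ∑ ε : ι → ℤˣ, f ((of g).map ((↑) : ℝ → ℂ) * diagonal fun j => ((ε j : ℤ) : ℂ)) ∂ν := by
  have hmap (ε : ι → ℤˣ) (g : ι → ι → ℝ) :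
      (of fun i => g i ᵥ* diagonal fun j => ((ε j : ℤ) : ℝ)).map ((↑) : ℝ → ℂ) =
        (of g).map ((↑) : ℝ → ℂ) * diagonal fun j => ((ε j : ℤ) : ℂ) := by
    ext i j
    simp [vecMul_diagonal, mul_diagonal]
  have h := integral_sum_comp_of_measurePreserving
    (fun ε => hν _ (diagonal_units_mem_orthogonalGroup ε)) hf
  simp only [hmap] at h
  simp [h]

theorem integral_det_smul_one_sub (z : ℂ)
    (hint : Integrable (fun g => (z • (1 : Matrix ι ι ℂ) - (of g).map ((↑) : ℝ → ℂ)).det) ν) :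
    ∫ g, (z • (1 : Matrix ι ι ℂ) - (of g).map ((↑) : ℝ → ℂ)).det ∂ν =
      ν.real Set.univ * z ^ Fintype.card ι := by
  have h := hν.two_pow_mul_integral (f := fun A => (z • (1 : Matrix ι ι ℂ) - A).det) hint
  simp only [sum_det_smul_one_sub_mul_diagonal_units, integral_const, Complex.real_smul] at h
  refine mul_left_cancel₀ (pow_ne_zero (Fintype.card ι) (two_ne_zero (α := ℂ))) (h.trans ?_)
  ring

theorem integral_det_smul_one_sub_mul_trace (z : ℂ)
    (hint : Integrable (fun g : ι → ι → ℝ =>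
      (z • (1 : Matrix ι ι ℂ) - (of g).map ((↑) : ℝ → ℂ)).det * ((of g).trace : ℂ)) ν) :
    ∫ g, (z • (1 : Matrix ι ι ℂ) - (of g).map ((↑) : ℝ → ℂ)).det * ((of g).trace : ℂ) ∂ν =
      -z ^ (Fintype.card ι - 1) * ((∫ g, ∑ k, g k k ^ 2 ∂ν : ℝ) : ℂ) := by
  have htr (g : ι → ι → ℝ) : ((of g).trace : ℂ) = ((of g).map ((↑) : ℝ → ℂ)).trace := by
    simp [trace]
  simp only [htr] at hint ⊢
  have h := hν.two_pow_mul_integral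
    (f := fun A => (z • (1 : Matrix ι ι ℂ) - A).det * A.trace) hint
  refine mul_left_cancel₀ (pow_ne_zero (Fintype.card ι) (two_ne_zero (α := ℂ))) (h.trans ?_)
  rw [← integral_complex_ofReal, ← integral_const_mul, ← integral_const_mul]
  congr 1 with g
  rw [sum_det_smul_one_sub_mul_diagonal_units_mul_trace]
  simp only [map_apply, of_apply, Complex.ofReal_sum, Complex.ofReal_pow]
  ring

theorem integral_trace_mul_transpose_self
    (hint : ∀ i j, Integrable (fun g => g i j ^ 2) ν) :
    ∫ g, (of g * (of g)ᵀ).trace ∂ν = Fintype.card ι * ∫ g, ∑ k, g k k ^ 2 ∂ν := by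
  have hswap (i j : ι) : ∫ g, g i j ^ 2 ∂ν = ∫ g, g i i ^ 2 ∂ν := by
    have hσ := hν _ (permMatrix_mem_orthogonalGroup (Equiv.swap i j))
    have h := integral_map hσ.aemeasurable
      (Continuous.aestronglyMeasurable (f := fun g : ι → ι → ℝ => g i i ^ 2) (by fun_prop))
    rw [hσ.map_eq] at h
    simpa [vecMul_permMatrix] using h.symm
  simp only [trace_mul_transpose_self_eq_sum]
  rw [integral_finsetSum _ fun i _ => integrable_finsetSum _ fun j _ => hint i j,
    integral_finsetSum _ fun i _ => hint i i, Finset.mul_sum]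
  refine Finset.sum_congr rfl fun i _ => ?_
  rw [integral_finsetSum _ fun j _ => hint i j]
  simp [hswap]

end IsRightOrthogonallyInvariant

end Invariance

section TemperateGrowth

variable {E R ι : Type*} [NormedAddCommGroup E] [NormedSpace ℝ E] [NormedCommRing R]
  [NormedAlgebra ℝ R]

theorem hasTemperateGrowth_prod (s : Finset ι) {f : ι → E → R}
    (hf : ∀ i ∈ s, (f i).HasTemperateGrowth) :
    (fun x => ∏ i ∈ s, f i x).HasTemperateGrowth := by
  rw [← Finset.prod_fn]
  exact Finset.prod_induction f Function.HasTemperateGrowth (fun _ _ ha hb => ha.mul hb)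
    (Function.HasTemperateGrowth.const 1) hf

variable [Fintype ι]

theorem hasTemperateGrowth_entry (i j : ι) :
    (fun g : ι → ι → ℝ => g i j).HasTemperateGrowth :=
  ((ContinuousLinearMap.proj (R := ℝ) (φ := fun _ : ι => ℝ) j).comp
    (ContinuousLinearMap.proj (R := ℝ) (φ := fun _ : ι => ι → ℝ) i)).hasTemperateGrowth

theorem hasTemperateGrowth_trace_ofReal :
    (fun g : ι → ι → ℝ => ((of g).trace : ℂ)).HasTemperateGrowth :=
  Complex.ofRealCLM.hasTemperateGrowth.comp
    (Function.HasTemperateGrowth.sum fun i _ => hasTemperateGrowth_entry i i)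

variable [DecidableEq ι]

theorem hasTemperateGrowth_det {M : E → Matrix ι ι R}
    (hM : ∀ i j, (fun x => M x i j).HasTemperateGrowth) :
    (fun x => (M x).det).HasTemperateGrowth := by
  simp only [det_apply']
  exact Function.HasTemperateGrowth.sum fun σ _ =>
    (Function.HasTemperateGrowth.const _).mul (hasTemperateGrowth_prod _ fun i _ => hM (σ i) i)

theorem hasTemperateGrowth_det_mul_transpose_self :
    (fun g : ι → ι → ℝ => (of g * (of g)ᵀ).det).HasTemperateGrowth := by
  refine hasTemperateGrowth_det fun i j => ?_
  simp only [mul_apply, transpose_apply, of_apply]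
  exact Function.HasTemperateGrowth.sum fun k _ =>
    (hasTemperateGrowth_entry i k).mul (hasTemperateGrowth_entry j k)

theorem hasTemperateGrowth_det_smul_one_sub (z : ℂ) :
    (fun g : ι → ι → ℝ =>
      (z • (1 : Matrix ι ι ℂ) - (of g).map ((↑) : ℝ → ℂ)).det).HasTemperateGrowth :=
  hasTemperateGrowth_det fun i j => (Function.HasTemperateGrowth.const _).sub
    (Complex.ofRealCLM.hasTemperateGrowth.comp (hasTemperateGrowth_entry i j))

end TemperateGrowth

section Weight

variable {N : ℕ} {α : ℝ}

theorem inducedRealGinibreWeight_nonneg (g : Fin N → Fin N → ℝ) :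
    0 ≤ inducedRealGinibreWeight N α g :=
  mul_nonneg (Real.rpow_nonneg (det_mul_transpose_self_nonneg _) α) (Real.exp_nonneg _)

theorem measurable_inducedRealGinibreWeight : Measurable (inducedRealGinibreWeight N α) := by
  unfold inducedRealGinibreWeight
  have hdet : Continuous fun g : Fin N → Fin N → ℝ => (of g * (of g)ᵀ).det := by fun_prop
  have htrace : Continuous fun g : Fin N → Fin N → ℝ => (of g * (of g)ᵀ).trace := by fun_prop
  exact (hdet.measurable.pow_const α).mul (htrace.measurable.neg.div_const 2).exp

theorem inducedRealGinibreWeight_vecMul {O : Matrix (Fin N) (Fin N) ℝ}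
    (hO : O ∈ orthogonalGroup (Fin N) ℝ) (g : Fin N → Fin N → ℝ) :
    inducedRealGinibreWeight N α (fun i => g i ᵥ* O) = inducedRealGinibreWeight N α g := by
  have hgram : of (fun i => g i ᵥ* O) * (of fun i => g i ᵥ* O)ᵀ = of g * (of g)ᵀ := by
    change of g * O * (of g * O)ᵀ = _
    rw [transpose_mul, Matrix.mul_assoc, ← Matrix.mul_assoc O,
      (mem_orthogonalGroup_iff _ _).1 hO, Matrix.one_mul]
  rw [inducedRealGinibreWeight, inducedRealGinibreWeight, hgram]

theorem inducedRealGinibreWeight_sqrt_smul {c : ℝ} (hc : 0 ≤ c) (g : Fin N → Fin N → ℝ) :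
    inducedRealGinibreWeight N α (√c • g) =
      c ^ (N * α) * Real.exp ((1 - c) / 2 * (of g * (of g)ᵀ).trace) *
        inducedRealGinibreWeight N α g := by
  have hgram : of (√c • g) * (of (√c • g))ᵀ = c • (of g * (of g)ᵀ) := by
    rw [← smul_of, transpose_smul, smul_mul_smul_comm, Real.mul_self_sqrt hc]
  have hexp : Real.exp (-(c * (of g * (of g)ᵀ).trace) / 2) =
      Real.exp ((1 - c) / 2 * (of g * (of g)ᵀ).trace) *
        Real.exp (-(of g * (of g)ᵀ).trace / 2) := by
    rw [← Real.exp_add]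
    ring_nf
  rw [inducedRealGinibreWeight, inducedRealGinibreWeight, hgram, det_smul, trace_smul, smul_eq_mul,
    Fintype.card_fin, Real.mul_rpow (pow_nonneg hc N) (det_mul_transpose_self_nonneg _),
    ← Real.rpow_natCast_mul hc, hexp]
  ring

theorem exp_mul_trace_mul_inducedRealGinibreWeight {t : ℝ} (ht : t < 1 / 2)
    (g : Fin N → Fin N → ℝ) :
    inducedRealGinibreWeight N α g * Real.exp (t * (of g * (of g)ᵀ).trace) =
      (1 - 2 * t) ^ (-(N * α)) * inducedRealGinibreWeight N α (√(1 - 2 * t) • g) := by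
  have hc : 0 < 1 - 2 * t := by linarith
  rw [inducedRealGinibreWeight_sqrt_smul hc.le, Real.rpow_neg hc.le, ← mul_assoc, ← mul_assoc,
    inv_mul_cancel₀ (Real.rpow_pos_of_pos hc _).ne', one_mul, mul_comm]
  ring_nf

theorem integral_inducedRealGinibreWeight_sqrt_smul {c : ℝ} (hc : 0 < c) :
    ∫ g, inducedRealGinibreWeight N α (√c • g) =
      c ^ (-(N ^ 2 / 2 : ℝ)) * ∫ g, inducedRealGinibreWeight N α g := by
  have hdim : Module.finrank ℝ (Fin N → Fin N → ℝ) = N ^ 2 := by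
    simp [Module.finrank_pi_fintype, sq]
  rw [Measure.integral_comp_smul, hdim, smul_eq_mul, abs_of_pos (by positivity),
    Real.sqrt_eq_rpow, ← Real.rpow_mul_natCast hc.le, ← Real.rpow_neg hc.le]
  push_cast
  ring_nf

theorem integral_inducedRealGinibreWeight_pos (hw : Integrable (inducedRealGinibreWeight N α)) :
    0 < ∫ g, inducedRealGinibreWeight N α g := by
  rw [integral_pos_iff_support_of_nonneg inducedRealGinibreWeight_nonneg hw]
  have hdet : Continuous fun g : Fin N → Fin N → ℝ => (of g).det := by fun_prop
  have hopen : IsOpen {g : Fin N → Fin N → ℝ | (of g).det ≠ 0} :=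
    isOpen_ne_fun hdet continuous_const
  have hone : (1 : Matrix (Fin N) (Fin N) ℝ).det ≠ 0 := by
    rw [det_one]
    exact one_ne_zero
  refine (hopen.measure_pos volume ⟨_, hone⟩).trans_le (measure_mono fun g hg => ?_)
  refine mul_ne_zero ?_ (Real.exp_pos _).ne'
  rw [det_mul_transpose_self]
  exact (Real.rpow_pos_of_pos (sq_pos_of_ne_zero hg) α).ne'

end Weight

section Ensemble

variable {N : ℕ} {α : ℝ}

/-- The induced real Ginibre ensemble of size `N` with parameter `α` as an unnormalized measure. A
matrix is encoded by its family of rows. -/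
noncomputable def inducedRealGinibre (N : ℕ) (α : ℝ) : Measure (Fin N → Fin N → ℝ) :=
  volume.withDensity fun g => ENNReal.ofReal (inducedRealGinibreWeight N α g)

theorem inducedRealGinibre_isRightOrthogonallyInvariant :
    IsRightOrthogonallyInvariant (inducedRealGinibre N α) :=
  volume_isRightOrthogonallyInvariant.withDensity
    measurable_inducedRealGinibreWeight.ennreal_ofReal
    fun _ hO g => congrArg ENNReal.ofReal (inducedRealGinibreWeight_vecMul hO g)

section SMul

variable {E : Type*} [NormedAddCommGroup E] [NormedSpace ℝ E]

theorem integral_inducedRealGinibre (f : (Fin N → Fin N → ℝ) → E) :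
    ∫ g, f g ∂inducedRealGinibre N α = ∫ g, inducedRealGinibreWeight N α g • f g := by
  rw [inducedRealGinibre, integral_withDensity_eq_integral_toReal_smul
    measurable_inducedRealGinibreWeight.ennreal_ofReal (ae_of_all _ fun _ => ENNReal.ofReal_lt_top)]
  simp only [ENNReal.toReal_ofReal (inducedRealGinibreWeight_nonneg _)]

theorem integrable_inducedRealGinibre_iff {f : (Fin N → Fin N → ℝ) → E} :
    Integrable f (inducedRealGinibre N α) ↔
      Integrable fun g => inducedRealGinibreWeight N α g • f g := by
  rw [inducedRealGinibre, integrable_withDensity_iff_integrable_smul'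
    measurable_inducedRealGinibreWeight.ennreal_ofReal (ae_of_all _ fun _ => ENNReal.ofReal_lt_top)]
  simp only [ENNReal.toReal_ofReal (inducedRealGinibreWeight_nonneg _)]

end SMul

theorem inducedRealGinibre_real_univ :
    (inducedRealGinibre N α).real Set.univ = ∫ g, inducedRealGinibreWeight N α g := by
  simpa using integral_inducedRealGinibre (N := N) (α := α) fun _ => (1 : ℝ)

theorem mgf_trace_inducedRealGinibre {t : ℝ} (ht : t < 1 / 2) :
    ProbabilityTheory.mgf (fun g => (of g * (of g)ᵀ).trace) (inducedRealGinibre N α) t =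
      (1 - 2 * t) ^ (-(N * (N + 2 * α) / 2)) * ∫ g, inducedRealGinibreWeight N α g := by
  have hc : 0 < 1 - 2 * t := by linarith
  simp only [ProbabilityTheory.mgf, integral_inducedRealGinibre, smul_eq_mul,
    exp_mul_trace_mul_inducedRealGinibreWeight ht, integral_const_mul]
  rw [integral_inducedRealGinibreWeight_sqrt_smul hc, ← mul_assoc, ← Real.rpow_add hc]
  ring_nf

section Integrable

variable (hw : Integrable (inducedRealGinibreWeight N α))
include hw

theorem zero_mem_interior_integrableExpSet_trace :
    0 ∈ interior (ProbabilityTheory.integrableExpSet (fun g => (of g * (of g)ᵀ).trace)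
      (inducedRealGinibre N α)) := by
  refine mem_interior.2 ⟨Set.Iio (1 / 2), fun t ht => ?_, isOpen_Iio, by norm_num⟩
  have hc : 0 < 1 - 2 * t := by linarith [Set.mem_Iio.1 ht]
  refine integrable_inducedRealGinibre_iff.2 ?_
  simp only [smul_eq_mul, exp_mul_trace_mul_inducedRealGinibreWeight ht]
  exact (hw.comp_smul (Real.sqrt_pos.2 hc).ne').const_mul _

theorem integral_trace_mul_transpose_self_inducedRealGinibre :
    ∫ g, (of g * (of g)ᵀ).trace ∂inducedRealGinibre N α =
      N * (N + 2 * α) * ∫ g, inducedRealGinibreWeight N α g := by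
  have hmgf : HasDerivAt (fun t : ℝ => (1 - 2 * t) ^ (-(N * (N + 2 * α) / 2)) *
      ∫ g, inducedRealGinibreWeight N α g)
      (N * (N + 2 * α) * ∫ g, inducedRealGinibreWeight N α g) 0 := by
    have hlin : HasDerivAt (fun t : ℝ => 1 - 2 * t) (-2) 0 := by
      simpa using ((hasDerivAt_id (0 : ℝ)).const_mul 2).const_sub 1
    convert! (hlin.rpow_const (p := -(N * (N + 2 * α) / 2)) (by norm_num)).mul_const
      (∫ g, inducedRealGinibreWeight N α g) using 1
    rw [mul_zero, sub_zero, Real.one_rpow]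
    ring
  rw [← ProbabilityTheory.deriv_mgf_zero (zero_mem_interior_integrableExpSet_trace hw)]
  refine (hmgf.congr_of_eventuallyEq ?_).deriv
  filter_upwards [Iio_mem_nhds (one_half_pos (α := ℝ))] with t ht
  exact mgf_trace_inducedRealGinibre ht

theorem isFiniteMeasure_inducedRealGinibre : IsFiniteMeasure (inducedRealGinibre N α) :=
  isFiniteMeasure_withDensity_ofReal hw.2

theorem integrable_inducedRealGinibre_of_hasTemperateGrowth {E : Type*} [NormedAddCommGroup E]
    [NormedSpace ℝ E] {f : (Fin N → Fin N → ℝ) → E} (hf : f.HasTemperateGrowth) :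
    Integrable f (inducedRealGinibre N α) := by
  have := isFiniteMeasure_inducedRealGinibre hw
  obtain ⟨k, C, hbound⟩ := hf.2 0
  have htrace : MemLp (fun g => (of g * (of g)ᵀ).trace) k (inducedRealGinibre N α) :=
    ProbabilityTheory.memLp_of_mem_interior_integrableExpSet
      (zero_mem_interior_integrableExpSet_trace hw) k
  have hmemLp : MemLp (fun g => 2 + (of g * (of g)ᵀ).trace) k (inducedRealGinibre N α) :=
    (memLp_const (2 : ℝ)).add htrace
  refine (hmemLp.integrable_norm_pow'.const_mul |C|).mono' hf.1.continuous.aestronglyMeasurable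
    (ae_of_all _ fun g => ?_)
  have hnorm : 1 + ‖g‖ ≤ ‖2 + (of g * (of g)ᵀ).trace‖ :=
    calc 1 + ‖g‖ ≤ 2 + (of g * (of g)ᵀ).trace := by
          linarith [norm_le_one_add_trace_mul_transpose_self g]
      _ ≤ ‖2 + (of g * (of g)ᵀ).trace‖ := Real.le_norm_self _
  calc ‖f g‖ ≤ C * (1 + ‖g‖) ^ k := by simpa using hbound g
    _ ≤ |C| * ‖2 + (of g * (of g)ᵀ).trace‖ ^ k := by
        gcongr
        exact le_abs_self C

theorem integral_sum_diag_sq_inducedRealGinibre [NeZero N] :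
    ∫ g, ∑ k, g k k ^ 2 ∂inducedRealGinibre N α =
      (N + 2 * α) * ∫ g, inducedRealGinibreWeight N α g := by
  have h := inducedRealGinibre_isRightOrthogonallyInvariant.integral_trace_mul_transpose_self
    fun i j => integrable_inducedRealGinibre_of_hasTemperateGrowth hw
      ((hasTemperateGrowth_entry i j).pow 2)
  rw [integral_trace_mul_transpose_self_inducedRealGinibre hw, Fintype.card_fin, mul_assoc] at h
  exact (mul_left_cancel₀ (NeZero.ne (N : ℝ)) h).symm

end Integrable

theorem integrable_inducedRealGinibreWeight_zero : Integrable (inducedRealGinibreWeight N 0) := by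
  have hgauss : Integrable fun x : ℝ => Real.exp (-(1 / 2) * x ^ 2) :=
    integrable_exp_neg_mul_sq one_half_pos
  have hprod : Integrable fun g : Fin N → Fin N → ℝ =>
      ∏ i, ∏ j, Real.exp (-(1 / 2) * g i j ^ 2) :=
    Integrable.fintype_prod fun _ => Integrable.fintype_prod fun _ => hgauss
  refine hprod.congr (ae_of_all _ fun g => ?_)
  simp only [inducedRealGinibreWeight, Real.rpow_zero, one_mul, trace_mul_transpose_self_eq_sum,
    ← Real.exp_sum, ← Finset.mul_sum]
  ring_nf

theorem rpow_le_one_add_pow_ceil {x : ℝ} (hx : 0 ≤ x) (hα : 0 ≤ α) :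
    x ^ α ≤ (1 + x) ^ ⌈α⌉₊ :=
  calc x ^ α ≤ (1 + x) ^ α := Real.rpow_le_rpow hx (by linarith) hα
    _ ≤ (1 + x) ^ (⌈α⌉₊ : ℝ) :=
        Real.rpow_le_rpow_of_exponent_le (by linarith) (Nat.le_ceil α)
    _ = (1 + x) ^ ⌈α⌉₊ := Real.rpow_natCast _ _

theorem integrable_inducedRealGinibreWeight (hα : 0 ≤ α) :
    Integrable (inducedRealGinibreWeight N α) := by
  have hpow : Integrable (fun g => (1 + (of g * (of g)ᵀ).det) ^ ⌈α⌉₊) (inducedRealGinibre N 0) :=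
    integrable_inducedRealGinibre_of_hasTemperateGrowth integrable_inducedRealGinibreWeight_zero
      (((Function.HasTemperateGrowth.const 1).add hasTemperateGrowth_det_mul_transpose_self).pow _)
  refine (integrable_inducedRealGinibre_iff.1 hpow).mono'
    measurable_inducedRealGinibreWeight.aestronglyMeasurable (ae_of_all _ fun g => ?_)
  rw [Real.norm_of_nonneg (inducedRealGinibreWeight_nonneg g), smul_eq_mul,
    inducedRealGinibreWeight, inducedRealGinibreWeight, Real.rpow_zero, one_mul, mul_comm]
  gcongr
  exact rpow_le_one_add_pow_ceil (det_mul_transpose_self_nonneg _) hα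

end Ensemble

theorem inducedRealGinibre_odd_skew_orthogonal_poly_general (N : ℕ) [NeZero N]
    (α : ℝ) (hw : Integrable (inducedRealGinibreWeight N α)) (z : ℂ) :
    (∫ g : Fin N → Fin N → ℝ,
          (inducedRealGinibreWeight N α g : ℂ) *
            ((z • (1 : Matrix (Fin N) (Fin N) ℂ)
              - (Matrix.of g).map ((↑) : ℝ → ℂ)).det * ((Matrix.of g).trace : ℂ))) /
        ((∫ g : Fin N → Fin N → ℝ, inducedRealGinibreWeight N α g : ℝ) : ℂ)
      = -((N : ℂ) + 2 * (α : ℂ)) * z ^ (N - 1) ∧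
    z * ((∫ g : Fin N → Fin N → ℝ,
          (inducedRealGinibreWeight N α g : ℂ) *
            (z • (1 : Matrix (Fin N) (Fin N) ℂ)
              - (Matrix.of g).map ((↑) : ℝ → ℂ)).det) /
        ((∫ g : Fin N → Fin N → ℝ, inducedRealGinibreWeight N α g : ℝ) : ℂ))
      + (∫ g : Fin N → Fin N → ℝ,
          (inducedRealGinibreWeight N α g : ℂ) *
            ((z • (1 : Matrix (Fin N) (Fin N) ℂ)
              - (Matrix.of g).map ((↑) : ℝ → ℂ)).det * ((Matrix.of g).trace : ℂ))) /
        ((∫ g : Fin N → Fin N → ℝ, inducedRealGinibreWeight N α g : ℝ) : ℂ)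
      = z ^ (N + 1) - ((N : ℂ) + 2 * (α : ℂ)) * z ^ (N - 1) := by
  have hZ : ((∫ g, inducedRealGinibreWeight N α g : ℝ) : ℂ) ≠ 0 :=
    Complex.ofReal_ne_zero.2 (integral_inducedRealGinibreWeight_pos hw).ne'
  have hdet := inducedRealGinibre_isRightOrthogonallyInvariant.integral_det_smul_one_sub z
    (integrable_inducedRealGinibre_of_hasTemperateGrowth hw
      (hasTemperateGrowth_det_smul_one_sub z))
  have htrace :=
    inducedRealGinibre_isRightOrthogonallyInvariant.integral_det_smul_one_sub_mul_trace z
      (integrable_inducedRealGinibre_of_hasTemperateGrowth hw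
        ((hasTemperateGrowth_det_smul_one_sub z).mul hasTemperateGrowth_trace_ofReal))
  simp only [integral_inducedRealGinibre, Complex.real_smul, Fintype.card_fin,
    inducedRealGinibre_real_univ] at hdet
  rw [integral_sum_diag_sq_inducedRealGinibre hw] at htrace
  simp only [integral_inducedRealGinibre, Complex.real_smul, Fintype.card_fin] at htrace
  rw [hdet, htrace]
  push_cast
  constructor
  · field_simp
  · field_simp
    ring

/-- For the induced real Ginibre ensemble of size `2n` with parameter `α`:
`⟨det (z I - G) Tr G⟩ = -2(n+α) z^(2n-1)`, and consequently the odd-degree skew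
orthogonal polynomial `Q_{2n+1}(z) = z ⟨det (z I - G)⟩ + ⟨det (z I - G) Tr G⟩`
equals `z^(2n+1) - 2(n+α) z^(2n-1)`. -/
theorem inducedRealGinibre_odd_skew_orthogonal_poly (n : ℕ) (hn : 0 < n)
    (α : ℝ) (hα : 0 ≤ α) (z : ℂ) :
    (∫ g : Fin (2 * n) → Fin (2 * n) → ℝ,
          (inducedRealGinibreWeight (2 * n) α g : ℂ) *
            ((z • (1 : Matrix (Fin (2 * n)) (Fin (2 * n)) ℂ)
              - (Matrix.of g).map ((↑) : ℝ → ℂ)).det * ((Matrix.of g).trace : ℂ))) /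
        ((∫ g : Fin (2 * n) → Fin (2 * n) → ℝ, inducedRealGinibreWeight (2 * n) α g : ℝ) : ℂ)
      = -(2 * ((n : ℂ) + (α : ℂ))) * z ^ (2 * n - 1) ∧
    z * ((∫ g : Fin (2 * n) → Fin (2 * n) → ℝ,
          (inducedRealGinibreWeight (2 * n) α g : ℂ) *
            (z • (1 : Matrix (Fin (2 * n)) (Fin (2 * n)) ℂ)
              - (Matrix.of g).map ((↑) : ℝ → ℂ)).det) /
        ((∫ g : Fin (2 * n) → Fin (2 * n) → ℝ, inducedRealGinibreWeight (2 * n) α g : ℝ) : ℂ))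
      + (∫ g : Fin (2 * n) → Fin (2 * n) → ℝ,
          (inducedRealGinibreWeight (2 * n) α g : ℂ) *
            ((z • (1 : Matrix (Fin (2 * n)) (Fin (2 * n)) ℂ)
              - (Matrix.of g).map ((↑) : ℝ → ℂ)).det * ((Matrix.of g).trace : ℂ))) /
        ((∫ g : Fin (2 * n) → Fin (2 * n) → ℝ, inducedRealGinibreWeight (2 * n) α g : ℝ) : ℂ)
      = z ^ (2 * n + 1) - 2 * ((n : ℂ) + (α : ℂ)) * z ^ (2 * n - 1) := by
  have : NeZero (2 * n) := ⟨by positivity⟩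
  have h := inducedRealGinibre_odd_skew_orthogonal_poly_general (2 * n) α
    (integrable_inducedRealGinibreWeight hα) z
  simpa only [Nat.cast_mul, Nat.cast_ofNat, ← mul_add] using h
end

section
/- Let n be a positive integer and let α ≥ 0 be a real number. For G drawn from the induced quaternion real Ginibre ensemble of size 2n with parameter α, and for every complex number z, ⟨det(z·I − G)⟩ = 2^n · Γ(n+1+α) · Σ_{l=0}^{n} z^{2l}/(2^l · Γ(l+1+α)); that is, the even-degree skew orthogonal polynomial is Q_{2n}(z) = 2^n Γ(n+1+α) Σ_{l=0}^n z^{2l}/(2^l Γ(l+1+α)). -/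
open MeasureTheory Matrix

/-- The `2n × 2n` complex matrix (indexed by `Fin n × Fin 2`) whose `(j,k)`-th `2 × 2`
block is `[[z_{jk}, w_{jk}], [-conj w_{jk}, conj z_{jk}]]`. -/
noncomputable def quatMatrix (n : ℕ) (x : Fin n → Fin n → ℂ × ℂ) :
    Matrix (Fin n × Fin 2) (Fin n × Fin 2) ℂ :=
  Matrix.of fun a b =>
    if a.2 = 0 then
      (if b.2 = 0 then (x a.1 b.1).1 else (x a.1 b.1).2)
    else
      (if b.2 = 0 then -(starRingEnd ℂ) ((x a.1 b.1).2)
        else (starRingEnd ℂ) ((x a.1 b.1).1))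

/-- The (unnormalized) density of the induced quaternion real Ginibre ensemble of size
`2n` with parameter `α`: `det(G G†)^α exp(-Tr(G G†)/2)` (both `det(G G†)` and
`Tr(G G†)` are real, so we take real parts). -/
noncomputable def inducedQuatGinibreWeight (n : ℕ) (α : ℝ) (x : Fin n → Fin n → ℂ × ℂ) : ℝ :=
  ((quatMatrix n x * (quatMatrix n x)ᴴ).det.re) ^ α *
    Real.exp (-(quatMatrix n x * (quatMatrix n x)ᴴ).trace.re / 2)

/-!
Left multiplication by `1 + tB`, with `B` a quaternion matrix, multiplies Lebesgue measure by
`|det (1 + tB)| ^ (2n)`; differentiating at `t = 0` gives a Ward identity for the averages. For `B`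
diagonal it shows that a principal minor of `G` has mean zero unless its rows form a union of
`2 × 2` blocks, so that only such minors contribute to `⟨det (z - G)⟩`.

Let `E_k` be the mean of the principal minor on `k` blocks. Applying the Ward identity to elementary
`B` and Cramer's rule to the row `(r, 0)` of a further block `r` expresses `2 (n - k + α) E_k` as a
sum over the `n - k` blocks outside the given `k`, whose terms all have the same mean because the
ensemble is invariant under permutations of the block columns. By the same symmetry each of the
`k + 1` nonzero contributions to the Laplace expansion of the minor on `k + 1` blocks has this mean,
so `(n - k) E_{k+1} = 2 (k + 1) (n - k + α) E_k`, which the Gamma function solves.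
-/

namespace QuatGinibre

open Complex Filter Topology
open scoped ComplexConjugate

/-- The independent entries `(z_{jk}, w_{jk})` of a quaternion matrix. -/
abbrev QuatEntries (n : ℕ) := Fin n → Fin n → ℂ × ℂ

variable {n : ℕ}

lemma quatMatrix_add (x y : QuatEntries n) :
    quatMatrix n (x + y) = quatMatrix n x + quatMatrix n y := by
  ext ⟨j, a⟩ ⟨k, b⟩
  fin_cases a <;> fin_cases b <;> simp [quatMatrix, add_comm]

lemma quatMatrix_smul (t : ℝ) (x : QuatEntries n) :
    quatMatrix n (t • x) = t • quatMatrix n x := by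
  ext ⟨j, a⟩ ⟨k, b⟩
  fin_cases a <;> fin_cases b <;> simp [quatMatrix]

/-- The parametrisation of quaternion matrices by their entries, as a real linear map. -/
noncomputable def quatMatrixₗ (n : ℕ) :
    QuatEntries n →ₗ[ℝ] Matrix (Fin n × Fin 2) (Fin n × Fin 2) ℂ where
  toFun := quatMatrix n
  map_add' := quatMatrix_add
  map_smul' := quatMatrix_smul

@[simp] lemma quatMatrix_zero_zero (x : QuatEntries n) (j k : Fin n) :
    quatMatrix n x (j, 0) (k, 0) = (x j k).1 := by simp [quatMatrix]

@[simp] lemma quatMatrix_zero_one (x : QuatEntries n) (j k : Fin n) :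
    quatMatrix n x (j, 0) (k, 1) = (x j k).2 := by simp [quatMatrix]

@[simp] lemma quatMatrix_one_zero (x : QuatEntries n) (j k : Fin n) :
    quatMatrix n x (j, 1) (k, 0) = -conj (x j k).2 := by simp [quatMatrix]

@[simp] lemma quatMatrix_one_one (x : QuatEntries n) (j k : Fin n) :
    quatMatrix n x (j, 1) (k, 1) = conj (x j k).1 := by simp [quatMatrix]

/-- Left multiplication by a quaternion matrix, in terms of entries. -/
noncomputable def leftMul (b : QuatEntries n) : QuatEntries n →ₗ[ℝ] QuatEntries n where
  toFun x j k :=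
    ((quatMatrix n b * quatMatrix n x) (j, 0) (k, 0),
      (quatMatrix n b * quatMatrix n x) (j, 0) (k, 1))
  map_add' x y := by
    simp only [quatMatrix_add, mul_add]
    rfl
  map_smul' t x := by
    simp only [quatMatrix_smul, Matrix.mul_smul]
    rfl

lemma quatMatrix_leftMul (b x : QuatEntries n) :
    quatMatrix n (leftMul b x) = quatMatrix n b * quatMatrix n x := by
  ext ⟨j, p⟩ ⟨k, q⟩
  fin_cases p <;> fin_cases q <;>
    simp only [leftMul, mul_apply, Fintype.sum_prod_type, Fin.sum_univ_two, Fin.zero_eta,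
      Fin.mk_one, quatMatrix_zero_zero, quatMatrix_zero_one, quatMatrix_one_zero,
      quatMatrix_one_one, Finset.sum_add_distrib, Finset.sum_neg_distrib, LinearMap.coe_mk,
      AddHom.coe_mk, map_add, map_sum, map_mul, map_neg, conj_conj, mul_neg, neg_mul, neg_add_rev]
  all_goals ring

/-- `Tr(G G†) / 2`, the exponent of the density (the trace is real). -/
noncomputable def energy (x : QuatEntries n) : ℝ :=
  (quatMatrix n x * (quatMatrix n x)ᴴ).trace.re / 2

lemma energy_eq_sum (x : QuatEntries n) :
    energy x = ∑ j, ∑ k, (‖(x j k).1‖ ^ 2 + ‖(x j k).2‖ ^ 2) := by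
  simp only [energy, trace, diag, mul_apply, conjTranspose_apply, re_sum, Fintype.sum_prod_type,
    Fin.sum_univ_two, ← Finset.sum_add_distrib, Finset.sum_div]
  refine Finset.sum_congr rfl fun j _ => Finset.sum_congr rfl fun k _ => ?_
  simp only [quatMatrix_zero_zero, quatMatrix_zero_one, quatMatrix_one_zero, quatMatrix_one_one,
    star_def, map_neg, conj_conj, add_re, mul_re, neg_re, neg_im, conj_re, conj_im,
    ← normSq_eq_norm_sq, normSq_apply]
  ring

lemma energy_nonneg (x : QuatEntries n) : 0 ≤ energy x := by
  rw [energy_eq_sum]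
  positivity

lemma sq_norm_le_energy (x : QuatEntries n) : ‖x‖ ^ 2 ≤ energy x := by
  have entry_le (j k : Fin n) : ‖x j k‖ ^ 2 ≤ energy x := by
    calc ‖x j k‖ ^ 2 ≤ ‖(x j k).1‖ ^ 2 + ‖(x j k).2‖ ^ 2 := by
          rcases max_choice ‖(x j k).1‖ ‖(x j k).2‖ with h | h <;>
            rw [Prod.norm_def, h] <;> nlinarith [sq_nonneg ‖(x j k).1‖, sq_nonneg ‖(x j k).2‖]
      _ ≤ ∑ k, (‖(x j k).1‖ ^ 2 + ‖(x j k).2‖ ^ 2) :=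
          Finset.single_le_sum (f := fun k => ‖(x j k).1‖ ^ 2 + ‖(x j k).2‖ ^ 2)
            (fun _ _ => by positivity) (Finset.mem_univ k)
      _ ≤ energy x := by
          rw [energy_eq_sum]
          exact Finset.single_le_sum
            (f := fun j => ∑ k, (‖(x j k).1‖ ^ 2 + ‖(x j k).2‖ ^ 2))
            (fun _ _ => by positivity) (Finset.mem_univ j)
  refine (Real.le_sqrt (norm_nonneg _) (energy_nonneg x)).1 ?_
  refine (pi_norm_le_iff_of_nonneg (Real.sqrt_nonneg _)).2 fun j =>
    (pi_norm_le_iff_of_nonneg (Real.sqrt_nonneg _)).2 fun k => ?_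
  exact Real.le_sqrt_of_sq_le (entry_le j k)

lemma energy_le_sq_norm (x : QuatEntries n) : energy x ≤ 2 * n ^ 2 * ‖x‖ ^ 2 := by
  have entry_le (j k : Fin n) : ‖(x j k).1‖ ^ 2 + ‖(x j k).2‖ ^ 2 ≤ 2 * ‖x‖ ^ 2 := by
    have h : ‖x j k‖ ≤ ‖x‖ := (norm_le_pi_norm (x j) k).trans (norm_le_pi_norm x j)
    have h₁ : ‖(x j k).1‖ ^ 2 ≤ ‖x‖ ^ 2 := by gcongr; exact (norm_fst_le _).trans h
    have h₂ : ‖(x j k).2‖ ^ 2 ≤ ‖x‖ ^ 2 := by gcongr; exact (norm_snd_le _).trans h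
    linarith
  calc energy x ≤ ∑ _j : Fin n, ∑ _k : Fin n, 2 * ‖x‖ ^ 2 := by
        rw [energy_eq_sum]
        gcongr
        exact entry_le _ _
    _ = 2 * n ^ 2 * ‖x‖ ^ 2 := by
        simp only [Finset.sum_const, Finset.card_univ, Fintype.card_fin, nsmul_eq_mul]
        ring

lemma exists_energy_apply_le (L : QuatEntries n →ₗ[ℝ] QuatEntries n) :
    ∃ C, 0 ≤ C ∧ ∀ x, energy (L x) ≤ C * energy x := by
  refine ⟨2 * n ^ 2 * ‖L.toContinuousLinearMap‖ ^ 2, by positivity, fun x => ?_⟩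
  have hL : ‖L x‖ ≤ ‖L.toContinuousLinearMap‖ * ‖x‖ := L.toContinuousLinearMap.le_opNorm x
  calc energy (L x) ≤ 2 * n ^ 2 * ‖L x‖ ^ 2 := energy_le_sq_norm _
    _ ≤ 2 * n ^ 2 * (‖L.toContinuousLinearMap‖ * ‖x‖) ^ 2 := by gcongr
    _ = 2 * n ^ 2 * ‖L.toContinuousLinearMap‖ ^ 2 * ‖x‖ ^ 2 := by ring
    _ ≤ _ := by gcongr; exact sq_norm_le_energy x

/-- The polarisation `Re Tr(G(y) G(x)†)` of twice the energy. -/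
noncomputable def energyPairing (y x : QuatEntries n) : ℝ :=
  (quatMatrix n y * (quatMatrix n x)ᴴ).trace.re

lemma energy_add_smul (x y : QuatEntries n) (t : ℝ) :
    energy (x + t • y) = energy x + (t * energyPairing y x + t ^ 2 * energy y) := by
  have symm : (quatMatrix n x * (quatMatrix n y)ᴴ).trace.re
      = (quatMatrix n y * (quatMatrix n x)ᴴ).trace.re := by
    rw [← conj_re, ← Complex.star_def, ← trace_conjTranspose, conjTranspose_mul,
      conjTranspose_conjTranspose]
  simp only [energy, energyPairing, quatMatrix_add, quatMatrix_smul, conjTranspose_add,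
    conjTranspose_smul, star_trivial, add_mul, mul_add, Matrix.smul_mul, Matrix.mul_smul,
    trace_add, trace_smul, add_re, smul_re, smul_eq_mul, symm]
  ring

lemma abs_energyPairing_le (x y : QuatEntries n) : |energyPairing y x| ≤ energy x + energy y := by
  have hadd := energy_nonneg (x + (1 : ℝ) • y)
  have hsub := energy_nonneg (x + (-1 : ℝ) • y)
  rw [energy_add_smul] at hadd hsub
  rw [abs_le]
  constructor <;> linarith

lemma inducedQuatGinibreWeight_eq (α : ℝ) (x : QuatEntries n) :
    inducedQuatGinibreWeight n α x
      = normSq (quatMatrix n x).det ^ α * Real.exp (-energy x) := by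
  have hdet : (quatMatrix n x * (quatMatrix n x)ᴴ).det.re = normSq (quatMatrix n x).det := by
    rw [det_mul, det_conjTranspose, Complex.star_def, mul_conj, ofReal_re]
  rw [inducedQuatGinibreWeight, hdet, energy, neg_div]

/-- A quaternion matrix is determined by the odd half of its columns, and left multiplication acts
on each of these as a complex linear map. -/
noncomputable def columnEquiv (n : ℕ) : QuatEntries n ≃ₗ[ℝ] (Fin n → Fin n × Fin 2 → ℂ) where
  toFun x k a := quatMatrix n x a (k, 0)
  invFun y j k := (y k (j, 0), -conj (y k (j, 1)))
  map_add' x y := by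
    simp only [quatMatrix_add]
    rfl
  map_smul' t x := by
    simp only [quatMatrix_smul]
    rfl
  left_inv x := by
    ext j k <;> simp
  right_inv y := by
    ext k ⟨j, a⟩
    fin_cases a <;> simp

lemma det_of_quatMatrix_apply_eq_mul {L : QuatEntries n →ₗ[ℝ] QuatEntries n}
    {A : Matrix (Fin n × Fin 2) (Fin n × Fin 2) ℂ}
    (hL : ∀ x, quatMatrix n (L x) = A * quatMatrix n x) :
    LinearMap.det L = normSq A.det ^ n := by
  have columnwise : (columnEquiv n : QuatEntries n →ₗ[ℝ] _) ∘ₗ L ∘ₗ (columnEquiv n).symm.toLinearMap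
      = LinearMap.pi fun k => (toLin' A).restrictScalars ℝ ∘ₗ LinearMap.proj k := by
    refine LinearMap.ext fun y => funext fun k => funext fun a => ?_
    have hcol (b : Fin n × Fin 2) : quatMatrix n ((columnEquiv n).symm y) b (k, 0) = y k b :=
      congrFun (congrFun ((columnEquiv n).apply_symm_apply y) k) b
    change quatMatrix n (L ((columnEquiv n).symm y)) a (k, 0) = (A *ᵥ y k) a
    simp only [hL, mul_apply, hcol, mulVec, dotProduct]
  rw [← LinearMap.det_conj L (columnEquiv n), columnwise, LinearMap.det_pi]
  simp [LinearMap.det_restrictScalars, Algebra.norm_complex_apply]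

section Volume

instance : (volume : Measure (ℂ × ℂ)).IsAddHaarMeasure :=
  Measure.prod.instIsAddHaarMeasure _ _

instance : (volume : Measure (Fin n → ℂ × ℂ)).IsAddHaarMeasure :=
  Measure.pi.isAddHaarMeasure _

instance : (volume : Measure (QuatEntries n)).IsAddHaarMeasure :=
  Measure.pi.isAddHaarMeasure _

lemma abs_det_smul_integral_comp {E F : Type*} [NormedAddCommGroup E] [NormedSpace ℝ E]
    [MeasurableSpace E] [BorelSpace E] [FiniteDimensional ℝ E] (μ : Measure E)
    [μ.IsAddHaarMeasure] [NormedAddCommGroup F] [NormedSpace ℝ F] {L : E →ₗ[ℝ] E}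
    (hL : LinearMap.det L ≠ 0) (f : E → F) :
    |LinearMap.det L| • ∫ x, f (L x) ∂μ = ∫ x, f x ∂μ := by
  let e : E ≃ₜ E := (L.equivOfDetNeZero hL).toContinuousLinearEquiv.toHomeomorph
  have hmap : Measure.map e μ = ENNReal.ofReal |(LinearMap.det L)⁻¹| • μ :=
    Measure.map_linearMap_addHaar_eq_smul_addHaar μ hL
  have h : ∫ x, f (L x) ∂μ = ∫ y, f y ∂(Measure.map e μ) :=
    (e.measurableEmbedding.integral_map f).symm
  rw [h, hmap, integral_smul_measure, ENNReal.toReal_ofReal (abs_nonneg _), smul_smul, abs_inv,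
    mul_inv_cancel₀ (abs_ne_zero.2 hL), one_smul]

end Volume

section TemperateGrowth

open Function

@[fun_prop]
lemma hasTemperateGrowth_prod {E ι : Type*} [NormedAddCommGroup E] [NormedSpace ℝ E]
    {s : Finset ι} {f : ι → E → ℂ} (hf : ∀ i ∈ s, (f i).HasTemperateGrowth) :
    (fun x => ∏ i ∈ s, f i x).HasTemperateGrowth := by
  classical
  induction s using Finset.induction_on with
  | empty => simp
  | insert a s ha ih =>
    simp only [Finset.prod_insert ha]
    exact (hf a (by simp)).fun_mul (ih fun i hi => hf i (by simp [hi]))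

lemma hasTemperateGrowth_det {E m : Type*} [NormedAddCommGroup E] [NormedSpace ℝ E]
    [Fintype m] [DecidableEq m] {M : E → Matrix m m ℂ}
    (hM : ∀ i j, (fun x => M x i j).HasTemperateGrowth) :
    (fun x => (M x).det).HasTemperateGrowth := by
  simp only [det_apply']
  fun_prop (disch := intros)

lemma hasTemperateGrowth_updateRow {E m : Type*} [NormedAddCommGroup E] [NormedSpace ℝ E]
    [DecidableEq m] {M : E → Matrix m m ℂ} {u : E → m → ℂ} (k : m)
    (hM : ∀ i j, (fun x => M x i j).HasTemperateGrowth)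
    (hu : ∀ j, (fun x => u x j).HasTemperateGrowth) (i j : m) :
    (fun x => (M x).updateRow k (u x) i j).HasTemperateGrowth := by
  by_cases h : i = k
  · subst h; simpa using hu j
  · simpa [updateRow_ne h] using hM i j

@[fun_prop]
lemma hasTemperateGrowth_conj {E : Type*} [NormedAddCommGroup E] [NormedSpace ℝ E] {f : E → ℂ}
    (hf : f.HasTemperateGrowth) : (fun x => conj (f x)).HasTemperateGrowth :=
  (conjCLE : ℂ →L[ℝ] ℂ).hasTemperateGrowth.comp hf

@[fun_prop]
lemma hasTemperateGrowth_entry (a b : Fin n × Fin 2) :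
    (fun x : QuatEntries n => quatMatrix n x a b).HasTemperateGrowth :=
  (LinearMap.toContinuousLinearMap
    (entryLinearMap ℝ ℂ a b ∘ₗ quatMatrixₗ n)).hasTemperateGrowth

end TemperateGrowth

section Integrability

lemma exists_one_add_pow_mul_exp_le (m : ℕ) {s : ℝ} (hs : 0 < s) :
    ∃ C : ℝ, ∀ t : ℝ, 0 ≤ t → (1 + t) ^ m * Real.exp (-s * t ^ 2) ≤ C := by
  refine ⟨m.factorial * Real.exp (1 + 1 / (4 * s)), fun t ht => ?_⟩
  have pow_le_exp : (1 + t) ^ m ≤ m.factorial * Real.exp (1 + t) := by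
    have := Real.pow_div_factorial_le_exp (1 + t) (by linarith) m
    rwa [div_le_iff₀' (by positivity)] at this
  have square : 1 + t - s * t ^ 2 = 1 + 1 / (4 * s) - s * (t - 1 / (2 * s)) ^ 2 := by
    field_simp
    ring
  calc (1 + t) ^ m * Real.exp (-s * t ^ 2)
      ≤ m.factorial * Real.exp (1 + t) * Real.exp (-s * t ^ 2) := by gcongr
    _ = m.factorial * Real.exp (1 + t - s * t ^ 2) := by
        rw [mul_assoc, ← Real.exp_add]; ring_nf
    _ ≤ m.factorial * Real.exp (1 + 1 / (4 * s)) := by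
        rw [square]
        gcongr
        linarith [mul_nonneg hs.le (sq_nonneg (t - 1 / (2 * s)))]

lemma integrable_exp_neg_sq_norm_smul {E F : Type*} [NormedAddCommGroup E] [NormedSpace ℝ E]
    [MeasurableSpace E] [BorelSpace E] [FiniteDimensional ℝ E] (μ : Measure E)
    [μ.IsAddHaarMeasure] [NormedAddCommGroup F] [NormedSpace ℝ F] {f : E → F}
    (hf : f.HasTemperateGrowth) {s : ℝ} (hs : 0 < s) :
    Integrable (fun x => Real.exp (-s * ‖x‖ ^ 2) • f x) μ := by
  obtain ⟨k, C, hC⟩ := hf.2 0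
  simp only [norm_iteratedFDeriv_zero] at hC
  set d := Module.finrank ℝ E + 1
  obtain ⟨C', hC'⟩ := exists_one_add_pow_mul_exp_le (k + d) hs
  have hintegrable : Integrable (fun x : E => (1 + ‖x‖) ^ (-(d : ℝ))) μ :=
    integrable_one_add_norm (by simp [d])
  have hcont : Continuous fun x => Real.exp (-s * ‖x‖ ^ 2) • f x := by
    have := hf.1.continuous
    fun_prop
  refine (hintegrable.const_mul (C * C')).mono' hcont.aestronglyMeasurable
    (Eventually.of_forall fun x => ?_)
  have hC₀ : 0 ≤ C := by simpa using (norm_nonneg _).trans (hC 0)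
  have hp : 0 < 1 + ‖x‖ := by positivity
  rw [norm_smul, Real.norm_eq_abs, Real.abs_exp, Real.rpow_neg hp.le, Real.rpow_natCast,
    ← div_eq_mul_inv, le_div_iff₀ (by positivity)]
  calc Real.exp (-s * ‖x‖ ^ 2) * ‖f x‖ * (1 + ‖x‖) ^ d
      ≤ Real.exp (-s * ‖x‖ ^ 2) * (C * (1 + ‖x‖) ^ k) * (1 + ‖x‖) ^ d := by
        gcongr
        exact hC x
    _ = C * ((1 + ‖x‖) ^ (k + d) * Real.exp (-s * ‖x‖ ^ 2)) := by ring
    _ ≤ C * C' := by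
        gcongr
        exact hC' _ (norm_nonneg _)

lemma continuous_quatMatrix : Continuous (quatMatrix n) :=
  (quatMatrixₗ n).continuous_of_finiteDimensional

@[fun_prop]
lemma continuous_energy : Continuous (energy (n := n)) := by
  have := continuous_quatMatrix (n := n)
  unfold energy
  fun_prop

lemma continuous_energyPairing :
    Continuous fun p : QuatEntries n × QuatEntries n => energyPairing p.1 p.2 := by
  have := continuous_quatMatrix (n := n)
  unfold energyPairing
  fun_prop

lemma integrable_rpow_normSq_det_mul_exp_mul {α : ℝ} (hα : 0 ≤ α) {f : QuatEntries n → ℂ}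
    (hf : f.HasTemperateGrowth) {s : ℝ} (hs : 0 < s) :
    Integrable fun x =>
      ((normSq (quatMatrix n x).det ^ α * Real.exp (-s * energy x) : ℝ) : ℂ) * f x := by
  have hD : (fun x => (quatMatrix n x).det).HasTemperateGrowth :=
    hasTemperateGrowth_det hasTemperateGrowth_entry
  have hg : (fun x => (1 + (quatMatrix n x).det * conj (quatMatrix n x).det) ^ ⌈α⌉₊
      * f x).HasTemperateGrowth := by fun_prop
  have hcont : Continuous fun x =>
      ((normSq (quatMatrix n x).det ^ α * Real.exp (-s * energy x) : ℝ) : ℂ) * f x := by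
    have hf' := hf.1.continuous
    have hD' := (continuous_normSq.comp hD.1.continuous).rpow_const fun _ => Or.inr hα
    simp only [Function.comp_def] at hD'
    fun_prop
  refine (integrable_exp_neg_sq_norm_smul volume hg hs).mono hcont.aestronglyMeasurable
    (Eventually.of_forall fun x => ?_)
  have hN : 0 ≤ normSq (quatMatrix n x).det := normSq_nonneg _
  have one_add : 1 + (quatMatrix n x).det * conj (quatMatrix n x).det
      = ((1 + normSq (quatMatrix n x).det : ℝ) : ℂ) := by simp [mul_conj]
  have rpow_le : normSq (quatMatrix n x).det ^ α ≤ (1 + normSq (quatMatrix n x).det) ^ ⌈α⌉₊ := by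
    calc normSq (quatMatrix n x).det ^ α ≤ (1 + normSq (quatMatrix n x).det) ^ α := by
          gcongr
          linarith
      _ ≤ (1 + normSq (quatMatrix n x).det) ^ (⌈α⌉₊ : ℝ) :=
          Real.rpow_le_rpow_of_exponent_le (by linarith) (Nat.le_ceil α)
      _ = _ := Real.rpow_natCast _ _
  have exp_le : Real.exp (-s * energy x) ≤ Real.exp (-s * ‖x‖ ^ 2) :=
    Real.exp_le_exp.2 (by nlinarith [sq_norm_le_energy x])
  calc _ = normSq (quatMatrix n x).det ^ α * Real.exp (-s * energy x) * ‖f x‖ := by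
        rw [norm_mul, norm_real, Real.norm_of_nonneg (by positivity)]
    _ ≤ (1 + normSq (quatMatrix n x).det) ^ ⌈α⌉₊ * Real.exp (-s * ‖x‖ ^ 2) * ‖f x‖ := by gcongr
    _ = _ := by
        rw [one_add, norm_smul, norm_mul, norm_pow, norm_real, Real.norm_eq_abs, Real.abs_exp,
          Real.norm_of_nonneg (by positivity : (0 : ℝ) ≤ 1 + normSq (quatMatrix n x).det)]
        ring

end Integrability

section DerivativeUnderIntegral

lemma hasDerivAt_exp_neg_mul_add_mul (p q : ℝ) (u v : ℂ) (t : ℝ) :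
    HasDerivAt (fun t : ℝ => (Real.exp (-(t * p + t ^ 2 * q)) : ℂ) * (u + t * v))
      ((Real.exp (-(t * p + t ^ 2 * q)) : ℂ) * (v - (p + 2 * t * q : ℝ) * (u + t * v))) t := by
  have hexp : HasDerivAt (fun t : ℝ => Real.exp (-(t * p + t ^ 2 * q)))
      (Real.exp (-(t * p + t ^ 2 * q)) * -(1 * p + (2 : ℕ) * t ^ (2 - 1) * q)) t :=
    (((hasDerivAt_id t).mul_const p).add ((hasDerivAt_pow 2 t).mul_const q)).neg.exp
  have hlin : HasDerivAt (fun t : ℝ => u + t * v) ((1 : ℝ) * v) t :=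
    ((hasDerivAt_id t).ofReal_comp.mul_const v).const_add u
  exact (hexp.ofReal_comp.mul hlin).congr_deriv (by push_cast; ring)

lemma norm_exp_neg_mul_sub_le {K E p q t : ℝ} (u v : ℂ) (hE : 0 ≤ E) (hK : 0 ≤ K)
    (hp : |p| ≤ K * E) (hq₀ : 0 ≤ q) (hq : q ≤ K * E) (ht : |t| ≤ 1) (htK : |t| * K ≤ 1 / 2) :
    ‖(Real.exp (-(t * p + t ^ 2 * q)) : ℂ) * (v - (p + 2 * t * q : ℝ) * (u + t * v))‖
      ≤ 2 * (1 + 3 * K) * (Real.exp E * ‖u‖ + Real.exp E * ‖v‖) := by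
  have exponent_le : -(t * p + t ^ 2 * q) ≤ E / 2 := by
    have := calc -(t * p) ≤ |t| * |p| := by rw [← abs_mul]; exact neg_le_abs _
      _ ≤ |t| * (K * E) := by gcongr
      _ = |t| * K * E := by ring
      _ ≤ 1 / 2 * E := by gcongr
    nlinarith [mul_nonneg (sq_nonneg t) hq₀]
  have slope_le : |p + 2 * t * q| ≤ 3 * K * E := by
    calc |p + 2 * t * q| ≤ |p| + 2 * |t| * q := by
          refine (abs_add_le _ _).trans_eq ?_
          rw [abs_mul, abs_mul, abs_two, abs_of_nonneg hq₀]
      _ ≤ K * E + 2 * 1 * (K * E) := by gcongr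
      _ = 3 * K * E := by ring
  have one_add_le : 1 + E ≤ 2 * Real.exp (E / 2) := by linarith [Real.add_one_le_exp (E / 2)]
  have amplitude_le : ‖v - (p + 2 * t * q : ℝ) * (u + t * v)‖
      ≤ (1 + 3 * K) * (1 + E) * (‖u‖ + ‖v‖) := by
    have ht' : ‖u + t * v‖ ≤ ‖u‖ + 1 * ‖v‖ := by
      refine (norm_add_le _ _).trans ?_
      rw [norm_mul, norm_real, Real.norm_eq_abs]
      gcongr
    calc ‖v - (p + 2 * t * q : ℝ) * (u + t * v)‖
        ≤ ‖v‖ + ‖((p + 2 * t * q : ℝ) : ℂ)‖ * ‖u + t * v‖ :=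
          (norm_sub_le _ _).trans_eq (by rw [norm_mul])
      _ ≤ ‖v‖ + 3 * K * E * (‖u‖ + 1 * ‖v‖) := by
          rw [norm_real, Real.norm_eq_abs]
          gcongr
      _ ≤ (1 + 3 * K) * (1 + E) * (‖u‖ + ‖v‖) := by
          have : 0 ≤ ‖u‖ + 3 * K * (‖u‖ + ‖v‖) + E * (‖u‖ + ‖v‖) := by positivity
          linarith
  calc _ ≤ Real.exp (E / 2) * ((1 + 3 * K) * (2 * Real.exp (E / 2)) * (‖u‖ + ‖v‖)) := by
        rw [norm_mul, norm_real, Real.norm_eq_abs, Real.abs_exp]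
        gcongr
        exact amplitude_le.trans (by gcongr)
    _ = 2 * (1 + 3 * K) * (Real.exp (E / 2) * Real.exp (E / 2) * (‖u‖ + ‖v‖)) := by ring
    _ = _ := by rw [← Real.exp_add, add_halves]; ring

lemma hasDerivAt_integral_exp_neg_mul_add_mul {X : Type*} [MeasurableSpace X] {μ : Measure X}
    {f g : X → ℂ} {P Q E : X → ℝ} {K : ℝ} (hP : Measurable P) (hQ : Measurable Q)
    (hE : ∀ x, 0 ≤ E x) (hK : 0 ≤ K) (hPE : ∀ x, |P x| ≤ K * E x) (hQ₀ : ∀ x, 0 ≤ Q x)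
    (hQE : ∀ x, Q x ≤ K * E x) (hf : Integrable f μ) (hg : AEStronglyMeasurable g μ)
    (hfE : Integrable (fun x => Real.exp (E x) * ‖f x‖) μ)
    (hgE : Integrable (fun x => Real.exp (E x) * ‖g x‖) μ) :
    HasDerivAt (fun t : ℝ =>
        ∫ x, (Real.exp (-(t * P x + t ^ 2 * Q x)) : ℂ) * (f x + t * g x) ∂μ)
      (∫ x, (g x - P x * f x) ∂μ) 0 := by
  have hf_meas := hf.1
  have hδ : 0 < 1 / (2 * (1 + K)) := by positivity
  have small {t : ℝ} (ht : t ∈ Metric.ball (0 : ℝ) (1 / (2 * (1 + K)))) :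
      |t| ≤ 1 ∧ |t| * K ≤ 1 / 2 := by
    rw [Metric.mem_ball, dist_zero_right, Real.norm_eq_abs, lt_div_iff₀ (by positivity)] at ht
    constructor <;> nlinarith [abs_nonneg t, mul_nonneg (abs_nonneg t) hK]
  have key := (hasDerivAt_integral_of_dominated_loc_of_deriv_le (μ := μ) (x₀ := (0 : ℝ))
    (F := fun t x => (Real.exp (-(t * P x + t ^ 2 * Q x)) : ℂ) * (f x + t * g x))
    (F' := fun t x => (Real.exp (-(t * P x + t ^ 2 * Q x)) : ℂ)
      * (g x - (P x + 2 * t * Q x : ℝ) * (f x + t * g x)))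
    (Metric.ball_mem_nhds 0 hδ) (Eventually.of_forall fun t => by fun_prop)
    (by simpa using hf) (by fun_prop)
    (Eventually.of_forall fun x t ht => norm_exp_neg_mul_sub_le (f x) (g x) (hE x) hK (hPE x)
      (hQ₀ x) (hQE x) (small ht).1 (small ht).2)
    ((hfE.add hgE).const_mul _)
    (Eventually.of_forall fun x t _ => hasDerivAt_exp_neg_mul_add_mul _ _ _ _ t)).2
  simpa using key

end DerivativeUnderIntegral

section WardIdentity

/-- The unnormalised average `∫ f dμ` over the ensemble. -/
noncomputable def weightedIntegral (α : ℝ) (f : QuatEntries n → ℂ) : ℂ :=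
  ∫ x, (inducedQuatGinibreWeight n α x : ℂ) * f x

lemma integrable_weight_mul {α : ℝ} (hα : 0 ≤ α) {f : QuatEntries n → ℂ}
    (hf : f.HasTemperateGrowth) :
    Integrable fun x => (inducedQuatGinibreWeight n α x : ℂ) * f x := by
  simpa only [inducedQuatGinibreWeight_eq, neg_mul, one_mul] using
    integrable_rpow_normSq_det_mul_exp_mul hα hf one_pos

lemma integrable_exp_half_energy_mul_norm {α : ℝ} (hα : 0 ≤ α) {f : QuatEntries n → ℂ}
    (hf : f.HasTemperateGrowth) :
    Integrable fun x =>
      Real.exp (energy x / 2) * ‖(inducedQuatGinibreWeight n α x : ℂ) * f x‖ := by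
  refine (integrable_rpow_normSq_det_mul_exp_mul hα hf one_half_pos).norm.congr
    (Eventually.of_forall fun x => ?_)
  have hexp : Real.exp (-(1 / 2) * energy x)
      = Real.exp (energy x / 2) * Real.exp (-energy x) := by
    rw [← Real.exp_add]
    ring_nf
  simp only [inducedQuatGinibreWeight_eq, hexp, norm_mul, norm_real, Real.norm_eq_abs,
    Real.abs_exp]
  ring

lemma hasDerivAt_normSq_det_one_add_smul {m : Type*} [Fintype m] [DecidableEq m]
    (B : Matrix m m ℂ) :
    HasDerivAt (fun t : ℝ => normSq (1 + (t : ℂ) • B).det) (2 * B.trace.re) 0 := by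
  have hdet : HasDerivAt (fun z : ℂ => (1 + z • B).det) B.trace ((0 : ℝ) : ℂ) := by
    let P := (det (1 + (Polynomial.X : Polynomial ℂ) • B.map Polynomial.C)).divX.divX
    have hlin := ((hasDerivAt_id ((0 : ℝ) : ℂ)).const_mul B.trace).const_add 1
    have hquad := (P.hasDerivAt ((0 : ℝ) : ℂ)).mul (hasDerivAt_pow 2 ((0 : ℝ) : ℂ))
    refine ((hlin.add hquad).congr_deriv (by simp)).congr_of_eventuallyEq
      (Eventually.of_forall fun z => ?_)
    exact det_one_add_smul z B
  simpa [normSq_eq_norm_sq] using hdet.comp_ofReal.norm_sq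

lemma quatMatrix_add_smul_leftMul (b x : QuatEntries n) (t : ℝ) :
    quatMatrix n (x + t • leftMul b x) = (1 + (t : ℂ) • quatMatrix n b) * quatMatrix n x := by
  rw [quatMatrix_add, quatMatrix_smul, quatMatrix_leftMul, add_mul, one_mul, Matrix.smul_mul,
    coe_smul]

lemma inducedQuatGinibreWeight_add_smul_leftMul (α : ℝ) (b x : QuatEntries n) (t : ℝ) :
    inducedQuatGinibreWeight n α (x + t • leftMul b x)
      = normSq (1 + (t : ℂ) • quatMatrix n b).det ^ α * (inducedQuatGinibreWeight n α x *
        Real.exp (-(t * energyPairing (leftMul b x) x + t ^ 2 * energy (leftMul b x)))) := by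
  rw [inducedQuatGinibreWeight_eq, inducedQuatGinibreWeight_eq, quatMatrix_add_smul_leftMul,
    det_mul, normSq_mul, Real.mul_rpow (normSq_nonneg _) (normSq_nonneg _), energy_add_smul,
    neg_add, Real.exp_add]
  ring

lemma rpow_normSq_det_mul_integral_eq (α : ℝ) (b : QuatEntries n) {f g : QuatEntries n → ℂ} {t : ℝ}
    (hfg : ∀ x, f (x + t • leftMul b x) = f x + t * g x)
    (ht : 0 < normSq (1 + (t : ℂ) • quatMatrix n b).det) :
    ((normSq (1 + (t : ℂ) • quatMatrix n b).det ^ (n + α) : ℝ) : ℂ) *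
      ∫ x, (Real.exp (-(t * energyPairing (leftMul b x) x + t ^ 2 * energy (leftMul b x))) : ℂ) *
        (inducedQuatGinibreWeight n α x * f x + t * (inducedQuatGinibreWeight n α x * g x))
      = weightedIntegral α f := by
  set N := normSq (1 + (t : ℂ) • quatMatrix n b).det
  set L : QuatEntries n →ₗ[ℝ] QuatEntries n := LinearMap.id + t • leftMul b
  have hdet : LinearMap.det L = N ^ n :=
    det_of_quatMatrix_apply_eq_mul fun x => quatMatrix_add_smul_leftMul b x t
  have hchange := abs_det_smul_integral_comp volume (L := L) (by rw [hdet]; positivity)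
    fun x => (inducedQuatGinibreWeight n α x : ℂ) * f x
  rw [weightedIntegral, ← hchange, hdet, abs_of_pos (by positivity), real_smul,
    Real.rpow_add ht, Real.rpow_natCast, ofReal_mul, mul_assoc, ← integral_const_mul]
  congr 2 with x
  change _ = (inducedQuatGinibreWeight n α (x + t • leftMul b x) : ℂ) * f (x + t • leftMul b x)
  rw [hfg, inducedQuatGinibreWeight_add_smul_leftMul]
  push_cast
  ring

lemma hasDerivAt_rpow_normSq_det_one_add_smul (β : ℝ) {m : Type*} [Fintype m] [DecidableEq m]
    (B : Matrix m m ℂ) :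
    HasDerivAt (fun t : ℝ => ((normSq (1 + (t : ℂ) • B).det ^ β : ℝ) : ℂ))
      (2 * β * B.trace.re) 0 := by
  have h := (hasDerivAt_normSq_det_one_add_smul B).rpow_const (p := β) (by simp)
  refine h.ofReal_comp.congr_deriv ?_
  simp only [ofReal_zero, zero_smul, add_zero, det_one, map_one, Real.one_rpow, mul_one, ofReal_mul,
    ofReal_ofNat]
  ring

lemma hasTemperateGrowth_energyPairing_leftMul (b : QuatEntries n) :
    (fun x => (energyPairing (leftMul b x) x : ℂ)).HasTemperateGrowth := by
  simp only [energyPairing, quatMatrix_leftMul, re_eq_add_conj, div_eq_mul_inv, trace, diag_apply,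
    mul_apply, conjTranspose_apply, star_def]
  fun_prop

lemma hasDerivAt_integral_leftMul {α : ℝ} (hα : 0 ≤ α) (b : QuatEntries n)
    {f g : QuatEntries n → ℂ} (hf : f.HasTemperateGrowth) (hg : g.HasTemperateGrowth) :
    HasDerivAt (fun t : ℝ => ∫ x,
        (Real.exp (-(t * energyPairing (leftMul b x) x + t ^ 2 * energy (leftMul b x))) : ℂ) *
          (inducedQuatGinibreWeight n α x * f x + t * (inducedQuatGinibreWeight n α x * g x)))
      (weightedIntegral α g - weightedIntegral α fun x => energyPairing (leftMul b x) x * f x)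
      0 := by
  obtain ⟨C, hC₀, hC⟩ := exists_energy_apply_le (leftMul b)
  have hP (x) : |energyPairing (leftMul b x) x| ≤ 2 * (1 + C) * (energy x / 2) := by
    linarith [abs_energyPairing_le x (leftMul b x), hC x]
  have hQ (x) : energy (leftMul b x) ≤ 2 * (1 + C) * (energy x / 2) := by
    linarith [energy_nonneg x, hC x]
  have hL : Continuous (leftMul b) := (leftMul b).continuous_of_finiteDimensional
  have hPf := (hasTemperateGrowth_energyPairing_leftMul b).fun_mul hf
  refine (hasDerivAt_integral_exp_neg_mul_add_mul
    (continuous_energyPairing.comp (hL.prodMk continuous_id)).measurable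
    (continuous_energy.comp hL).measurable (fun x => div_nonneg (energy_nonneg x) zero_le_two)
    (by positivity) hP (fun x => energy_nonneg _) hQ (integrable_weight_mul hα hf)
    (integrable_weight_mul hα hg).1 (integrable_exp_half_energy_mul_norm hα hf)
    (integrable_exp_half_energy_mul_norm hα hg)).congr_deriv ?_
  rw [weightedIntegral, weightedIntegral,
    ← integral_sub (integrable_weight_mul hα hg) (integrable_weight_mul hα hPf)]
  congr 1 with x
  simp only [Function.comp_apply, id_eq]
  ring

/-- Invariance of Lebesgue measure under left multiplication by `1 + tB`, to first order in `t`. -/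
lemma weightedIntegral_energyPairing_leftMul {α : ℝ} (hα : 0 ≤ α) (b : QuatEntries n)
    {f g : QuatEntries n → ℂ} (hf : f.HasTemperateGrowth) (hg : g.HasTemperateGrowth)
    (hfg : ∀ (t : ℝ) x, f (x + t • leftMul b x) = f x + t * g x) :
    weightedIntegral α (fun x => energyPairing (leftMul b x) x * f x)
      = weightedIntegral α g
        + 2 * (n + α) * (quatMatrix n b).trace.re * weightedIntegral α f := by
  have hpos : ∀ᶠ t : ℝ in 𝓝 0, 0 < normSq (1 + (t : ℂ) • quatMatrix n b).det :=
    (hasDerivAt_normSq_det_one_add_smul _).continuousAt.eventually_const_lt (by simp)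
  have hprod := (hasDerivAt_rpow_normSq_det_one_add_smul (n + α) (quatMatrix n b)).mul
    (hasDerivAt_integral_leftMul hα b hf hg)
  have hconst := (hasDerivAt_const (0 : ℝ) (weightedIntegral α f)).congr_of_eventuallyEq
    (hpos.mono fun t ht => rpow_normSq_det_mul_integral_eq α b (hfg t) ht)
  have hzero := hprod.unique hconst
  have hf₀ : ∫ x, ((inducedQuatGinibreWeight n α x : ℂ) * f x) = weightedIntegral α f := rfl
  simp only [ofReal_add, ofReal_natCast, zero_mul, ne_eq, OfNat.ofNat_ne_zero, not_false_eq_true,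
    zero_pow, add_zero, neg_zero, Real.exp_zero, ofReal_one, ofReal_zero, one_mul, hf₀, zero_smul,
    det_one, map_one, Real.one_rpow] at hzero
  linear_combination -hzero

end WardIdentity

section Gram

/-- The entries of the quaternion matrix whose `(r, 0)`-th row is `z e_j`, and whose rows outside
the `r`-th block vanish. -/
noncomputable def quatSingle (r : Fin n) (j : Fin n × Fin 2) (z : ℂ) : QuatEntries n :=
  Pi.single r (Pi.single j.1 (if j.2 = 0 then (z, 0) else (0, z)))

lemma quatMatrix_quatSingle_self (r : Fin n) (j : Fin n × Fin 2) (z : ℂ) :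
    quatMatrix n (quatSingle r j z) (r, 0) = Pi.single j z := by
  obtain ⟨c, i⟩ := j
  funext ⟨b, k⟩
  rcases eq_or_ne b c with rfl | hb
  · fin_cases i <;> fin_cases k <;> simp [quatSingle]
  · fin_cases i <;> fin_cases k <;> simp [quatSingle, hb]

lemma quatMatrix_quatSingle_of_ne {r : Fin n} {a : Fin n × Fin 2} (ha : a.1 ≠ r)
    (j : Fin n × Fin 2) (z : ℂ) : quatMatrix n (quatSingle r j z) a = 0 := by
  funext b
  simp [quatMatrix, quatSingle, ha]

lemma quatMatrix_leftMul_quatSingle_self (r : Fin n) (j : Fin n × Fin 2) (z : ℂ)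
    (x : QuatEntries n) :
    quatMatrix n (leftMul (quatSingle r j z) x) (r, 0) = z • quatMatrix n x j := by
  rw [quatMatrix_leftMul, mul_apply_eq_vecMul, quatMatrix_quatSingle_self, single_vecMul]
  rfl

lemma quatMatrix_leftMul_quatSingle_of_ne {r : Fin n} {a : Fin n × Fin 2} (ha : a.1 ≠ r)
    (j : Fin n × Fin 2) (z : ℂ) (x : QuatEntries n) :
    quatMatrix n (leftMul (quatSingle r j z) x) a = 0 := by
  rw [quatMatrix_leftMul, mul_apply_eq_vecMul, quatMatrix_quatSingle_of_ne ha, zero_vecMul]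

lemma quatMatrix_leftMul_quatSingle_one (r : Fin n) (z : ℂ) (x : QuatEntries n) :
    quatMatrix n (leftMul (quatSingle r (r, 0) z) x) (r, 1) = conj z • quatMatrix n x (r, 1) := by
  have hrow (b : Fin n × Fin 2) := congrFun (quatMatrix_leftMul_quatSingle_self r (r, 0) z x) b
  funext ⟨b, k⟩
  have h₀ := hrow (b, 0)
  have h₁ := hrow (b, 1)
  simp only [quatMatrix_zero_zero, quatMatrix_zero_one, Pi.smul_apply, smul_eq_mul] at h₀ h₁
  fin_cases k <;> simp [h₀, h₁]

lemma quatMatrix_add_smul_row (x y : QuatEntries n) (t : ℝ) (a : Fin n × Fin 2) :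
    quatMatrix n (x + t • y) a = quatMatrix n x a + (t : ℂ) • quatMatrix n y a := by
  rw [quatMatrix_add, quatMatrix_smul, coe_smul]
  rfl

lemma trace_quatMatrix_re (x : QuatEntries n) :
    (quatMatrix n x).trace.re = 2 * ∑ a, (quatMatrix n x (a, 0) (a, 0)).re := by
  simp [trace, Fintype.sum_prod_type, Finset.mul_sum, two_mul]

lemma energyPairing_eq_sum (y x : QuatEntries n) :
    energyPairing y x
      = 2 * ∑ a, (quatMatrix n y (a, 0) ⬝ᵥ star (quatMatrix n x (a, 0))).re := by
  simp only [energyPairing, trace, diag_apply, mul_apply, conjTranspose_apply, dotProduct,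
    Fintype.sum_prod_type, Fin.sum_univ_two, Pi.star_apply, re_sum, add_re, Finset.mul_sum,
    ← Finset.sum_add_distrib]
  refine Finset.sum_congr rfl fun a _ => Finset.sum_congr rfl fun b _ => ?_
  simp only [quatMatrix_zero_zero, quatMatrix_zero_one, quatMatrix_one_zero, quatMatrix_one_one,
    star_def, map_neg, conj_conj, mul_re, neg_re, neg_im, conj_re, conj_im]
  ring

lemma trace_quatSingle_re (r : Fin n) (j : Fin n × Fin 2) (z : ℂ) :
    (quatMatrix n (quatSingle r j z)).trace.re = 2 * (if j = (r, 0) then z.re else 0) := by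
  rw [trace_quatMatrix_re, Finset.sum_eq_single r]
  · rw [quatMatrix_quatSingle_self, Pi.single_apply, apply_ite re, zero_re]
    simp only [eq_comm]
  · intro a _ ha
    rw [quatMatrix_quatSingle_of_ne (by exact ha), Pi.zero_apply, zero_re]
  · simp

lemma energyPairing_leftMul_quatSingle (r : Fin n) (j : Fin n × Fin 2) (z : ℂ)
    (x : QuatEntries n) :
    energyPairing (leftMul (quatSingle r j z) x) x
      = 2 * (z * (quatMatrix n x * (quatMatrix n x)ᴴ) j (r, 0)).re := by
  rw [energyPairing_eq_sum, Finset.sum_eq_single r]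
  · rw [quatMatrix_leftMul_quatSingle_self, smul_dotProduct]
    rfl
  · intro a _ ha
    rw [quatMatrix_leftMul_quatSingle_of_ne (by exact ha), zero_dotProduct, zero_re]
  · simp

lemma hasTemperateGrowth_gram (i j : Fin n × Fin 2) :
    (fun x => (quatMatrix n x * (quatMatrix n x)ᴴ) i j).HasTemperateGrowth := by
  simp only [mul_apply, conjTranspose_apply, star_def]
  fun_prop

lemma weightedIntegral_const_mul (α : ℝ) (c : ℂ) (f : QuatEntries n → ℂ) :
    weightedIntegral α (fun x => c * f x) = c * weightedIntegral α f := by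
  simp only [weightedIntegral, mul_left_comm _ c, integral_const_mul]

lemma weightedIntegral_add {α : ℝ} (hα : 0 ≤ α) {f g : QuatEntries n → ℂ}
    (hf : f.HasTemperateGrowth) (hg : g.HasTemperateGrowth) :
    weightedIntegral α (fun x => f x + g x) = weightedIntegral α f + weightedIntegral α g := by
  simp only [weightedIntegral, mul_add]
  exact integral_add (integrable_weight_mul hα hf) (integrable_weight_mul hα hg)

lemma weightedIntegral_sum {α : ℝ} (hα : 0 ≤ α) {ι : Type*} (s : Finset ι)
    {f : ι → QuatEntries n → ℂ} (hf : ∀ i ∈ s, (f i).HasTemperateGrowth) :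
    weightedIntegral α (fun x => ∑ i ∈ s, f i x) = ∑ i ∈ s, weightedIntegral α (f i) := by
  simp only [weightedIntegral, Finset.mul_sum]
  exact integral_finsetSum _ fun i hi => integrable_weight_mul hα (hf i hi)

/-- Adding up the real Ward identities in the directions `1` and `i` isolates the Gram entry from
its conjugate. -/
lemma weightedIntegral_gram_mul {α : ℝ} (hα : 0 ≤ α) {r : Fin n} {j : Fin n × Fin 2}
    {f g : QuatEntries n → ℂ} (hf : f.HasTemperateGrowth) (hg : g.HasTemperateGrowth)
    (hfg : ∀ (z : ℂ) (t : ℝ) x, f (x + t • leftMul (quatSingle r j z) x) = f x + t * (z * g x)) :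
    weightedIntegral α (fun x => (quatMatrix n x * (quatMatrix n x)ᴴ) j (r, 0) * f x)
      = weightedIntegral α g + 2 * (n + α) * (if j = (r, 0) then weightedIntegral α f else 0) := by
  have ward (z : ℂ) := weightedIntegral_energyPairing_leftMul hα (quatSingle r j z) hf
    ((Function.HasTemperateGrowth.const z).fun_mul hg) (hfg z)
  have growth (z : ℂ) : (fun x => (energyPairing (leftMul (quatSingle r j z) x) x : ℂ)
      * f x).HasTemperateGrowth := (hasTemperateGrowth_energyPairing_leftMul _).fun_mul hf
  have split (x : QuatEntries n) : (quatMatrix n x * (quatMatrix n x)ᴴ) j (r, 0) * f x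
      = 1 / 2 * ((energyPairing (leftMul (quatSingle r j 1) x) x : ℂ) * f x)
        + -(I / 2) * ((energyPairing (leftMul (quatSingle r j I) x) x : ℂ) * f x) := by
    rw [energyPairing_leftMul_quatSingle, energyPairing_leftMul_quatSingle]
    push_cast [one_mul, I_mul_re]
    linear_combination -f x * re_add_im ((quatMatrix n x * (quatMatrix n x)ᴴ) j (r, 0))
  simp only [split]
  rw [weightedIntegral_add hα ((Function.HasTemperateGrowth.const _).fun_mul (growth 1))
      ((Function.HasTemperateGrowth.const _).fun_mul (growth I)),
    weightedIntegral_const_mul, weightedIntegral_const_mul, ward 1, ward I,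
    weightedIntegral_const_mul, weightedIntegral_const_mul, trace_quatSingle_re,
    trace_quatSingle_re]
  split_ifs <;>
    simp only [one_mul, one_re, I_re, mul_one, mul_zero, ofReal_zero, ofReal_ofNat, zero_mul,
      add_zero] <;>
    linear_combination (-1/2 * weightedIntegral α g) * I_sq

end Gram

section KeepRows

variable {R m : Type*} [DecidableEq m]

/-- The matrix `G` with each row outside `S` replaced by the corresponding row of the identity; its
determinant is the principal minor of `G` on `S`. -/
def keepRows [Zero R] [One R] (S : Finset m) (G : Matrix m m R) : Matrix m m R :=
  of fun a => if a ∈ S then G a else Pi.single a 1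

lemma keepRows_of_mem [Zero R] [One R] {S : Finset m} {a : m} (ha : a ∈ S) (G : Matrix m m R) :
    keepRows S G a = G a := if_pos ha

lemma keepRows_of_notMem [Zero R] [One R] {S : Finset m} {a : m} (ha : a ∉ S) (G : Matrix m m R) :
    keepRows S G a = Pi.single a 1 := if_neg ha

lemma keepRows_congr [Zero R] [One R] {S : Finset m} {G G' : Matrix m m R}
    (h : ∀ a ∈ S, G a = G' a) : keepRows S G = keepRows S G' := by
  refine funext fun a => ?_
  by_cases ha : a ∈ S
  · rw [keepRows_of_mem ha, keepRows_of_mem ha, h a ha]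
  · rw [keepRows_of_notMem ha, keepRows_of_notMem ha]

variable [Fintype m] [CommRing R]

lemma sum_det_updateRow_mul_dotProduct (H : Matrix m m R) (v w : m → R) :
    ∑ a, (H.updateRow a v).det * (H a ⬝ᵥ w) = H.det * (v ⬝ᵥ w) := by
  calc ∑ a, (H.updateRow a v).det * (H a ⬝ᵥ w) = (Hᵀ *ᵥ cramer Hᵀ v) ⬝ᵥ w := by
        rw [mulVec_transpose, ← dotProduct_mulVec]
        simp only [dotProduct, cramer_transpose_apply, mulVec]
    _ = H.det * (v ⬝ᵥ w) := by rw [mulVec_cramer, det_transpose, smul_dotProduct, smul_eq_mul]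

lemma sum_det_keepRows_updateRow_mul (S : Finset m) (G : Matrix m m R) (v w : m → R) :
    ∑ a ∈ S, ((keepRows S G).updateRow a v).det * (G a ⬝ᵥ w)
        + ∑ a ∈ Sᶜ, ((keepRows S G).updateRow a v).det * w a
      = (keepRows S G).det * (v ⬝ᵥ w) := by
  rw [← sum_det_updateRow_mul_dotProduct, ← Finset.sum_add_sum_compl S]
  congr 1
  · exact Finset.sum_congr rfl fun a ha => by rw [keepRows_of_mem ha]
  · refine Finset.sum_congr rfl fun a ha => ?_
    rw [keepRows_of_notMem (Finset.mem_compl.1 ha), single_one_dotProduct]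

end KeepRows

section Minors

lemma hasTemperateGrowth_keepRows (S : Finset (Fin n × Fin 2)) (a b : Fin n × Fin 2) :
    (fun x => keepRows S (quatMatrix n x) a b).HasTemperateGrowth := by
  by_cases ha : a ∈ S
  · simpa only [keepRows_of_mem ha] using hasTemperateGrowth_entry a b
  · simpa only [keepRows_of_notMem ha] using Function.HasTemperateGrowth.const _

lemma hasTemperateGrowth_det_keepRows (S : Finset (Fin n × Fin 2)) :
    (fun x => (keepRows S (quatMatrix n x)).det).HasTemperateGrowth :=
  hasTemperateGrowth_det (hasTemperateGrowth_keepRows S)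

lemma hasTemperateGrowth_det_keepRows_updateRow (S : Finset (Fin n × Fin 2))
    (a b : Fin n × Fin 2) :
    (fun x => ((keepRows S (quatMatrix n x)).updateRow a (quatMatrix n x b)).det).HasTemperateGrowth
    :=
  hasTemperateGrowth_det <|
    hasTemperateGrowth_updateRow a (hasTemperateGrowth_keepRows S) (hasTemperateGrowth_entry b)

lemma keepRows_add_smul_leftMul_quatSingle {r : Fin n} {S : Finset (Fin n × Fin 2)}
    (hS : ∀ a ∈ S, a.1 ≠ r) (j : Fin n × Fin 2) (z : ℂ) (t : ℝ) (x : QuatEntries n) :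
    keepRows S (quatMatrix n (x + t • leftMul (quatSingle r j z) x))
      = keepRows S (quatMatrix n x) := by
  refine keepRows_congr fun a ha => ?_
  rw [quatMatrix_add_smul_row, quatMatrix_leftMul_quatSingle_of_ne (hS a ha), smul_zero, add_zero]

lemma weightedIntegral_gram_self_mul_det_keepRows {α : ℝ} (hα : 0 ≤ α) {r : Fin n}
    {S : Finset (Fin n × Fin 2)} (hS : ∀ a ∈ S, a.1 ≠ r) :
    weightedIntegral α (fun x => (quatMatrix n x * (quatMatrix n x)ᴴ) (r, 0) (r, 0)
        * (keepRows S (quatMatrix n x)).det)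
      = 2 * (n + α) * weightedIntegral α fun x => (keepRows S (quatMatrix n x)).det := by
  rw [weightedIntegral_gram_mul hα (hasTemperateGrowth_det_keepRows S)
    (Function.HasTemperateGrowth.const 0)]
  · simp [weightedIntegral]
  · intro z t x
    rw [keepRows_add_smul_leftMul_quatSingle hS]
    simp

lemma weightedIntegral_gram_mul_det_keepRows_updateRow {α : ℝ} (hα : 0 ≤ α) {r : Fin n}
    {S : Finset (Fin n × Fin 2)} (hS : ∀ a ∈ S, a.1 ≠ r) {j : Fin n × Fin 2} (hj : j ∈ S) :
    weightedIntegral α (fun x => (quatMatrix n x * (quatMatrix n x)ᴴ) j (r, 0)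
        * ((keepRows S (quatMatrix n x)).updateRow j (quatMatrix n x (r, 0))).det)
      = weightedIntegral α fun x => (keepRows S (quatMatrix n x)).det := by
  have hjr : j ≠ (r, 0) := fun h => hS j hj (by rw [h])
  rw [weightedIntegral_gram_mul hα (hasTemperateGrowth_det_keepRows_updateRow S j (r, 0))
    (hasTemperateGrowth_det_keepRows S), if_neg hjr, mul_zero, add_zero]
  intro z t x
  have hrow : quatMatrix n (x + t • leftMul (quatSingle r j z) x) (r, 0)
      = quatMatrix n x (r, 0) + ((t : ℂ) * z) • quatMatrix n x j := by
    rw [quatMatrix_add_smul_row, quatMatrix_leftMul_quatSingle_self, smul_smul]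
  have hself : (keepRows S (quatMatrix n x)).updateRow j (quatMatrix n x j)
      = keepRows S (quatMatrix n x) := by
    rw [← keepRows_of_mem hj (quatMatrix n x), updateRow_eq_self]
  rw [hrow, keepRows_add_smul_leftMul_quatSingle hS, det_updateRow_add, det_updateRow_smul, hself,
    mul_assoc]

/-- Cramer's rule expands the row `(r, 0)` along the rows in `S`; the Ward identity evaluates every
resulting Gram entry. -/
lemma sum_weightedIntegral_conj_mul_det_keepRows_updateRow {α : ℝ} (hα : 0 ≤ α) {r : Fin n}
    {S : Finset (Fin n × Fin 2)} (hS : ∀ a ∈ S, a.1 ≠ r) :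
    ∑ a ∈ Sᶜ, weightedIntegral α (fun x => conj (quatMatrix n x (r, 0) a)
        * ((keepRows S (quatMatrix n x)).updateRow a (quatMatrix n x (r, 0))).det)
      = (2 * (n + α) - S.card) * weightedIntegral α fun x => (keepRows S (quatMatrix n x)).det := by
  have growth (a : Fin n × Fin 2) := hasTemperateGrowth_det_keepRows_updateRow S a (r, 0)
  have growthIn : ∀ a ∈ S, (fun x => (quatMatrix n x * (quatMatrix n x)ᴴ) a (r, 0)
      * ((keepRows S (quatMatrix n x)).updateRow a
        (quatMatrix n x (r, 0))).det).HasTemperateGrowth :=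
    fun a _ => (hasTemperateGrowth_gram a (r, 0)).fun_mul (growth a)
  have growthOut : ∀ a ∈ Sᶜ, (fun x => conj (quatMatrix n x (r, 0) a)
      * ((keepRows S (quatMatrix n x)).updateRow a
        (quatMatrix n x (r, 0))).det).HasTemperateGrowth :=
    fun a _ => (hasTemperateGrowth_conj (hasTemperateGrowth_entry (r, 0) a)).fun_mul (growth a)
  have cramer_rule (x : QuatEntries n) := sum_det_keepRows_updateRow_mul S (quatMatrix n x)
    (quatMatrix n x (r, 0)) (star (quatMatrix n x (r, 0)))
  have key := weightedIntegral_gram_self_mul_det_keepRows hα hS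
  have expand (x : QuatEntries n) : (quatMatrix n x * (quatMatrix n x)ᴴ) (r, 0) (r, 0)
        * (keepRows S (quatMatrix n x)).det
      = ∑ a ∈ S, (quatMatrix n x * (quatMatrix n x)ᴴ) a (r, 0)
          * ((keepRows S (quatMatrix n x)).updateRow a (quatMatrix n x (r, 0))).det
        + ∑ a ∈ Sᶜ, conj (quatMatrix n x (r, 0) a)
          * ((keepRows S (quatMatrix n x)).updateRow a (quatMatrix n x (r, 0))).det := by
    rw [mul_comm]
    refine (cramer_rule x).symm.trans ?_
    congr 1 <;> exact Finset.sum_congr rfl fun a _ => mul_comm _ _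
  simp only [expand] at key
  rw [weightedIntegral_add hα (.sum growthIn) (.sum growthOut), weightedIntegral_sum hα _ growthIn,
    weightedIntegral_sum hα _ growthOut, Finset.sum_congr rfl fun a ha =>
      weightedIntegral_gram_mul_det_keepRows_updateRow hα hS ha, Finset.sum_const,
    nsmul_eq_mul] at key
  linear_combination key

lemma det_keepRows_add_smul_leftMul_quatSingle_I {S : Finset (Fin n × Fin 2)} {a : Fin n × Fin 2}
    (ha : a ∈ S) (hunique : ∀ b ∈ S, b.1 = a.1 → b = a) (t : ℝ) (x : QuatEntries n) :
    (keepRows S (quatMatrix n (x + t • leftMul (quatSingle a.1 (a.1, 0) I) x))).det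
      = (1 + t * if a.2 = 0 then I else -I) * (keepRows S (quatMatrix n x)).det := by
  have hrow : quatMatrix n (leftMul (quatSingle a.1 (a.1, 0) I) x) a
      = (if a.2 = 0 then I else -I) • quatMatrix n x a := by
    obtain ⟨r, i⟩ := a
    fin_cases i
    · exact quatMatrix_leftMul_quatSingle_self r (r, 0) I x
    · simpa using quatMatrix_leftMul_quatSingle_one r I x
  have hrows : keepRows S (quatMatrix n (x + t • leftMul (quatSingle a.1 (a.1, 0) I) x))
      = (keepRows S (quatMatrix n x)).updateRow a
        ((1 + (t : ℂ) * if a.2 = 0 then I else -I) • quatMatrix n x a) := by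
    refine funext fun b => ?_
    rcases eq_or_ne b a with rfl | hba
    · rw [updateRow_self, keepRows_of_mem ha, quatMatrix_add_smul_row, hrow, add_smul, one_smul,
        smul_smul]
    · rw [updateRow_ne hba]
      by_cases hb : b ∈ S
      · rw [keepRows_of_mem hb, keepRows_of_mem hb, quatMatrix_add_smul_row,
          quatMatrix_leftMul_quatSingle_of_ne fun h => hba (hunique b hb h), smul_zero, add_zero]
      · rw [keepRows_of_notMem hb, keepRows_of_notMem hb]
  rw [hrows, det_updateRow_smul, ← keepRows_of_mem ha (quatMatrix n x), updateRow_eq_self]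

/-- The phase rotation generated by `diag(i, -i)` in block `a.1` multiplies the minor by a
nontrivial phase but preserves the weight. -/
lemma weightedIntegral_det_keepRows_eq_zero {α : ℝ} (hα : 0 ≤ α) {S : Finset (Fin n × Fin 2)}
    {a : Fin n × Fin 2} (ha : a ∈ S) (hunique : ∀ b ∈ S, b.1 = a.1 → b = a) :
    weightedIntegral α (fun x => (keepRows S (quatMatrix n x)).det) = 0 := by
  set c : ℂ := if a.2 = 0 then I else -I with hc
  have hc₀ : c ≠ 0 := by rw [hc]; split_ifs <;> simp
  have hf := hasTemperateGrowth_det_keepRows S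
  have pairing_eq_zero (x : QuatEntries n) :
      energyPairing (leftMul (quatSingle a.1 (a.1, 0) I) x) x = 0 := by
    simp [energyPairing_leftMul_quatSingle, mul_apply, mul_conj]
  have ward := weightedIntegral_energyPairing_leftMul hα (quatSingle a.1 (a.1, 0) I) hf
    ((Function.HasTemperateGrowth.const c).fun_mul hf) fun t x => by
      rw [det_keepRows_add_smul_leftMul_quatSingle_I ha hunique]
      ring
  simp only [pairing_eq_zero, trace_quatSingle_re, weightedIntegral_const_mul] at ward
  simpa [weightedIntegral, hc₀] using ward

end Minors

section Laplace

variable {ι R : Type*}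

/-- The indices of the `2 × 2` blocks in `T`. -/
abbrev blockRows (T : Finset ι) : Finset (ι × Fin 2) := T ×ˢ Finset.univ

/-- The permutation of rows or columns which moves whole blocks according to `σ`. -/
abbrev blockPerm (σ : Equiv.Perm ι) : Equiv.Perm (ι × Fin 2) := Equiv.prodCongrLeft fun _ => σ

lemma exists_blockRows_eq {S : Finset (ι × Fin 2)} (hS : ∀ a ∈ S, ∃ b ∈ S, b.1 = a.1 ∧ b ≠ a) :
    ∃ T, blockRows T = S := by
  classical
  refine ⟨S.image Prod.fst, Finset.ext fun ⟨r, i⟩ => ?_⟩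
  simp only [Finset.mem_product, Finset.mem_image, Finset.mem_univ, and_true]
  refine ⟨?_, fun h => ⟨_, h, rfl⟩⟩
  rintro ⟨⟨_, j⟩, hj, rfl⟩
  obtain ⟨⟨_, k⟩, hk, rfl, hjk⟩ := hS _ hj
  have hi : i = j ∨ i = k := by
    have : k ≠ j := fun h => hjk (by rw [h])
    lia
  rcases hi with rfl | rfl <;> assumption

variable [Fintype ι] [DecidableEq ι] [CommRing R]

lemma compl_blockRows (T : Finset ι) : (blockRows T)ᶜ = blockRows Tᶜ := by
  ext a
  simp

lemma sign_blockPerm (σ : Equiv.Perm ι) : Equiv.Perm.sign (blockPerm σ) = 1 := by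
  rw [blockPerm, Equiv.Perm.sign_prodCongrLeft, Fin.prod_univ_two, Int.units_mul_self]

lemma det_submatrix_blockPerm (τ σ : Equiv.Perm ι) (M : Matrix (ι × Fin 2) (ι × Fin 2) R) :
    (M.submatrix (blockPerm τ) (blockPerm σ)).det = M.det := by
  have h : M.submatrix (blockPerm τ) (blockPerm σ)
      = (M.submatrix id (blockPerm σ)).submatrix (blockPerm τ) id := rfl
  rw [h, det_permute, det_permute', sign_blockPerm, sign_blockPerm]
  simp

lemma det_updateRow_updateRow_comm {m : Type*} [Fintype m] [DecidableEq m] (M : Matrix m m R)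
    {a b : m} (hab : a ≠ b) (u v : m → R) :
    ((M.updateRow a u).updateRow b v).det = -((M.updateRow a v).updateRow b u).det := by
  have hswap : (M.updateRow a u).updateRow b v
      = ((M.updateRow a v).updateRow b u).submatrix (Equiv.swap a b) id := by
    ext c d
    rw [submatrix_apply, id]
    rcases eq_or_ne c a with rfl | hca
    · simp [updateRow_ne hab]
    rcases eq_or_ne c b with rfl | hcb
    · simp [updateRow_ne hab]
    · simp [Equiv.swap_apply_of_ne_of_ne, hca, hcb]
  rw [hswap, det_permute, Equiv.Perm.sign_swap hab]
  simp

/-- Place the rows `(r, 0)`, `(r, 1)` of `G` at positions `(p, 0)`, `(p, 1)` of `keepRows T G` and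
expand the determinant along the second of them: this is the contribution of the column block
`c`. -/
def laplaceTerm (T : Finset ι) (r p c : ι) (G : Matrix (ι × Fin 2) (ι × Fin 2) R) : R :=
  ∑ i, G (r, 1) (c, i) * (((keepRows (blockRows T) G).updateRow (p, 0) (G (r, 0))).updateRow (p, 1)
    (Pi.single (c, i) 1)).det

lemma det_keepRows_insert (T : Finset ι) (r : ι) (G : Matrix (ι × Fin 2) (ι × Fin 2) R) :
    (keepRows (blockRows (insert r T)) G).det = ∑ c, laplaceTerm T r r c G := by
  have hrows : keepRows (blockRows (insert r T)) G
      = ((keepRows (blockRows T) G).updateRow (r, 0) (G (r, 0))).updateRow (r, 1) (G (r, 1)) := by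
    refine funext fun ⟨a, i⟩ => ?_
    rcases eq_or_ne a r with rfl | ha
    · fin_cases i <;> simp [keepRows_of_mem]
    · by_cases haT : a ∈ T <;> simp [keepRows_of_mem, keepRows_of_notMem, ha, haT]
  rw [hrows, det_eq_sum_mul_adjugate_row _ (r, 1), Fintype.sum_prod_type]
  simp only [adjugate_apply, laplaceTerm, updateRow_self, updateRow_idem]

lemma laplaceTerm_eq_zero {T : Finset ι} {c p : ι} (hc : c ∉ T) (hcp : c ≠ p) (r : ι)
    (G : Matrix (ι × Fin 2) (ι × Fin 2) R) : laplaceTerm T r p c G = 0 := by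
  refine Finset.sum_eq_zero fun i _ => ?_
  have hne : ((c, i) : ι × Fin 2) ≠ (p, 1) := fun h => hcp (congrArg Prod.fst h)
  rw [det_zero_of_row_eq hne, mul_zero]
  simp [keepRows_of_notMem, hcp, hc]

lemma laplaceTerm_diag {T : Finset ι} {p : ι} (hp : p ∉ T) (r : ι)
    (G : Matrix (ι × Fin 2) (ι × Fin 2) R) :
    laplaceTerm T r p p G
      = G (r, 1) (p, 1) * ((keepRows (blockRows T) G).updateRow (p, 0) (G (r, 0))).det
        - G (r, 1) (p, 0) * ((keepRows (blockRows T) G).updateRow (p, 1) (G (r, 0))).det := by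
  have hrow (i : Fin 2) : keepRows (blockRows T) G (p, i) = Pi.single (p, i) 1 :=
    keepRows_of_notMem (by simp [hp]) G
  have hne : ((p, 0) : ι × Fin 2) ≠ (p, 1) := by simp
  have h₁ : (((keepRows (blockRows T) G).updateRow (p, 0) (G (r, 0))).updateRow (p, 1)
      (Pi.single (p, 1) 1)) = (keepRows (blockRows T) G).updateRow (p, 0) (G (r, 0)) := by
    rw [← hrow, ← updateRow_ne hne.symm (M := keepRows (blockRows T) G), updateRow_eq_self]
  have h₀ : (((keepRows (blockRows T) G).updateRow (p, 0) (Pi.single (p, 0) 1)).updateRow (p, 1)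
      (G (r, 0))) = (keepRows (blockRows T) G).updateRow (p, 1) (G (r, 0)) := by
    rw [← hrow, updateRow_eq_self]
  rw [laplaceTerm, Fin.sum_univ_two, h₁, det_updateRow_updateRow_comm _ hne, h₀]
  ring

lemma laplaceTerm_submatrix {T : Finset ι} {r p c : ι} {τ σ : Equiv.Perm ι} (hr : r ∉ T)
    (hT : ∀ a ∈ T, τ a = a) (hτσ : ∀ a ∉ T, a ≠ p → τ a = σ a) (hp : τ p = r) (hc : σ c = r)
    (G : Matrix (ι × Fin 2) (ι × Fin 2) R) :
    laplaceTerm T r p c (G.submatrix id (blockPerm σ)) = laplaceTerm T r r r G := by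
  refine Finset.sum_congr rfl fun i _ => ?_
  congr 1
  · simp [hc]
  have single_comp (a b : ι × Fin 2) : (Pi.single (blockPerm σ a) 1 : ι × Fin 2 → R) (blockPerm σ b)
      = (Pi.single a 1 : ι × Fin 2 → R) b := by
    simp only [Pi.single_apply, (blockPerm σ).injective.eq_iff]
  refine (congrArg det ?_).trans (det_submatrix_blockPerm τ σ _)
  have hinj {a b : ι} (h : τ a = τ b) : a = b := τ.injective h
  have hpT : p ∉ T := fun h => hr (hp ▸ (hT p h).symm ▸ h)
  refine funext fun ⟨a, k⟩ => funext fun b => ?_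
  rcases eq_or_ne a p with rfl | hap
  · fin_cases k
    · simp [hp]
    · simpa [hp, hc] using (single_comp (c, i) b).symm
  have har : τ a ≠ r := fun h => hap (hinj (h.trans hp.symm))
  by_cases haT : a ∈ T
  · have har' : a ≠ r := fun h => hr (h ▸ haT)
    simp [keepRows_of_mem, haT, hap, hT a haT, har']
  · have hτ : τ a ∉ T := fun h => haT (hinj (hT _ h) ▸ h)
    rw [hτσ a haT hap] at har hτ
    simpa [keepRows_of_notMem, haT, hτ, hap, har, hτσ a haT hap] using (single_comp (a, k) b).symm

end Laplace

section ColumnSymmetry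

lemma integral_comp_permCols {X F ι κ : Type*} [Fintype ι] [Fintype κ] [MeasureSpace X]
    [SigmaFinite (volume : Measure X)] [NormedAddCommGroup F] [NormedSpace ℝ F]
    (σ : Equiv.Perm κ) (f : (ι → κ → X) → F) :
    ∫ x : ι → κ → X, f (fun i j => x i (σ j)) = ∫ x, f x := by
  have h : MeasurePreserving (MeasurableEquiv.piCongrRight fun _ : ι =>
      MeasurableEquiv.piCongrLeft (fun _ : κ => X) σ.symm) :=
    volume_preserving_pi (f := fun _ : ι => MeasurableEquiv.piCongrLeft (fun _ : κ => X) σ.symm)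
      fun _ => volume_measurePreserving_piCongrLeft _ _
  rw [← h.integral_comp' f]
  congr 1 with x
  congr 1 with i j
  have := Equiv.piCongrLeft_apply_apply (fun _ : κ => X) σ.symm (x i) (σ j)
  rw [Equiv.symm_apply_apply] at this
  exact this.symm

lemma quatMatrix_permCols (σ : Equiv.Perm (Fin n)) (x : QuatEntries n) :
    quatMatrix n (fun i j => x i (σ j)) = (quatMatrix n x).submatrix id (blockPerm σ) := rfl

lemma inducedQuatGinibreWeight_permCols (α : ℝ) (σ : Equiv.Perm (Fin n)) (x : QuatEntries n) :
    inducedQuatGinibreWeight n α (fun i j => x i (σ j)) = inducedQuatGinibreWeight n α x := by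
  rw [inducedQuatGinibreWeight, quatMatrix_permCols, conjTranspose_submatrix, submatrix_mul_equiv,
    submatrix_id_id, inducedQuatGinibreWeight]

lemma weightedIntegral_permCols (α : ℝ) (σ : Equiv.Perm (Fin n)) (f : QuatEntries n → ℂ) :
    weightedIntegral α (fun x => f fun i j => x i (σ j)) = weightedIntegral α f := by
  rw [weightedIntegral, weightedIntegral, ← integral_comp_permCols σ fun x =>
    (inducedQuatGinibreWeight n α x : ℂ) * f x]
  simp only [inducedQuatGinibreWeight_permCols]

lemma hasTemperateGrowth_laplaceTerm (T : Finset (Fin n)) (r p c : Fin n) :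
    (fun x => laplaceTerm T r p c (quatMatrix n x)).HasTemperateGrowth :=
  .sum fun _ _ => (hasTemperateGrowth_entry _ _).fun_mul <| hasTemperateGrowth_det <|
    hasTemperateGrowth_updateRow _
      (hasTemperateGrowth_updateRow _ (hasTemperateGrowth_keepRows _) (hasTemperateGrowth_entry _))
      fun _ => .const _

lemma weightedIntegral_laplaceTerm (α : ℝ) {T : Finset (Fin n)} {r p c : Fin n}
    {τ σ : Equiv.Perm (Fin n)} (hr : r ∉ T) (hT : ∀ a ∈ T, τ a = a)
    (hτσ : ∀ a ∉ T, a ≠ p → τ a = σ a) (hp : τ p = r) (hc : σ c = r) :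
    weightedIntegral α (fun x => laplaceTerm T r p c (quatMatrix n x))
      = weightedIntegral α fun x => laplaceTerm T r r r (quatMatrix n x) := by
  rw [← weightedIntegral_permCols α σ]
  simp only [quatMatrix_permCols, laplaceTerm_submatrix hr hT hτσ hp hc]

lemma weightedIntegral_laplaceTerm_diag (α : ℝ) {T : Finset (Fin n)} {r c : Fin n} (hr : r ∉ T)
    (hc : c ∉ T) :
    weightedIntegral α (fun x => laplaceTerm T r c c (quatMatrix n x))
      = weightedIntegral α fun x => laplaceTerm T r r r (quatMatrix n x) :=
  weightedIntegral_laplaceTerm α (τ := Equiv.swap c r) (σ := Equiv.swap c r) hr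
    (fun _ ha => Equiv.swap_apply_of_ne_of_ne (ne_of_mem_of_not_mem ha hc)
      (ne_of_mem_of_not_mem ha hr))
    (fun _ _ _ => rfl) (Equiv.swap_apply_left c r) (Equiv.swap_apply_left c r)

lemma weightedIntegral_laplaceTerm_of_mem (α : ℝ) {T : Finset (Fin n)} {r c : Fin n} (hr : r ∉ T)
    (hc : c ∈ T) :
    weightedIntegral α (fun x => laplaceTerm T r r c (quatMatrix n x))
      = weightedIntegral α fun x => laplaceTerm T r r r (quatMatrix n x) :=
  weightedIntegral_laplaceTerm α (τ := 1) (σ := Equiv.swap c r) hr (fun _ _ => rfl)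
    (fun _ ha har => (Equiv.swap_apply_of_ne_of_ne (ne_of_mem_of_not_mem hc ha).symm har).symm) rfl
    (Equiv.swap_apply_left c r)

end ColumnSymmetry

section Recursion

lemma weightedIntegral_det_keepRows_insert {α : ℝ} (hα : 0 ≤ α) {T : Finset (Fin n)} {r : Fin n}
    (hr : r ∉ T) :
    weightedIntegral α (fun x => (keepRows (blockRows (insert r T)) (quatMatrix n x)).det)
      = (T.card + 1) * weightedIntegral α fun x => laplaceTerm T r r r (quatMatrix n x) := by
  simp only [det_keepRows_insert]
  rw [weightedIntegral_sum hα _ fun c _ => hasTemperateGrowth_laplaceTerm T r r c,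
    ← Finset.sum_subset (Finset.subset_univ (insert r T)), Finset.sum_insert hr,
    Finset.sum_congr rfl fun c hc => weightedIntegral_laplaceTerm_of_mem α hr hc, Finset.sum_const,
    nsmul_eq_mul]
  · ring
  · intro c _ hc
    rw [Finset.mem_insert, not_or] at hc
    simp [laplaceTerm_eq_zero hc.2 hc.1, weightedIntegral]

lemma laplaceTerm_diag_quatMatrix {T : Finset (Fin n)} {c : Fin n} (hc : c ∉ T) (r : Fin n)
    (x : QuatEntries n) :
    laplaceTerm T r c c (quatMatrix n x)
      = ∑ i, conj (quatMatrix n x (r, 0) (c, i))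
        * ((keepRows (blockRows T) (quatMatrix n x)).updateRow (c, i) (quatMatrix n x (r, 0))).det
    := by
  rw [laplaceTerm_diag hc, Fin.sum_univ_two]
  simp

lemma card_compl_mul_weightedIntegral_laplaceTerm {α : ℝ} (hα : 0 ≤ α) {T : Finset (Fin n)}
    {r : Fin n} (hr : r ∉ T) :
    Tᶜ.card * weightedIntegral α (fun x => laplaceTerm T r r r (quatMatrix n x))
      = 2 * (Tᶜ.card + α)
        * weightedIntegral α fun x => (keepRows (blockRows T) (quatMatrix n x)).det := by
  have hne : ∀ a ∈ blockRows T, a.1 ≠ r := fun a ha =>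
    ne_of_mem_of_not_mem (Finset.mem_product.1 ha).1 hr
  have hcard : (n : ℂ) = T.card + Tᶜ.card := by
    exact_mod_cast (T.card_add_card_compl.trans (Fintype.card_fin n)).symm
  have growth (c i) : (fun x => conj (quatMatrix n x (r, 0) (c, i)) * ((keepRows (blockRows T)
      (quatMatrix n x)).updateRow (c, i) (quatMatrix n x (r, 0))).det).HasTemperateGrowth :=
    (hasTemperateGrowth_conj (hasTemperateGrowth_entry _ _)).fun_mul
      (hasTemperateGrowth_det_keepRows_updateRow _ _ _)
  have key := sum_weightedIntegral_conj_mul_det_keepRows_updateRow hα hne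
  rw [compl_blockRows, Finset.sum_product] at key
  simp only [← weightedIntegral_sum hα Finset.univ fun i _ => growth _ i] at key
  calc Tᶜ.card * weightedIntegral α (fun x => laplaceTerm T r r r (quatMatrix n x))
      = ∑ c ∈ Tᶜ, weightedIntegral α (fun x => laplaceTerm T r c c (quatMatrix n x)) := by
        rw [Finset.sum_congr rfl fun c hc =>
          weightedIntegral_laplaceTerm_diag α hr (Finset.mem_compl.1 hc), Finset.sum_const,
          nsmul_eq_mul]
    _ = (2 * (n + α) - (blockRows T).card)
        * weightedIntegral α fun x => (keepRows (blockRows T) (quatMatrix n x)).det := by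
        rw [← key]
        refine Finset.sum_congr rfl fun c hc => ?_
        simp only [laplaceTerm_diag_quatMatrix (Finset.mem_compl.1 hc)]
    _ = _ := by
        rw [Finset.card_product, Finset.card_univ, Fintype.card_fin, hcard]
        push_cast
        ring

lemma card_compl_mul_weightedIntegral_det_keepRows_insert {α : ℝ} (hα : 0 ≤ α)
    {T : Finset (Fin n)} {r : Fin n} (hr : r ∉ T) :
    Tᶜ.card * weightedIntegral α
        (fun x => (keepRows (blockRows (insert r T)) (quatMatrix n x)).det)
      = 2 * (T.card + 1) * (Tᶜ.card + α)
        * weightedIntegral α fun x => (keepRows (blockRows T) (quatMatrix n x)).det := by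
  rw [weightedIntegral_det_keepRows_insert hα hr, mul_left_comm,
    card_compl_mul_weightedIntegral_laplaceTerm hα hr]
  ring

lemma choose_mul_weightedIntegral_det_keepRows {α : ℝ} (hα : 0 ≤ α) (T : Finset (Fin n)) :
    n.choose T.card * (Real.Gamma ((Tᶜ.card : ℝ) + 1 + α) : ℂ)
        * weightedIntegral α (fun x => (keepRows (blockRows T) (quatMatrix n x)).det)
      = 2 ^ T.card * (Real.Gamma ((n : ℝ) + 1 + α) : ℂ)
        * weightedIntegral α fun _ : QuatEntries n => 1 := by
  induction T using Finset.induction_on with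
  | empty =>
    have keepRows_empty (x) : keepRows ∅ (quatMatrix n x) = 1 := by
      ext a b
      simp [keepRows_of_notMem, one_eq_pi_single]
    simp [keepRows_empty]
  | insert r T hr ih =>
    have recursion := card_compl_mul_weightedIntegral_det_keepRows_insert hα hr
    have hcard : Tᶜ.card = (insert r T)ᶜ.card + 1 := by
      rw [Finset.compl_insert, Finset.card_erase_add_one (Finset.mem_compl.2 hr)]
    have choose_succ : (n.choose (T.card + 1) : ℂ) * (T.card + 1) = n.choose T.card * Tᶜ.card := by
      have h := Nat.choose_succ_right_eq n T.card
      rw [show n - T.card = Tᶜ.card by rw [Finset.card_compl, Fintype.card_fin]] at h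
      exact_mod_cast h
    have gamma_succ : (Real.Gamma ((Tᶜ.card : ℝ) + 1 + α) : ℂ)
        = (Tᶜ.card + α) * (Real.Gamma (((insert r T)ᶜ.card : ℝ) + 1 + α) : ℂ) := by
      have hpos : (Tᶜ.card : ℝ) + α ≠ 0 := by
        rw [hcard]
        positivity
      rw [add_right_comm, Real.Gamma_add_one hpos, ofReal_mul, hcard]
      push_cast
      rfl
    rw [gamma_succ] at ih
    rw [Finset.card_insert_of_notMem hr, pow_succ]
    refine mul_left_cancel₀ (Nat.cast_add_one_ne_zero (R := ℂ) T.card) ?_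
    set g := (Real.Gamma (((insert r T)ᶜ.card : ℝ) + 1 + α) : ℂ)
    set E := weightedIntegral α fun x => (keepRows (blockRows (insert r T)) (quatMatrix n x)).det
    linear_combination (g * E) * choose_succ + (n.choose T.card * g) * recursion
      + 2 * ((T.card : ℂ) + 1) * ih

end Recursion

section CharacteristicPolynomial

lemma det_smul_one_sub_eq_sum_keepRows {R m : Type*} [Fintype m] [DecidableEq m] [CommRing R]
    (z : R) (G : Matrix m m R) :
    (z • (1 : Matrix m m R) - G).det
      = ∑ S : Finset m, (-1) ^ S.card * z ^ Sᶜ.card * (keepRows S G).det := by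
  have expand := MultilinearMap.map_add_univ
    (detRowAlternating (R := R) (n := m)).toMultilinearMap
    (fun a => -G a) fun a => z • Pi.single a 1
  have hsplit : z • (1 : Matrix m m R) - G = (fun a => -G a) + fun a => z • Pi.single a 1 := by
    ext a b
    change z * (1 : Matrix m m R) a b - G a b = -G a b + z * (Pi.single a 1 : m → R) b
    rw [one_eq_pi_single, sub_eq_neg_add]
  rw [hsplit]
  refine expand.trans (Finset.sum_congr rfl fun S _ => ?_)
  have hrows : S.piecewise (fun a => -G a) (fun a => z • Pi.single a 1)
      = of fun a b => (if a ∈ S then -1 else z) * keepRows S G a b := by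
    funext a b
    by_cases ha : a ∈ S <;> simp [ha, keepRows]
  have hprod : ∏ a, (if a ∈ S then -1 else z) = (-1) ^ S.card * z ^ Sᶜ.card := by
    simp [Finset.prod_ite, Finset.filter_notMem_eq_sdiff,
      Finset.compl_eq_univ_sdiff]
  rw [← hprod, ← det_mul_column, ← hrows]
  rfl

/-- A row set which is not a union of blocks has a row whose partner is missing, so only unions of
blocks contribute. -/
lemma weightedIntegral_det_smul_one_sub {α : ℝ} (hα : 0 ≤ α) (z : ℂ) :
    weightedIntegral α
        (fun x => (z • (1 : Matrix (Fin n × Fin 2) (Fin n × Fin 2) ℂ) - quatMatrix n x).det)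
      = ∑ T : Finset (Fin n), z ^ (2 * Tᶜ.card)
        * weightedIntegral α fun x => (keepRows (blockRows T) (quatMatrix n x)).det := by
  simp only [det_smul_one_sub_eq_sum_keepRows]
  rw [weightedIntegral_sum hα _ fun S _ =>
    (Function.HasTemperateGrowth.const _).fun_mul (hasTemperateGrowth_det_keepRows S)]
  simp only [weightedIntegral_const_mul]
  refine (Finset.sum_of_injOn blockRows ?_ (by simp) ?_ ?_).symm
  · intro T _ T' _ h
    ext r
    simpa using Finset.ext_iff.1 h (r, 0)
  · intro S _ hS
    obtain ⟨a, ha, hunique⟩ : ∃ a ∈ S, ∀ b ∈ S, b.1 = a.1 → b = a := by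
      contrapose! hS
      obtain ⟨T, hT⟩ := exists_blockRows_eq hS
      exact ⟨T, by simp, hT⟩
    rw [weightedIntegral_det_keepRows_eq_zero hα ha hunique, mul_zero]
  · intro T _
    have card_blockRows (U : Finset (Fin n)) : (blockRows U).card = 2 * U.card := by
      rw [Finset.card_product, Finset.card_univ, Fintype.card_fin, mul_comm]
    rw [compl_blockRows, card_blockRows, card_blockRows, pow_mul (-1), neg_one_sq, one_pow, one_mul]

lemma weightedIntegral_det_smul_one_sub_eq {α : ℝ} (hα : 0 ≤ α) (z : ℂ) :
    weightedIntegral α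
        (fun x => (z • (1 : Matrix (Fin n × Fin 2) (Fin n × Fin 2) ℂ) - quatMatrix n x).det)
      = 2 ^ n * (Real.Gamma ((n : ℝ) + 1 + α) : ℂ) *
          (∑ l ∈ Finset.range (n + 1),
            z ^ (2 * l) / (2 ^ l * (Real.Gamma ((l : ℝ) + 1 + α) : ℂ)))
        * weightedIntegral α fun _ : QuatEntries n => 1 := by
  set Z := weightedIntegral α fun _ : QuatEntries n => 1 with hZ
  have gamma_ne_zero (l : ℕ) : (Real.Gamma ((l : ℝ) + 1 + α) : ℂ) ≠ 0 :=
    ofReal_ne_zero.2 (Real.Gamma_pos_of_pos (by positivity)).ne'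
  have choose_ne_zero {k : ℕ} (hk : k ≤ n) : (n.choose k : ℂ) ≠ 0 :=
    Nat.cast_ne_zero.2 (Nat.choose_pos hk).ne'
  have minor_compl (T : Finset (Fin n)) :
      weightedIntegral α (fun x => (keepRows (blockRows Tᶜ) (quatMatrix n x)).det)
        = 2 ^ (n - T.card) * (Real.Gamma ((n : ℝ) + 1 + α) : ℂ) * Z
          / (n.choose T.card * (Real.Gamma ((T.card : ℝ) + 1 + α) : ℂ)) := by
    have hT : T.card ≤ n := by simpa using T.card_le_univ
    have h := choose_mul_weightedIntegral_det_keepRows hα Tᶜ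
    rw [compl_compl, Finset.card_compl, Fintype.card_fin, Nat.choose_symm hT, ← hZ] at h
    exact eq_div_of_mul_eq (mul_ne_zero (choose_ne_zero hT) (gamma_ne_zero _))
      ((mul_comm _ _).trans h)
  rw [weightedIntegral_det_smul_one_sub hα, ← compl_involutive.bijective.sum_comp]
  simp only [compl_compl, minor_compl]
  rw [← Finset.powerset_univ, Finset.sum_powerset_apply_card fun k => z ^ (2 * k)
      * (2 ^ (n - k) * (Real.Gamma ((n : ℝ) + 1 + α) : ℂ) * Z
        / (n.choose k * (Real.Gamma ((k : ℝ) + 1 + α) : ℂ))),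
    Finset.card_univ, Fintype.card_fin, Finset.mul_sum, Finset.sum_mul]
  refine Finset.sum_congr rfl fun k hk => ?_
  have hkn : k ≤ n := Nat.lt_succ_iff.1 (Finset.mem_range.1 hk)
  have := choose_ne_zero hkn
  have := gamma_ne_zero k
  have two_pow : (2 : ℂ) ^ n = 2 ^ (n - k) * 2 ^ k := by rw [← pow_add, Nat.sub_add_cancel hkn]
  rw [nsmul_eq_mul, two_pow]
  field_simp

end CharacteristicPolynomial

section Normalization

lemma continuous_inducedQuatGinibreWeight {α : ℝ} (hα : 0 ≤ α) :
    Continuous (inducedQuatGinibreWeight n α) := by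
  have hdet := (continuous_normSq.comp continuous_quatMatrix.matrix_det).rpow_const
    fun x : QuatEntries n => Or.inr hα
  simp only [funext (inducedQuatGinibreWeight_eq (n := n) α)]
  exact hdet.mul (Real.continuous_exp.comp continuous_energy.neg)

lemma inducedQuatGinibreWeight_nonneg (α : ℝ) (x : QuatEntries n) :
    0 ≤ inducedQuatGinibreWeight n α x := by
  rw [inducedQuatGinibreWeight_eq]
  have := normSq_nonneg (quatMatrix n x).det
  positivity

lemma integral_inducedQuatGinibreWeight_pos (n : ℕ) {α : ℝ} (hα : 0 ≤ α) :
    0 < ∫ x : QuatEntries n, inducedQuatGinibreWeight n α x := by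
  have hintegrable : Integrable (inducedQuatGinibreWeight n α) := by
    simpa using (integrable_weight_mul hα (Function.HasTemperateGrowth.const (1 : ℂ))).re
  set identity : QuatEntries n := fun i j => if i = j then (1, 0) else 0
  have hone : quatMatrix n identity = 1 := by
    ext ⟨a, i⟩ ⟨b, j⟩
    by_cases hab : a = b <;> fin_cases i <;> fin_cases j <;>
      simp [identity, quatMatrix, one_apply, hab]
  refine (integral_pos_iff_support_of_nonneg (inducedQuatGinibreWeight_nonneg α) hintegrable).2
    ((continuous_inducedQuatGinibreWeight hα).isOpen_support.measure_pos _ ⟨identity, ?_⟩)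
  simp [inducedQuatGinibreWeight, hone, Real.exp_ne_zero]

end Normalization

end QuatGinibre

/-- The even-degree skew orthogonal polynomial for the induced quaternion real Ginibre
ensemble: `⟨det (z I - G)⟩ = 2^n Γ(n+1+α) ∑_{l=0}^{n} z^{2l} / (2^l Γ(l+1+α))`. -/
theorem inducedQuatGinibre_even_skew_orthogonal_poly (n : ℕ) (hn : 0 < n)
    (α : ℝ) (hα : 0 ≤ α) (z : ℂ) :
    (∫ x : Fin n → Fin n → ℂ × ℂ,
        (inducedQuatGinibreWeight n α x : ℂ) *
          (z • (1 : Matrix (Fin n × Fin 2) (Fin n × Fin 2) ℂ) - quatMatrix n x).det) /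
      ((∫ x : Fin n → Fin n → ℂ × ℂ, inducedQuatGinibreWeight n α x : ℝ) : ℂ)
      = 2 ^ n * (Real.Gamma ((n : ℝ) + 1 + α) : ℂ) *
          ∑ l ∈ Finset.range (n + 1),
            z ^ (2 * l) / (2 ^ l * (Real.Gamma ((l : ℝ) + 1 + α) : ℂ)) := by
  have hZ : ((∫ x : Fin n → Fin n → ℂ × ℂ, inducedQuatGinibreWeight n α x : ℝ) : ℂ) ≠ 0 :=
    Complex.ofReal_ne_zero.2 (QuatGinibre.integral_inducedQuatGinibreWeight_pos n hα).ne'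
  have hexpand := QuatGinibre.weightedIntegral_det_smul_one_sub_eq (n := n) hα z
  simp only [QuatGinibre.weightedIntegral, mul_one] at hexpand
  rw [div_eq_iff hZ, hexpand, integral_complex_ofReal]
end

section
/- Let n be a positive integer and let α ≥ 0 be a real number. For G drawn from the induced quaternion real Ginibre ensemble of size 2n with parameter α, and for every complex number z, z·⟨det(z·I − G)⟩ + ⟨det(z·I − G)·Tr(G)⟩ = z^{2n+1}; that is, the odd-degree skew orthogonal polynomial for the induced quaternion real Ginibre ensemble is the monomial Q_{2n+1}(z) = z^{2n+1}. -/
open MeasureTheory Matrix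

/-!
Expand `det (z + G)` into principal minors of `G`, indexed by the set `T` of rows taken from `G`,
and each minor into cofactors along a row of `T`. The product of a minor with a diagonal entry of
`G` then either contains a row of `G` twice or is a diagonal cofactor term of a larger minor.

The weight is invariant under left multiplication of `G` by the compact symplectic group `Sp(n)`,
and four kinds of elements suffice. The quaternion unit `I` acting in one row of blocks kills the
terms with a repeated row, and also the minors in which some block has only one of its two rows. The
unit `J` and the permutations of blocks show that the rows of any other minor play the same role, so
that its diagonal cofactor terms have the same total expectation as the minor itself. Hence
`⟨det (z + G) Tr G⟩ = z (⟨det (z + G)⟩ - z ^ (2n))`, and the element `-1` turns `z + G` into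
`z - G`.
-/

section Cofactors

variable {ι R : Type*} {T : Finset ι} {r l c : ι}

lemma apply_mem_of_fixed_off {σ : Equiv.Perm ι} (hσ : ∀ r ∉ T, σ r = r) (hr : r ∈ T) :
    σ r ∈ T := by
  by_contra h
  exact h (by rwa [σ.injective (hσ _ h)])

variable [DecidableEq ι] [CommRing R] {z : R}

/-- The matrix whose rows indexed by `T` are those of `G`, the others being those of `z • 1`; its
determinant is `z ^ #Tᶜ` times the principal minor of `G` on `T`. -/
def mixedRows (z : R) (T : Finset ι) (G : Matrix ι ι R) : Matrix ι ι R :=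
  T.piecewise G (z • 1 : Matrix ι ι R)

lemma mixedRows_of_mem (G : Matrix ι ι R) (hr : r ∈ T) : mixedRows z T G r = G r :=
  Finset.piecewise_eq_of_mem _ _ _ hr

lemma mixedRows_of_notMem (G : Matrix ι ι R) (hr : r ∉ T) :
    mixedRows z T G r = z • Pi.single r 1 := by
  refine (Finset.piecewise_eq_of_notMem _ _ _ hr).trans (funext fun c => ?_)
  simp [one_apply, Pi.single_apply, eq_comm]

lemma mixedRows_empty (G : Matrix ι ι R) : mixedRows z ∅ G = z • 1 :=
  Finset.piecewise_empty _ _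

variable [Fintype ι]

/-- The monomial matrix whose row `r` has the single nonzero entry `u r`, in column `σ r`. -/
def monomialMatrix (u : ι → R) (σ : Equiv.Perm ι) : Matrix ι ι R :=
  diagonal u * σ.permMatrix R

lemma monomialMatrix_apply (u : ι → R) (σ : Equiv.Perm ι) (r c : ι) :
    monomialMatrix u σ r c = if σ r = c then u r else 0 := by
  simp [monomialMatrix, diagonal_mul, PEquiv.toMatrix_apply, eq_comm]

lemma monomialMatrix_mul_apply (u : ι → R) (σ : Equiv.Perm ι) (M : Matrix ι ι R) (r c : ι) :
    (monomialMatrix u σ * M) r c = u r * M (σ r) c := by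
  simp [mul_apply, monomialMatrix_apply]

lemma mul_monomialMatrix_apply (u : ι → R) (σ : Equiv.Perm ι) (M : Matrix ι ι R) (r c : ι) :
    (M * monomialMatrix u σ) r (σ c) = M r c * u c := by
  simp [mul_apply, monomialMatrix_apply]

lemma det_monomialMatrix (u : ι → R) (σ : Equiv.Perm ι) :
    (monomialMatrix u σ).det = (∏ r, u r) * (Equiv.Perm.sign σ : ℤ) := by
  rw [monomialMatrix, det_mul, det_diagonal, det_permutation]

lemma monomialMatrix_mul_apply_mul_adjugate (u : ι → R) (σ : Equiv.Perm ι) (M : Matrix ι ι R)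
    (l c : ι) :
    (monomialMatrix u σ * M) l c * adjugate (monomialMatrix u σ * M) c l =
      (monomialMatrix u σ).det * (M (σ l) c * adjugate M c (σ l)) := by
  have hadj (k : ι) : u l * adjugate (monomialMatrix u σ) k l =
      (monomialMatrix u σ).det * (1 : Matrix ι ι R) k (σ l) := by
    rw [mul_comm, ← mul_monomialMatrix_apply, adjugate_mul, Matrix.smul_apply, smul_eq_mul]
  rw [monomialMatrix_mul_apply, adjugate_mul_distrib, mul_apply, Finset.mul_sum,
    Finset.sum_eq_single (σ l)]
  · have h := hadj (σ l)
    rw [one_apply_eq] at h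
    linear_combination M (σ l) c * adjugate M c (σ l) * h
  · intro k _ hk
    have h := hadj k
    rw [one_apply_ne hk] at h
    linear_combination M (σ l) c * adjugate M c k * h
  · simp

lemma det_smul_one_add (z : R) (G : Matrix ι ι R) :
    (z • (1 : Matrix ι ι R) + G).det = ∑ T : Finset ι, (mixedRows z T G).det := by
  rw [add_comm]
  exact (detRowAlternating (n := ι) (R := R)).toMultilinearMap.map_add_univ G
    (z • (1 : Matrix ι ι R))

lemma mixedRows_monomialMatrix_mul (u : ι → R) {σ : Equiv.Perm ι} (hσ : ∀ r ∉ T, σ r = r)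
    (G : Matrix ι ι R) :
    mixedRows z T (monomialMatrix u σ * G) =
      monomialMatrix (fun r => if r ∈ T then u r else 1) σ * mixedRows z T G := by
  ext r c
  rw [monomialMatrix_mul_apply]
  by_cases hr : r ∈ T
  · rw [mixedRows_of_mem _ hr, mixedRows_of_mem _ (apply_mem_of_fixed_off hσ hr),
      monomialMatrix_mul_apply, if_pos hr]
  · rw [mixedRows_of_notMem _ hr, hσ r hr, mixedRows_of_notMem _ hr, if_neg hr, one_mul]

lemma det_mixedRows_monomialMatrix_mul (u : ι → R) {σ : Equiv.Perm ι} (hσ : ∀ r ∉ T, σ r = r)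
    (G : Matrix ι ι R) :
    (mixedRows z T (monomialMatrix u σ * G)).det =
      (∏ r ∈ T, u r) * (Equiv.Perm.sign σ : ℤ) * (mixedRows z T G).det := by
  rw [mixedRows_monomialMatrix_mul u hσ, det_mul, det_monomialMatrix, Finset.prod_ite_mem,
    Finset.univ_inter]

lemma adjugate_mixedRows_of_notMem (hl : l ∈ T) (hc : c ∉ T) (G : Matrix ι ι R) :
    adjugate (mixedRows z T G) c l = 0 := by
  have hcl : c ≠ l := fun h => hc (h ▸ hl)
  rw [adjugate_apply, ← det_updateRow_add_smul_self _ hcl (-z)]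
  refine det_eq_zero_of_row_eq_zero c fun k => ?_
  simp [hcl, mixedRows_of_notMem G hc]

/-- The term of column `c` in the cofactor expansion of `det (mixedRows z T G)` along a row
`l ∈ T`. -/
def cofactorTerm (z : R) (T : Finset ι) (l c : ι) (G : Matrix ι ι R) : R :=
  G l c * adjugate (mixedRows z T G) c l

lemma sum_cofactorTerm (hl : l ∈ T) (G : Matrix ι ι R) :
    ∑ c ∈ T, cofactorTerm z T l c G = (mixedRows z T G).det := by
  calc ∑ c ∈ T, cofactorTerm z T l c G = ∑ c, cofactorTerm z T l c G :=
        Finset.sum_subset (Finset.subset_univ T) fun c _ hc => by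
          rw [cofactorTerm, adjugate_mixedRows_of_notMem hl hc, mul_zero]
    _ = (mixedRows z T G * adjugate (mixedRows z T G)) l l := by
        simp only [mul_apply, cofactorTerm, mixedRows_of_mem G hl]
    _ = (mixedRows z T G).det := by simp [mul_adjugate]

lemma cofactorTerm_monomialMatrix_mul (u : ι → R) {σ : Equiv.Perm ι} (hσ : ∀ r ∉ T, σ r = r)
    (hl : l ∈ T) (G : Matrix ι ι R) :
    cofactorTerm z T l c (monomialMatrix u σ * G) =
      (∏ r ∈ T, u r) * (Equiv.Perm.sign σ : ℤ) * cofactorTerm z T (σ l) c G := by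
  rw [cofactorTerm, cofactorTerm, ← mixedRows_of_mem (z := z) (monomialMatrix u σ * G) hl,
    mixedRows_monomialMatrix_mul u hσ, monomialMatrix_mul_apply_mul_adjugate, det_monomialMatrix,
    Finset.prod_ite_mem, Finset.univ_inter, mixedRows_of_mem G (apply_mem_of_fixed_off hσ hl)]

lemma det_mixedRows_mul_apply (hc : c ∉ T) (G : Matrix ι ι R) :
    (mixedRows z T G).det * G c c = z * cofactorTerm z (insert c T) c c G := by
  have hrow : mixedRows z T G =
      (mixedRows z (insert c T) G).updateRow c (z • Pi.single c 1) := by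
    rw [← mixedRows_of_notMem G hc]
    funext r
    rcases eq_or_ne r c with rfl | hr
    · rw [updateRow_self]
    · rw [updateRow_ne hr]
      simp [mixedRows, Finset.piecewise, hr]
  rw [hrow, det_updateRow_smul, ← adjugate_apply, cofactorTerm]
  ring

lemma det_smul_one_add_mul_trace (z : R) (G : Matrix ι ι R) :
    (z • (1 : Matrix ι ι R) + G).det * G.trace =
      ∑ T, ∑ c ∈ T, ((mixedRows z T G).det * G c c + z * cofactorTerm z T c c G) := by
  have hcol (c : ι) : ∑ T with c ∉ T, (mixedRows z T G).det * G c c =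
      ∑ T with c ∈ T, z * cofactorTerm z T c c G :=
    Finset.sum_nbij' (insert c) (fun T => T.erase c) (by simp) (by simp)
      (fun T hT => Finset.erase_insert (Finset.mem_filter.1 hT).2)
      (fun T hT => Finset.insert_erase (Finset.mem_filter.1 hT).2)
      (fun T hT => det_mixedRows_mul_apply (Finset.mem_filter.1 hT).2 G)
  calc (z • (1 : Matrix ι ι R) + G).det * G.trace
      = ∑ c, ∑ T, (mixedRows z T G).det * G c c := by
        simp only [det_smul_one_add, trace, diag_apply, Finset.mul_sum, Finset.sum_mul]
    _ = ∑ c, ∑ T with c ∈ T, ((mixedRows z T G).det * G c c + z * cofactorTerm z T c c G) := by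
        refine Finset.sum_congr rfl fun c _ => ?_
        rw [← Finset.sum_filter_add_sum_filter_not Finset.univ (fun T => c ∈ T), hcol,
          Finset.sum_add_distrib]
    _ = _ := Finset.sum_comm' (by simp)

end Cofactors

section Moments

lemma det_mem_subalgebra {Ω ι R : Type*} [Fintype ι] [DecidableEq ι] [CommRing R]
    {S : Subalgebra R (Ω → R)} {M : Ω → Matrix ι ι R} (hM : ∀ r c, (fun ω => M ω r c) ∈ S) :
    (fun ω => (M ω).det) ∈ S := by
  have hdet : (fun ω => (M ω).det) = ∑ σ : Equiv.Perm ι,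
      ((Equiv.Perm.sign σ : ℤ) : R) • ∏ i, fun ω => M ω (σ i) i := by
    ext ω
    simp [det_apply']
  rw [hdet]
  exact sum_mem fun σ _ => S.smul_mem (prod_mem fun i _ => hM _ _) _

variable {Ω : Type*} [MeasurableSpace Ω] {μ : Measure Ω} [IsFiniteMeasure μ]

/-- The algebra of complex random variables all of whose moments are finite. -/
def finiteMoments (μ : Measure Ω) [IsFiniteMeasure μ] : Subalgebra ℂ (Ω → ℂ) where
  carrier := {f | ∀ p : ℕ, MemLp f p μ}
  mul_mem' := fun hf hg p => by
    have : ENNReal.HolderTriple (2 * p : ℕ) (2 * p : ℕ) p := ⟨by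
      rw [Nat.cast_mul, ENNReal.mul_inv (by simp) (by simp), ← add_mul, Nat.cast_ofNat,
        ENNReal.inv_two_add_inv_two, one_mul]⟩
    exact (hg (2 * p)).mul (hf (2 * p))
  add_mem' := fun hf hg p => (hf p).add (hg p)
  algebraMap_mem' := fun a _ => memLp_const a

lemma integrable_of_mem_finiteMoments {f : Ω → ℂ} (hf : f ∈ finiteMoments μ) :
    Integrable f μ := memLp_one_iff_integrable.1 (mod_cast hf 1)

lemma const_mem_finiteMoments (a : ℂ) : (fun _ => a) ∈ finiteMoments μ :=
  (finiteMoments μ).algebraMap_mem a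

variable {ι : Type*} [DecidableEq ι] {G : Ω → Matrix ι ι ℂ}

lemma mixedRows_apply_mem_finiteMoments (hG : ∀ r c, (fun ω => G ω r c) ∈ finiteMoments μ) (z : ℂ)
    (T : Finset ι) (r c : ι) : (fun ω => mixedRows z T (G ω) r c) ∈ finiteMoments μ := by
  by_cases hr : r ∈ T
  · simpa only [mixedRows_of_mem _ hr] using hG r c
  · simpa only [mixedRows_of_notMem _ hr] using const_mem_finiteMoments _

lemma det_mixedRows_mem_finiteMoments [Fintype ι]
    (hG : ∀ r c, (fun ω => G ω r c) ∈ finiteMoments μ) (z : ℂ) (T : Finset ι) :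
    (fun ω => (mixedRows z T (G ω)).det) ∈ finiteMoments μ :=
  det_mem_subalgebra (mixedRows_apply_mem_finiteMoments hG z T)

lemma cofactorTerm_mem_finiteMoments [Fintype ι]
    (hG : ∀ r c, (fun ω => G ω r c) ∈ finiteMoments μ) (z : ℂ) (T : Finset ι) (l c : ι) :
    (fun ω => cofactorTerm z T l c (G ω)) ∈ finiteMoments μ := by
  refine mul_mem (hG l c) ?_
  simp only [adjugate_apply]
  refine det_mem_subalgebra fun r k => ?_
  simp only [updateRow_apply]
  split_ifs
  · exact const_mem_finiteMoments _
  · exact mixedRows_apply_mem_finiteMoments hG z T r k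

end Moments

section QuatUnitary

variable {n : ℕ}

lemma mem_range_quatMatrix_iff {M : Matrix (Fin n × Fin 2) (Fin n × Fin 2) ℂ} :
    M ∈ Set.range (quatMatrix n) ↔ ∀ j k, M (j, 1) (k, 0) = -star (M (j, 0) (k, 1)) ∧
      M (j, 1) (k, 1) = star (M (j, 0) (k, 0)) := by
  constructor
  · rintro ⟨x, rfl⟩ j k
    simp [quatMatrix]
  · intro h
    refine ⟨fun j k => (M (j, 0) (k, 0), M (j, 0) (k, 1)), ?_⟩
    ext ⟨j, a⟩ ⟨k, b⟩
    fin_cases a <;> fin_cases b <;> simp [quatMatrix, h j k]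

lemma mul_mem_range_quatMatrix {M N : Matrix (Fin n × Fin 2) (Fin n × Fin 2) ℂ}
    (hM : M ∈ Set.range (quatMatrix n)) (hN : N ∈ Set.range (quatMatrix n)) :
    M * N ∈ Set.range (quatMatrix n) := by
  rw [mem_range_quatMatrix_iff] at hM hN ⊢
  intro j k
  simp [mul_apply, Fintype.sum_prod_type, hM j _, hN _ k, ← Finset.sum_neg_distrib, add_comm]

lemma conjTranspose_mem_range_quatMatrix {M : Matrix (Fin n × Fin 2) (Fin n × Fin 2) ℂ}
    (hM : M ∈ Set.range (quatMatrix n)) : Mᴴ ∈ Set.range (quatMatrix n) := by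
  rw [mem_range_quatMatrix_iff] at hM ⊢
  intro j k
  simp [hM k j]

/-- The group `Sp(n)` of quaternionic unitary matrices, in its complex `2n × 2n` form. -/
def quatUnitary (n : ℕ) : Set (Matrix (Fin n × Fin 2) (Fin n × Fin 2) ℂ) :=
  unitaryGroup (Fin n × Fin 2) ℂ ∩ Set.range (quatMatrix n)

lemma monomialMatrix_mem_unitaryGroup {ι : Type*} [Fintype ι] [DecidableEq ι] {u : ι → ℂ}
    (hu : ∀ r, ‖u r‖ = 1) (σ : Equiv.Perm ι) : monomialMatrix u σ ∈ unitaryGroup ι ℂ := by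
  refine mul_mem (mem_unitaryGroup_iff'.2 ?_) (mem_unitaryGroup_iff'.2 ?_)
  · rw [star_eq_conjTranspose, diagonal_conjTranspose, diagonal_mul_diagonal, ← diagonal_one]
    congr 1
    ext r
    simp [← Complex.normSq_eq_conj_mul_self, Complex.normSq_eq_norm_sq, hu]
  · rw [star_eq_conjTranspose, conjTranspose_permMatrix]
    simp [← Matrix.permMatrix_mul]

/-- The phases of left multiplication by the quaternion unit `I` in the `i`-th row of blocks. -/
noncomputable def blockPhase (i : Fin n) (r : Fin n × Fin 2) : ℂ :=
  if r.1 = i then (if r.2 = 0 then Complex.I else -Complex.I) else 1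

/-- The signs of left multiplication by the quaternion unit `J` in the `i`-th row of blocks; the
two scalar rows of this block row are exchanged as well. -/
noncomputable def blockSign (i : Fin n) (r : Fin n × Fin 2) : ℂ :=
  if r = (i, 1) then -1 else 1

/-- The exchange of the `i`-th and the `j`-th rows of blocks. -/
def blockSwap (i j : Fin n) : Equiv.Perm (Fin n × Fin 2) :=
  Equiv.swap (i, 0) (j, 0) * Equiv.swap (i, 1) (j, 1)

lemma blockSwap_apply (i j : Fin n) (r : Fin n × Fin 2) :
    blockSwap i j r = (Equiv.swap i j r.1, r.2) := by
  obtain ⟨k, a⟩ := r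
  fin_cases a <;> by_cases hi : k = i <;> by_cases hj : k = j <;>
    simp [blockSwap, Equiv.swap_apply_def, hi, hj]

lemma sign_blockSwap (i j : Fin n) : Equiv.Perm.sign (blockSwap i j) = 1 := by
  by_cases hij : i = j <;> simp [blockSwap, Equiv.Perm.sign_swap', hij]

lemma prod_blockPhase (i : Fin n) (T : Finset (Fin n × Fin 2)) :
    ∏ r ∈ T, blockPhase i r =
      (if (i, 0) ∈ T then Complex.I else 1) * (if (i, 1) ∈ T then -Complex.I else 1) := by
  rw [← Finset.univ_inter T, ← Finset.prod_ite_mem, Fintype.prod_prod_type,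
    Finset.prod_eq_single i]
  · simp [Fin.prod_univ_two, blockPhase]
  · intro k _ hk
    simp [blockPhase, hk]
  · simp

lemma monomialMatrix_blockPhase_mem_quatUnitary (i : Fin n) :
    monomialMatrix (blockPhase i) 1 ∈ quatUnitary n := by
  refine ⟨monomialMatrix_mem_unitaryGroup (fun r => ?_) 1,
    mem_range_quatMatrix_iff.2 fun j k => ?_⟩
  · unfold blockPhase
    split_ifs <;> simp
  · rcases eq_or_ne j i with rfl | hj <;> rcases eq_or_ne j k with rfl | hk <;>
      simp [monomialMatrix_apply, blockPhase, *]

lemma monomialMatrix_blockSign_mem_quatUnitary (i : Fin n) :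
    monomialMatrix (blockSign i) (Equiv.swap (i, 0) (i, 1)) ∈ quatUnitary n := by
  refine ⟨monomialMatrix_mem_unitaryGroup (fun r => ?_) _,
    mem_range_quatMatrix_iff.2 fun j k => ?_⟩
  · unfold blockSign
    split_ifs <;> simp
  · rcases eq_or_ne j i with rfl | hj <;> rcases eq_or_ne j k with rfl | hk <;>
      simp [monomialMatrix_apply, blockSign, Equiv.swap_apply_def, *]

lemma monomialMatrix_blockSwap_mem_quatUnitary (i j : Fin n) :
    monomialMatrix 1 (blockSwap i j) ∈ quatUnitary n := by
  refine ⟨monomialMatrix_mem_unitaryGroup (by simp) _, mem_range_quatMatrix_iff.2 fun k l => ?_⟩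
  by_cases hk : Equiv.swap i j k = l <;> simp [monomialMatrix_apply, blockSwap_apply, hk]

lemma neg_one_mem_quatUnitary (n : ℕ) :
    (-1 : Matrix (Fin n × Fin 2) (Fin n × Fin 2) ℂ) ∈ quatUnitary n := by
  refine ⟨mem_unitaryGroup_iff.2 (by simp), mem_range_quatMatrix_iff.2 fun j k => ?_⟩
  by_cases hjk : j = k <;> simp [one_apply, hjk]

end QuatUnitary

section LeftInvariant

/-- The law of the random matrix `G` is invariant under left multiplication by the elements of `S`.
As `Matrix` carries no σ-algebra in Mathlib, laws are compared through continuous functions. -/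
def IsLeftInvariant {Ω ι : Type*} [Fintype ι] [MeasurableSpace Ω] (S : Set (Matrix ι ι ℂ))
    (G : Ω → Matrix ι ι ℂ) (P : Measure Ω) : Prop :=
  ∀ U ∈ S, ∀ f : Matrix ι ι ℂ → ℂ, Continuous f → ∫ ω, f (U * G ω) ∂P = ∫ ω, f (G ω) ∂P

lemma IsLeftInvariant.integral_eq_zero {Ω ι : Type*} [Fintype ι] [MeasurableSpace Ω]
    {S : Set (Matrix ι ι ℂ)} {G : Ω → Matrix ι ι ℂ} {P : Measure Ω} (hG : IsLeftInvariant S G P)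
    {U : Matrix ι ι ℂ} (hU : U ∈ S) {f : Matrix ι ι ℂ → ℂ} (hf : Continuous f) {a : ℂ} (ha : a ≠ 1)
    (h : ∀ M, f (U * M) = a * f M) : ∫ ω, f (G ω) ∂P = 0 := by
  have hfix := hG U hU f hf
  simp only [h, integral_const_mul] at hfix
  exact (mul_left_eq_self₀.1 hfix).resolve_left ha

section Continuity

variable {ι R : Type*} [DecidableEq ι] [CommRing R] [TopologicalSpace R]

lemma continuous_mixedRows (z : R) (T : Finset ι) : Continuous (mixedRows z T) := by
  refine continuous_matrix fun r c => ?_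
  by_cases hr : r ∈ T
  · simpa only [mixedRows_of_mem _ hr, id_eq] using continuous_id.matrix_elem r c
  · simpa only [mixedRows_of_notMem _ hr] using continuous_const

lemma continuous_cofactorTerm [IsTopologicalRing R] [Fintype ι] (z : R) (T : Finset ι)
    (l c : ι) : Continuous (cofactorTerm z T l c) :=
  (continuous_id.matrix_elem l c).mul ((continuous_mixedRows z T).matrix_adjugate.matrix_elem c l)

end Continuity

variable {n : ℕ} {Ω : Type*} [MeasurableSpace Ω] {P : Measure Ω}
  {G : Ω → Matrix (Fin n × Fin 2) (Fin n × Fin 2) ℂ} {T : Finset (Fin n × Fin 2)}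
  {c l l' : Fin n × Fin 2}

lemma integral_det_mixedRows_mul_apply (hG : IsLeftInvariant (quatUnitary n) G P) (z : ℂ)
    (hc : c ∈ T) : ∫ ω, (mixedRows z T (G ω)).det * G ω c c ∂P = 0 := by
  refine hG.integral_eq_zero (monomialMatrix_blockPhase_mem_quatUnitary c.1)
    (f := fun M => (mixedRows z T M).det * M c c)
    (a := (∏ r ∈ T, blockPhase c.1 r) * blockPhase c.1 c)
    ((continuous_mixedRows z T).matrix_det.mul (continuous_id.matrix_elem c c)) ?_ fun M => ?_
  · obtain ⟨i, s⟩ := c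
    rw [prod_blockPhase]
    fin_cases s
    · replace hc : (i, 0) ∈ T := hc
      by_cases h : (i, 1) ∈ T <;> norm_num [hc, h, blockPhase, Complex.ext_iff]
    · replace hc : (i, 1) ∈ T := hc
      by_cases h : (i, 0) ∈ T <;> norm_num [hc, h, blockPhase, Complex.ext_iff]
  · rw [det_mixedRows_monomialMatrix_mul _ (by simp), monomialMatrix_mul_apply,
      Equiv.Perm.sign_one, Equiv.Perm.one_apply, Units.val_one, Int.cast_one]
    ring

lemma integral_cofactorTerm_eq_zero (hG : IsLeftInvariant (quatUnitary n) G P) (z : ℂ) {i : Fin n}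
    (hi : ¬((i, 0) ∈ T ↔ (i, 1) ∈ T)) (hl : l ∈ T) :
    ∫ ω, cofactorTerm z T l c (G ω) ∂P = 0 := by
  refine hG.integral_eq_zero (monomialMatrix_blockPhase_mem_quatUnitary i)
    (continuous_cofactorTerm z T l c) (a := ∏ r ∈ T, blockPhase i r) ?_ fun M => ?_
  · rw [prod_blockPhase]
    by_cases h0 : (i, 0) ∈ T <;> by_cases h1 : (i, 1) ∈ T <;> simp_all [Complex.ext_iff]
  · rw [cofactorTerm_monomialMatrix_mul _ (by simp) hl]
    simp

lemma integral_cofactorTerm_perm (hG : IsLeftInvariant (quatUnitary n) G P) (z : ℂ)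
    {u : Fin n × Fin 2 → ℂ} {σ : Equiv.Perm (Fin n × Fin 2)}
    (hU : monomialMatrix u σ ∈ quatUnitary n) (hσ : ∀ r ∉ T, σ r = r)
    (hdet : (∏ r ∈ T, u r) * (Equiv.Perm.sign σ : ℤ) = 1) (hl : l ∈ T) :
    ∫ ω, cofactorTerm z T (σ l) c (G ω) ∂P = ∫ ω, cofactorTerm z T l c (G ω) ∂P := by
  rw [← hG _ hU _ (continuous_cofactorTerm z T l c)]
  simp only [cofactorTerm_monomialMatrix_mul u hσ hl, hdet, one_mul]

lemma integral_cofactorTerm_blockSign (hG : IsLeftInvariant (quatUnitary n) G P) (z : ℂ)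
    {i : Fin n} (hi : ∀ s, (i, s) ∈ T) :
    ∫ ω, cofactorTerm z T (i, 1) c (G ω) ∂P = ∫ ω, cofactorTerm z T (i, 0) c (G ω) ∂P := by
  rw [← integral_cofactorTerm_perm hG z (monomialMatrix_blockSign_mem_quatUnitary i) _ _ (hi 0),
    Equiv.swap_apply_left]
  · exact fun r hr => Equiv.swap_apply_of_ne_of_ne (fun h => hr (h ▸ hi 0)) fun h => hr (h ▸ hi 1)
  · rw [Equiv.Perm.sign_swap (by simp)]
    simp [blockSign, Finset.prod_ite_eq', hi 1]

lemma integral_cofactorTerm_blockSwap (hG : IsLeftInvariant (quatUnitary n) G P) (z : ℂ)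
    {i j : Fin n} (hi : ∀ s, (i, s) ∈ T) (hj : ∀ s, (j, s) ∈ T) (s : Fin 2) :
    ∫ ω, cofactorTerm z T (j, s) c (G ω) ∂P = ∫ ω, cofactorTerm z T (i, s) c (G ω) ∂P := by
  rw [← integral_cofactorTerm_perm hG z (monomialMatrix_blockSwap_mem_quatUnitary i j) _ _ (hi s),
    blockSwap_apply, Equiv.swap_apply_left]
  · rintro ⟨k, t⟩ hr
    have hki : k ≠ i := fun h => hr (h ▸ hi t)
    have hkj : k ≠ j := fun h => hr (h ▸ hj t)
    rw [blockSwap_apply, Equiv.swap_apply_of_ne_of_ne hki hkj]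
  · simp [sign_blockSwap]

/-- Rows of a block are exchanged by the quaternion unit `J`, blocks by permutations. When `T` is
not a union of blocks, the quaternion unit `I` makes both sides vanish. -/
lemma integral_cofactorTerm_congr (hG : IsLeftInvariant (quatUnitary n) G P) (z : ℂ)
    (hl : l ∈ T) (hl' : l' ∈ T) :
    ∫ ω, cofactorTerm z T l c (G ω) ∂P = ∫ ω, cofactorTerm z T l' c (G ω) ∂P := by
  by_cases hT : ∀ i : Fin n, (i, 0) ∈ T ↔ (i, 1) ∈ T
  · have hblock {r : Fin n × Fin 2} (hr : r ∈ T) : ∀ s, (r.1, s) ∈ T := by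
      have := hT r.1
      obtain ⟨i, t⟩ := r
      rw [Fin.forall_fin_two]
      fin_cases t <;> simp_all
    have hfirst {r : Fin n × Fin 2} (hr : r ∈ T) : ∫ ω, cofactorTerm z T r c (G ω) ∂P =
        ∫ ω, cofactorTerm z T (r.1, 0) c (G ω) ∂P := by
      have h := integral_cofactorTerm_blockSign (c := c) hG z (hblock hr)
      obtain ⟨i, t⟩ := r
      fin_cases t
      · rfl
      · exact h
    rw [hfirst hl, hfirst hl', integral_cofactorTerm_blockSwap hG z (hblock hl') (hblock hl)]
  · obtain ⟨i, hi⟩ := not_forall.1 hT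
    rw [integral_cofactorTerm_eq_zero hG z hi hl, integral_cofactorTerm_eq_zero hG z hi hl']

variable [IsFiniteMeasure P]

lemma sum_integral_cofactorTerm (hG : IsLeftInvariant (quatUnitary n) G P)
    (hmom : ∀ r c, (fun ω => G ω r c) ∈ finiteMoments P) (z : ℂ) (hT : T.Nonempty) :
    ∑ c ∈ T, ∫ ω, cofactorTerm z T c c (G ω) ∂P = ∫ ω, (mixedRows z T (G ω)).det ∂P := by
  obtain ⟨l, hl⟩ := hT
  calc ∑ c ∈ T, ∫ ω, cofactorTerm z T c c (G ω) ∂P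
      = ∑ c ∈ T, ∫ ω, cofactorTerm z T l c (G ω) ∂P :=
        Finset.sum_congr rfl fun c hc => integral_cofactorTerm_congr hG z hc hl
    _ = ∫ ω, ∑ c ∈ T, cofactorTerm z T l c (G ω) ∂P :=
        (integral_finsetSum T fun c _ =>
          integrable_of_mem_finiteMoments (cofactorTerm_mem_finiteMoments hmom z T l c)).symm
    _ = ∫ ω, (mixedRows z T (G ω)).det ∂P := by simp only [sum_cofactorTerm hl]

lemma integral_det_smul_one_add_mul_trace (hG : IsLeftInvariant (quatUnitary n) G P)
    (hmom : ∀ r c, (fun ω => G ω r c) ∈ finiteMoments P) (z : ℂ) :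
    ∫ ω, (z • 1 + G ω).det * (G ω).trace ∂P =
      z * ∑ T with T.Nonempty, ∫ ω, (mixedRows z T (G ω)).det ∂P := by
  have hdet (T c) : Integrable (fun ω => (mixedRows z T (G ω)).det * G ω c c) P :=
    integrable_of_mem_finiteMoments (mul_mem (det_mixedRows_mem_finiteMoments hmom z T) (hmom c c))
  have hcof (T c) : Integrable (fun ω => z * cofactorTerm z T c c (G ω)) P :=
    (integrable_of_mem_finiteMoments (cofactorTerm_mem_finiteMoments hmom z T c c)).const_mul z
  have hsum (T c) : Integrable
      (fun ω => (mixedRows z T (G ω)).det * G ω c c + z * cofactorTerm z T c c (G ω)) P :=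
    (hdet T c).add (hcof T c)
  have hT (T : Finset (Fin n × Fin 2)) :
      ∑ c ∈ T, ∫ ω, ((mixedRows z T (G ω)).det * G ω c c + z * cofactorTerm z T c c (G ω)) ∂P =
        if T.Nonempty then z * ∫ ω, (mixedRows z T (G ω)).det ∂P else 0 := by
    split_ifs with hne
    · rw [← sum_integral_cofactorTerm hG hmom z hne, Finset.mul_sum]
      refine Finset.sum_congr rfl fun c hc => ?_
      rw [integral_add (hdet T c) (hcof T c), integral_det_mixedRows_mul_apply hG z hc, zero_add,
        integral_const_mul]
    · rw [Finset.not_nonempty_iff_eq_empty.1 hne, Finset.sum_empty]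
  simp only [det_smul_one_add_mul_trace]
  rw [integral_finsetSum _ fun T _ => integrable_finsetSum _ fun c _ => hsum T c,
    Finset.mul_sum, Finset.sum_filter]
  refine Finset.sum_congr rfl fun T _ => ?_
  rw [integral_finsetSum _ fun c _ => hsum T c, hT]

lemma integral_det_smul_one_add (hmom : ∀ r c, (fun ω => G ω r c) ∈ finiteMoments P) (z : ℂ) :
    ∫ ω, (z • 1 + G ω).det ∂P =
      ∑ T with T.Nonempty, ∫ ω, (mixedRows z T (G ω)).det ∂P + P.real Set.univ * z ^ (2 * n) := by
  simp only [det_smul_one_add]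
  rw [integral_finsetSum _ fun T _ =>
    integrable_of_mem_finiteMoments (det_mixedRows_mem_finiteMoments hmom z T),
    ← Finset.sum_filter_add_sum_filter_not Finset.univ Finset.Nonempty]
  simp [Finset.filter_eq', mixedRows_empty, mul_comm n]

theorem integral_det_smul_one_sub_add_trace [IsProbabilityMeasure P]
    (hG : IsLeftInvariant (quatUnitary n) G P)
    (hmom : ∀ r c, (fun ω => G ω r c) ∈ finiteMoments P) (z : ℂ) :
    z * ∫ ω, (z • 1 - G ω).det ∂P +
      ∫ ω, (z • 1 - G ω).det * (G ω).trace ∂P = z ^ (2 * n + 1) := by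
  have hdet : ∫ ω, (z • 1 - G ω).det ∂P =
      ∫ ω, (z • 1 + G ω).det ∂P := by
    simpa [sub_eq_add_neg] using hG (-1) (neg_one_mem_quatUnitary n)
      (fun M => (z • 1 + M).det) (by fun_prop)
  have htrace : ∫ ω, (z • 1 - G ω).det * (G ω).trace ∂P =
      -∫ ω, (z • 1 + G ω).det * (G ω).trace ∂P := by
    have h := hG (-1) (neg_one_mem_quatUnitary n)
      (fun M => (z • 1 + M).det * M.trace) (by fun_prop)
    simp only [neg_mul, one_mul, trace_neg, mul_neg, integral_neg, ← sub_eq_add_neg] at h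
    linear_combination -h
  rw [hdet, htrace, integral_det_smul_one_add_mul_trace hG hmom, integral_det_smul_one_add hmom,
    probReal_univ, Complex.ofReal_one]
  ring

end LeftInvariant

section Entries

/-- The independent entries `(z_{jk}, w_{jk})` of a quaternionic matrix. -/
abbrev QuatEntries (n : ℕ) : Type := Fin n → Fin n → ℂ × ℂ

/-- The independent entries of a matrix of quaternionic form; a left inverse of `quatMatrix`. -/
def quatEntries {n : ℕ} (M : Matrix (Fin n × Fin 2) (Fin n × Fin 2) ℂ) : QuatEntries n :=
  fun j k => (M (j, 0) (k, 0), M (j, 0) (k, 1))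

variable {n : ℕ}

lemma quatEntries_quatMatrix (x : QuatEntries n) : quatEntries (quatMatrix n x) = x := rfl

lemma quatMatrix_quatEntries {M : Matrix (Fin n × Fin 2) (Fin n × Fin 2) ℂ}
    (hM : M ∈ Set.range (quatMatrix n)) : quatMatrix n (quatEntries M) = M := by
  obtain ⟨x, rfl⟩ := hM
  rfl

lemma quatMatrix_add (x y : QuatEntries n) :
    quatMatrix n (x + y) = quatMatrix n x + quatMatrix n y := by
  ext ⟨j, s⟩ ⟨k, t⟩
  fin_cases s <;> fin_cases t <;> simp [quatMatrix, add_comm]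

lemma quatMatrix_smul (a : ℝ) (x : QuatEntries n) :
    quatMatrix n (a • x) = a • quatMatrix n x := by
  ext ⟨j, s⟩ ⟨k, t⟩
  fin_cases s <;> fin_cases t <;> simp [quatMatrix]

lemma continuous_quatMatrix (n : ℕ) : Continuous (quatMatrix n) := by
  refine continuous_matrix fun r c => ?_
  simp only [quatMatrix, of_apply]
  split_ifs <;> fun_prop

lemma norm_quatMatrix_apply_le (x : QuatEntries n) (r c : Fin n × Fin 2) :
    ‖quatMatrix n x r c‖ ≤ ‖x‖ := by
  have hx : ‖x r.1 c.1‖ ≤ ‖x‖ := (norm_le_pi_norm (x r.1) c.1).trans (norm_le_pi_norm x r.1)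
  simp only [quatMatrix, of_apply]
  split_ifs
  · exact (norm_fst_le _).trans hx
  · exact (norm_snd_le _).trans hx
  · simpa only [norm_neg, RCLike.norm_conj] using (norm_snd_le _).trans hx
  · simpa only [RCLike.norm_conj] using (norm_fst_le _).trans hx

lemma continuous_quatEntries :
    Continuous (quatEntries : Matrix (Fin n × Fin 2) (Fin n × Fin 2) ℂ → QuatEntries n) :=
  continuous_pi fun j => continuous_pi fun k =>
    (continuous_id.matrix_elem (j, 0) (k, 0)).prodMk (continuous_id.matrix_elem (j, 0) (k, 1))

/-- Left multiplication by an element of `Sp(n)`, on the independent entries. -/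
noncomputable def quatMulLeft (U : Matrix (Fin n × Fin 2) (Fin n × Fin 2) ℂ)
    (hU : U ∈ quatUnitary n) : QuatEntries n ≃ₜ+ QuatEntries n where
  toFun x := quatEntries (U * quatMatrix n x)
  invFun x := quatEntries (Uᴴ * quatMatrix n x)
  left_inv x := by
    dsimp only
    rw [quatMatrix_quatEntries (mul_mem_range_quatMatrix hU.2 ⟨x, rfl⟩), ← Matrix.mul_assoc,
      ← star_eq_conjTranspose, mem_unitaryGroup_iff'.1 hU.1, Matrix.one_mul,
      quatEntries_quatMatrix]
  right_inv x := by
    dsimp only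
    rw [quatMatrix_quatEntries (mul_mem_range_quatMatrix
        (conjTranspose_mem_range_quatMatrix hU.2) ⟨x, rfl⟩), ← Matrix.mul_assoc,
      ← star_eq_conjTranspose, mem_unitaryGroup_iff.1 hU.1, Matrix.one_mul,
      quatEntries_quatMatrix]
  map_add' x y := by
    rw [quatMatrix_add, Matrix.mul_add]
    rfl
  continuous_toFun :=
    continuous_quatEntries.comp (continuous_const.matrix_mul (continuous_quatMatrix n))
  continuous_invFun :=
    continuous_quatEntries.comp (continuous_const.matrix_mul (continuous_quatMatrix n))

lemma quatMatrix_quatMulLeft {U : Matrix (Fin n × Fin 2) (Fin n × Fin 2) ℂ}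
    (hU : U ∈ quatUnitary n) (x : QuatEntries n) :
    quatMatrix n (quatMulLeft U hU x) = U * quatMatrix n x :=
  quatMatrix_quatEntries (mul_mem_range_quatMatrix hU.2 ⟨x, rfl⟩)

instance isAddHaarMeasure_volume_quatEntries (n : ℕ) :
    (volume : Measure (QuatEntries n)).IsAddHaarMeasure :=
  have _ : (volume : Measure (ℂ × ℂ)).IsAddHaarMeasure := Measure.prod.instIsAddHaarMeasure _ _
  have _ : (volume : Measure (Fin n → ℂ × ℂ)).IsAddHaarMeasure := Measure.pi.isAddHaarMeasure _
  Measure.pi.isAddHaarMeasure fun _ => volume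

end Entries

section Weight

variable {n : ℕ} {α : ℝ}

lemma det_mul_conjTranspose_re {ι : Type*} [Fintype ι] [DecidableEq ι] (G : Matrix ι ι ℂ) :
    (G * Gᴴ).det.re = ‖G.det‖ ^ 2 := by
  rw [det_mul, det_conjTranspose, Complex.star_def, Complex.mul_conj, Complex.ofReal_re,
    Complex.normSq_eq_norm_sq]

lemma inducedQuatGinibreWeight_nonneg (n : ℕ) (α : ℝ) (x : QuatEntries n) :
    0 ≤ inducedQuatGinibreWeight n α x := by
  rw [inducedQuatGinibreWeight, det_mul_conjTranspose_re]
  positivity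

lemma measurable_inducedQuatGinibreWeight (n : ℕ) (α : ℝ) :
    Measurable (inducedQuatGinibreWeight n α) := by
  have hG := (continuous_quatMatrix n).matrix_mul (continuous_quatMatrix n).matrix_conjTranspose
  exact ((Complex.measurable_re.comp hG.matrix_det.measurable).pow_const α).mul
    ((Complex.continuous_re.comp hG.matrix_trace).neg.div_const 2).rexp.measurable

lemma inducedQuatGinibreWeight_quatMulLeft (α : ℝ)
    {U : Matrix (Fin n × Fin 2) (Fin n × Fin 2) ℂ} (hU : U ∈ quatUnitary n) (x : QuatEntries n) :
    inducedQuatGinibreWeight n α (quatMulLeft U hU x) = inducedQuatGinibreWeight n α x := by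
  have hUU : Uᴴ * U = 1 := mem_unitaryGroup_iff'.1 hU.1
  have hUU' : U * Uᴴ = 1 := mem_unitaryGroup_iff.1 hU.1
  have hgram : U * quatMatrix n x * (U * quatMatrix n x)ᴴ =
      U * (quatMatrix n x * (quatMatrix n x)ᴴ) * Uᴴ := by
    simp only [conjTranspose_mul, Matrix.mul_assoc]
  rw [inducedQuatGinibreWeight, quatMatrix_quatMulLeft, hgram, det_conj_of_mul_eq_one hUU' hUU,
    trace_mul_cycle, hUU, Matrix.one_mul, inducedQuatGinibreWeight]

lemma integral_inducedQuatGinibreWeight_pos (hw : Integrable (inducedQuatGinibreWeight n α)) :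
    0 < ∫ x, inducedQuatGinibreWeight n α x := by
  have hopen : IsOpen {x | (quatMatrix n x).det ≠ 0} :=
    isOpen_ne_fun (continuous_quatMatrix n).matrix_det continuous_const
  rw [integral_pos_iff_support_of_nonneg (inducedQuatGinibreWeight_nonneg n α) hw]
  refine (hopen.measure_pos volume ⟨quatEntries 1, ?_⟩).trans_le (measure_mono fun x hx => ?_)
  · have h1 : (1 : Matrix (Fin n × Fin 2) (Fin n × Fin 2) ℂ) ∈ Set.range (quatMatrix n) := by
      simpa using mul_mem_range_quatMatrix (neg_one_mem_quatUnitary n).2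
        (neg_one_mem_quatUnitary n).2
    simp [quatMatrix_quatEntries h1]
  · have : 0 < ‖(quatMatrix n x).det‖ := norm_pos_iff.2 hx
    rw [Function.mem_support, inducedQuatGinibreWeight, det_mul_conjTranspose_re]
    positivity

end Weight

section Integrability

variable {n : ℕ} {α : ℝ}

lemma one_add_pow_mul_exp_le (k : ℕ) {r : ℝ} (hr : 0 ≤ r) :
    (1 + r) ^ k * Real.exp (-(r ^ 2 / 2)) ≤ Real.exp (k ^ 2 / 2) := by
  calc (1 + r) ^ k * Real.exp (-(r ^ 2 / 2)) ≤ Real.exp r ^ k * Real.exp (-(r ^ 2 / 2)) := by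
        gcongr
        linarith [Real.add_one_le_exp r]
    _ = Real.exp (k * r - r ^ 2 / 2) := by rw [← Real.exp_nat_mul, ← Real.exp_add, sub_eq_add_neg]
    _ ≤ Real.exp (k ^ 2 / 2) := Real.exp_le_exp.2 (by nlinarith [sq_nonneg (k - r)])

lemma half_trace_quatMatrix_mul_conjTranspose_re (x : QuatEntries n) :
    (quatMatrix n x * (quatMatrix n x)ᴴ).trace.re / 2 =
      ∑ j, ∑ k, (‖(x j k).1‖ ^ 2 + ‖(x j k).2‖ ^ 2) := by
  rw [div_eq_iff two_ne_zero, mul_comm]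
  simp only [trace, diag_apply, mul_apply, conjTranspose_apply, Fintype.sum_prod_type,
    Fin.sum_univ_two, quatMatrix, of_apply, Complex.re_sum, Finset.mul_sum]
  refine Finset.sum_congr rfl fun j _ => ?_
  rw [Complex.add_re, Complex.re_sum, Complex.re_sum, ← Finset.sum_add_distrib]
  refine Finset.sum_congr rfl fun k _ => ?_
  simp only [Complex.star_def, Complex.mul_conj, Complex.add_re, Complex.ofReal_re,
    Complex.normSq_eq_norm_sq, ↓reduceIte, one_ne_zero, norm_neg, RCLike.norm_conj]
  ring

lemma norm_sq_le_half_trace (x : QuatEntries n) :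
    ‖x‖ ^ 2 ≤ (quatMatrix n x * (quatMatrix n x)ᴴ).trace.re / 2 := by
  rw [half_trace_quatMatrix_mul_conjTranspose_re]
  set R := ∑ j, ∑ k, (‖(x j k).1‖ ^ 2 + ‖(x j k).2‖ ^ 2)
  have hle (j k) : ‖(x j k).1‖ ^ 2 + ‖(x j k).2‖ ^ 2 ≤ R :=
    (Finset.single_le_sum (f := fun k => ‖(x j k).1‖ ^ 2 + ‖(x j k).2‖ ^ 2)
      (fun _ _ => by positivity) (Finset.mem_univ k)).trans
    (Finset.single_le_sum (f := fun j => ∑ k, (‖(x j k).1‖ ^ 2 + ‖(x j k).2‖ ^ 2))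
      (fun _ _ => by positivity) (Finset.mem_univ j))
  rw [← Real.le_sqrt (norm_nonneg x) (by positivity)]
  refine (pi_norm_le_iff_of_nonneg (Real.sqrt_nonneg _)).2 fun j =>
    (pi_norm_le_iff_of_nonneg (Real.sqrt_nonneg _)).2 fun k => ?_
  rw [Prod.norm_def]
  refine max_le (Real.le_sqrt_of_sq_le ?_) (Real.le_sqrt_of_sq_le ?_)
  · exact (le_add_of_nonneg_right (by positivity)).trans (hle j k)
  · exact (le_add_of_nonneg_left (by positivity)).trans (hle j k)

lemma inducedQuatGinibreWeight_smul (α a : ℝ) (x : QuatEntries n) :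
    inducedQuatGinibreWeight n α (a • x) =
      ((a ^ 2) ^ (2 * n)) ^ α * Real.exp ((1 - a ^ 2) *
        ((quatMatrix n x * (quatMatrix n x)ᴴ).trace.re / 2)) * inducedQuatGinibreWeight n α x := by
  have hgram : quatMatrix n (a • x) * (quatMatrix n (a • x))ᴴ =
      (a ^ 2) • (quatMatrix n x * (quatMatrix n x)ᴴ) := by
    rw [quatMatrix_smul, conjTranspose_smul, star_trivial, smul_mul_smul_comm, sq]
  have hdet : 0 ≤ (quatMatrix n x * (quatMatrix n x)ᴴ).det.re := by
    rw [det_mul_conjTranspose_re]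
    positivity
  rw [inducedQuatGinibreWeight, inducedQuatGinibreWeight, hgram, det_smul_of_tower, trace_smul,
    Complex.smul_re, Complex.smul_re, smul_eq_mul, smul_eq_mul, Real.mul_rpow (by positivity) hdet,
    mul_assoc, mul_assoc, mul_left_comm (Real.exp _), ← Real.exp_add]
  simp only [Fintype.card_prod, Fintype.card_fin, mul_comm n]
  ring_nf

lemma integrable_one_add_norm_pow_mul_exp {E : Type*} [NormedAddCommGroup E] [NormedSpace ℝ E]
    [FiniteDimensional ℝ E] [MeasurableSpace E] [BorelSpace E] (μ : Measure E) [μ.IsAddHaarMeasure]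
    (k : ℕ) : Integrable (fun x : E => (1 + ‖x‖) ^ k * Real.exp (-(‖x‖ ^ 2 / 2))) μ := by
  set N := Module.finrank ℝ E + 1
  have hN : Integrable (fun x : E => (1 + ‖x‖) ^ (-(N : ℝ))) μ :=
    integrable_one_add_norm (by simp [N])
  refine (hN.const_mul (Real.exp ((k + N : ℕ) ^ 2 / 2))).mono'
    (by fun_prop) (Filter.Eventually.of_forall fun x => ?_)
  have hpos : 0 < (1 + ‖x‖) ^ N := by positivity
  rw [Real.norm_of_nonneg (by positivity), Real.rpow_neg (by positivity), Real.rpow_natCast,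
    ← div_eq_mul_inv, le_div_iff₀ hpos, mul_right_comm, ← pow_add]
  exact one_add_pow_mul_exp_le (k + N) (norm_nonneg x)

lemma norm_det_quatMatrix_le (x : QuatEntries n) :
    ‖(quatMatrix n x).det‖ ≤ (2 * n).factorial * (1 + ‖x‖) ^ (2 * n) := by
  have h := det_le (abv := NormedField.toAbsoluteValue ℂ) fun r c =>
    (norm_quatMatrix_apply_le x r c).trans (le_add_of_nonneg_left zero_le_one)
  rwa [Fintype.card_prod, Fintype.card_fin, Fintype.card_fin, mul_comm n, nsmul_eq_mul] at h

theorem integrable_inducedQuatGinibreWeight (n : ℕ) (hα : 0 ≤ α) :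
    Integrable (inducedQuatGinibreWeight n α) := by
  set m := ⌈α⌉₊
  set D := ((2 * n).factorial : ℝ)
  have hD : 1 ≤ D := Nat.one_le_cast.2 (2 * n).factorial_pos
  refine ((integrable_one_add_norm_pow_mul_exp volume (2 * n * 2 * m)).const_mul
    ((D ^ 2) ^ m)).mono'
    (measurable_inducedQuatGinibreWeight n α).aestronglyMeasurable
    (Filter.Eventually.of_forall fun x => ?_)
  have hbase : 1 ≤ (D * (1 + ‖x‖) ^ (2 * n)) ^ 2 :=
    one_le_pow₀ (one_le_mul_of_one_le_of_one_le hD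
      (one_le_pow₀ (le_add_of_nonneg_right (norm_nonneg x))))
  have hdet : (‖(quatMatrix n x).det‖ ^ 2) ^ α ≤ (D ^ 2) ^ m * (1 + ‖x‖) ^ (2 * n * 2 * m) :=
    calc (‖(quatMatrix n x).det‖ ^ 2) ^ α ≤ ((D * (1 + ‖x‖) ^ (2 * n)) ^ 2) ^ α := by
          gcongr
          exact norm_det_quatMatrix_le x
      _ ≤ ((D * (1 + ‖x‖) ^ (2 * n)) ^ 2) ^ (m : ℝ) :=
          Real.rpow_le_rpow_of_exponent_le hbase (Nat.le_ceil α)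
      _ = (D ^ 2) ^ m * (1 + ‖x‖) ^ (2 * n * 2 * m) := by
          rw [Real.rpow_natCast, mul_pow, mul_pow, ← pow_mul _ (2 * n), ← pow_mul _ (2 * n * 2)]
  rw [Real.norm_of_nonneg (inducedQuatGinibreWeight_nonneg n α x), inducedQuatGinibreWeight,
    det_mul_conjTranspose_re, ← mul_assoc]
  gcongr
  linarith [norm_sq_le_half_trace x, sq_nonneg ‖x‖]

/-- Shrinking `x` by the factor `√2` in the weight frees half of the Gaussian factor, which absorbs
the power of the norm. -/
lemma integrable_norm_pow_mul_inducedQuatGinibreWeight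
    (hw : Integrable (inducedQuatGinibreWeight n α)) (k : ℕ) :
    Integrable (fun x => ‖x‖ ^ k * inducedQuatGinibreWeight n α x) := by
  have ha : (√2)⁻¹ ^ 2 = (2 : ℝ)⁻¹ := by rw [inv_pow, Real.sq_sqrt zero_le_two]
  set C : ℝ := (((2 : ℝ)⁻¹ ^ (2 * n)) ^ α)⁻¹
  refine ((hw.comp_smul (R := (√2)⁻¹) (by positivity)).const_mul
    (Real.exp (k ^ 2 / 2) * C)).mono' ?_ (Filter.Eventually.of_forall fun x => ?_)
  · exact ((continuous_norm.pow k).measurable.mul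
      (measurable_inducedQuatGinibreWeight n α)).aestronglyMeasurable
  set R : ℝ := (quatMatrix n x * (quatMatrix n x)ᴴ).trace.re / 2
  have hR : ‖x‖ ^ 2 ≤ R := norm_sq_le_half_trace x
  have hw0 := inducedQuatGinibreWeight_nonneg n α x
  have hbound : ‖x‖ ^ k ≤ Real.exp (k ^ 2 / 2) * Real.exp ((1 - 2⁻¹) * R) := by
    calc ‖x‖ ^ k ≤ (1 + ‖x‖) ^ k := by gcongr; exact le_add_of_nonneg_left zero_le_one
      _ = (1 + ‖x‖) ^ k * Real.exp (-(‖x‖ ^ 2 / 2)) * Real.exp (‖x‖ ^ 2 / 2) := by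
          rw [mul_assoc, ← Real.exp_add, neg_add_cancel, Real.exp_zero, mul_one]
      _ ≤ Real.exp (k ^ 2 / 2) * Real.exp ((1 - 2⁻¹) * R) := by
          gcongr
          · exact one_add_pow_mul_exp_le k (norm_nonneg x)
          · linarith
  have hC : C * ((2 : ℝ)⁻¹ ^ (2 * n)) ^ α = 1 := inv_mul_cancel₀ (by positivity)
  rw [Real.norm_of_nonneg (by positivity), inducedQuatGinibreWeight_smul, ha]
  calc ‖x‖ ^ k * inducedQuatGinibreWeight n α x
      ≤ Real.exp (k ^ 2 / 2) * Real.exp ((1 - 2⁻¹) * R) * inducedQuatGinibreWeight n α x := by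
        gcongr
    _ = _ := by linear_combination (-Real.exp (k ^ 2 / 2) * Real.exp ((1 - 2⁻¹) * R) *
          inducedQuatGinibreWeight n α x) * hC

end Integrability

section Ensemble

lemma measurePreserving_withDensity_of_invariant {E : Type*} [AddGroup E] [TopologicalSpace E]
    [IsTopologicalAddGroup E] [LocallyCompactSpace E] [SecondCountableTopology E]
    [MeasurableSpace E] [BorelSpace E] {μ : Measure E} [μ.IsAddHaarMeasure] {ρ : E → ENNReal}
    (hρ : Measurable ρ) [IsFiniteMeasure (μ.withDensity ρ)] (e : E ≃ₜ+ E)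
    (he : ∀ x, ρ (e x) = ρ x) : MeasurePreserving e (μ.withDensity ρ) (μ.withDensity ρ) := by
  have hem : Measurable e := e.continuous.measurable
  refine ⟨hem, ?_⟩
  rcases eq_or_ne (μ.withDensity ρ) 0 with h0 | h0
  · rw [h0, Measure.map_zero]
  have hmap : (μ.withDensity ρ).map e = (μ.map e).withDensity ρ := by
    refine Measure.ext fun s hs => ?_
    rw [Measure.map_apply hem hs, withDensity_apply _ (hem hs), withDensity_apply _ hs,
      setLIntegral_map hs hρ hem]
    simp only [he]
  obtain ⟨c, hc⟩ : ∃ c : ENNReal, (μ.withDensity ρ).map e = c • μ.withDensity ρ := by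
    have _ : (μ.map e).IsAddHaarMeasure := e.isAddHaarMeasure_map μ
    refine ⟨Measure.addHaarScalarFactor (μ.map e) μ, ?_⟩
    rw [hmap, ← withDensity_smul_measure]
    exact congrArg (Measure.withDensity · ρ) (Measure.isAddLeftInvariant_eq_smul (μ.map e) μ)
  have hmass : μ.withDensity ρ Set.univ = c * μ.withDensity ρ Set.univ := by
    simpa only [Measure.map_apply hem MeasurableSet.univ, Set.preimage_univ, Measure.smul_apply,
      smul_eq_mul] using congrArg (· Set.univ) hc
  have hc1 : c = 1 :=
    (ENNReal.mul_left_inj (Measure.measure_univ_ne_zero.2 h0) (measure_ne_top _ _)).1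
      (by rw [one_mul, ← hmass])
  rw [hc, hc1, one_smul]

/-- The normalized density of the induced quaternion real Ginibre ensemble. -/
noncomputable def inducedQuatGinibreDensity (n : ℕ) (α : ℝ) (x : QuatEntries n) : ENNReal :=
  ENNReal.ofReal (inducedQuatGinibreWeight n α x / ∫ y, inducedQuatGinibreWeight n α y)

/-- The induced quaternion real Ginibre ensemble, as a law on the independent entries. When
the weight is not integrable, its Bochner integral is `0` and this is the zero measure. -/
noncomputable abbrev inducedQuatGinibre (n : ℕ) (α : ℝ) : Measure (QuatEntries n) :=
  volume.withDensity (inducedQuatGinibreDensity n α)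

variable {n : ℕ} {α : ℝ}

lemma measurable_inducedQuatGinibreDensity (n : ℕ) (α : ℝ) :
    Measurable (inducedQuatGinibreDensity n α) :=
  ((measurable_inducedQuatGinibreWeight n α).div_const _).ennreal_ofReal

lemma toReal_inducedQuatGinibreDensity (x : QuatEntries n) :
    (inducedQuatGinibreDensity n α x).toReal =
      inducedQuatGinibreWeight n α x / ∫ y, inducedQuatGinibreWeight n α y :=
  ENNReal.toReal_ofReal (div_nonneg (inducedQuatGinibreWeight_nonneg n α x)
    (integral_nonneg (inducedQuatGinibreWeight_nonneg n α)))

lemma inducedQuatGinibreDensity_lt_top (x : QuatEntries n) : inducedQuatGinibreDensity n α x < ⊤ :=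
  ENNReal.ofReal_lt_top

lemma isProbabilityMeasure_inducedQuatGinibre (hw : Integrable (inducedQuatGinibreWeight n α)) :
    IsProbabilityMeasure (inducedQuatGinibre n α) := by
  have hpos := integral_inducedQuatGinibreWeight_pos hw
  refine ⟨?_⟩
  simp only [withDensity_apply _ MeasurableSet.univ, Measure.restrict_univ,
    inducedQuatGinibreDensity]
  rw [← ofReal_integral_eq_lintegral_ofReal (hw.div_const _)
      (Filter.Eventually.of_forall fun x =>
        div_nonneg (inducedQuatGinibreWeight_nonneg n α x) hpos.le),
    integral_div, div_self hpos.ne', ENNReal.ofReal_one]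

lemma integral_inducedQuatGinibre (f : QuatEntries n → ℂ) :
    ∫ x, f x ∂inducedQuatGinibre n α =
      (∫ x, (inducedQuatGinibreWeight n α x : ℂ) * f x) /
        ((∫ x, inducedQuatGinibreWeight n α x : ℝ) : ℂ) := by
  rw [integral_withDensity_eq_integral_toReal_smul (measurable_inducedQuatGinibreDensity n α)
    (Filter.Eventually.of_forall inducedQuatGinibreDensity_lt_top), ← integral_div]
  simp only [toReal_inducedQuatGinibreDensity, Complex.real_smul, Complex.ofReal_div,
    div_mul_eq_mul_div]

lemma isLeftInvariant_inducedQuatGinibre (hw : Integrable (inducedQuatGinibreWeight n α)) :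
    IsLeftInvariant (quatUnitary n) (quatMatrix n) (inducedQuatGinibre n α) := by
  intro U hU f _
  have _ := isProbabilityMeasure_inducedQuatGinibre hw
  have hP : MeasurePreserving (quatMulLeft U hU) (inducedQuatGinibre n α)
      (inducedQuatGinibre n α) :=
    measurePreserving_withDensity_of_invariant (measurable_inducedQuatGinibreDensity n α) _
      fun x => by simp only [inducedQuatGinibreDensity, inducedQuatGinibreWeight_quatMulLeft]
  simpa only [quatMatrix_quatMulLeft] using
    hP.integral_comp (quatMulLeft U hU).toHomeomorph.measurableEmbedding
      fun x => f (quatMatrix n x)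

lemma memLp_quatMatrix_apply (hw : Integrable (inducedQuatGinibreWeight n α))
    (r c : Fin n × Fin 2) (p : ℕ) :
    MemLp (fun x => quatMatrix n x r c) p (inducedQuatGinibre n α) := by
  have hcont : Continuous fun x => quatMatrix n x r c := (continuous_quatMatrix n).matrix_elem r c
  have hmeas := hcont.aestronglyMeasurable (μ := inducedQuatGinibre n α)
  rcases eq_or_ne p 0 with rfl | hp
  · rwa [Nat.cast_zero, memLp_zero_iff_aestronglyMeasurable]
  rw [← integrable_norm_rpow_iff hmeas (mod_cast hp) (ENNReal.natCast_ne_top p),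
    integrable_withDensity_iff_integrable_smul' (measurable_inducedQuatGinibreDensity n α)
      (Filter.Eventually.of_forall inducedQuatGinibreDensity_lt_top)]
  simp only [toReal_inducedQuatGinibreDensity, ENNReal.toReal_natCast, Real.rpow_natCast,
    smul_eq_mul, div_mul_eq_mul_div]
  refine Integrable.div_const ?_ _
  refine (integrable_norm_pow_mul_inducedQuatGinibreWeight hw p).mono' ?_
    (Filter.Eventually.of_forall fun x => ?_)
  · exact ((measurable_inducedQuatGinibreWeight n α).mul
      (hcont.norm.pow p).measurable).aestronglyMeasurable
  · have hw0 := inducedQuatGinibreWeight_nonneg n α x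
    rw [Real.norm_of_nonneg (by positivity), mul_comm]
    gcongr
    exact norm_quatMatrix_apply_le x r c

end Ensemble

theorem inducedQuatGinibre_odd_skew_orthogonal_poly_general (n : ℕ) (α : ℝ)
    (hw : Integrable (inducedQuatGinibreWeight n α)) (z : ℂ) :
    z * ((∫ x : Fin n → Fin n → ℂ × ℂ,
          (inducedQuatGinibreWeight n α x : ℂ) *
            (z • (1 : Matrix (Fin n × Fin 2) (Fin n × Fin 2) ℂ) - quatMatrix n x).det) /
        ((∫ x : Fin n → Fin n → ℂ × ℂ, inducedQuatGinibreWeight n α x : ℝ) : ℂ))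
      + (∫ x : Fin n → Fin n → ℂ × ℂ,
          (inducedQuatGinibreWeight n α x : ℂ) *
            ((z • (1 : Matrix (Fin n × Fin 2) (Fin n × Fin 2) ℂ) - quatMatrix n x).det
              * (quatMatrix n x).trace)) /
        ((∫ x : Fin n → Fin n → ℂ × ℂ, inducedQuatGinibreWeight n α x : ℝ) : ℂ)
      = z ^ (2 * n + 1) := by
  have _ : IsProbabilityMeasure (inducedQuatGinibre n α) :=
    isProbabilityMeasure_inducedQuatGinibre hw
  simpa only [integral_inducedQuatGinibre] using integral_det_smul_one_sub_add_trace
    (isLeftInvariant_inducedQuatGinibre hw) (memLp_quatMatrix_apply hw) z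

/-- The odd-degree skew orthogonal polynomial for the induced quaternion real Ginibre
ensemble is a monomial: `z ⟨det (z I - G)⟩ + ⟨det (z I - G) Tr G⟩ = z^(2n+1)`. -/
theorem inducedQuatGinibre_odd_skew_orthogonal_poly (n : ℕ) (hn : 0 < n)
    (α : ℝ) (hα : 0 ≤ α) (z : ℂ) :
    z * ((∫ x : Fin n → Fin n → ℂ × ℂ,
          (inducedQuatGinibreWeight n α x : ℂ) *
            (z • (1 : Matrix (Fin n × Fin 2) (Fin n × Fin 2) ℂ) - quatMatrix n x).det) /
        ((∫ x : Fin n → Fin n → ℂ × ℂ, inducedQuatGinibreWeight n α x : ℝ) : ℂ))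
      + (∫ x : Fin n → Fin n → ℂ × ℂ,
          (inducedQuatGinibreWeight n α x : ℂ) *
            ((z • (1 : Matrix (Fin n × Fin 2) (Fin n × Fin 2) ℂ) - quatMatrix n x).det
              * (quatMatrix n x).trace)) /
        ((∫ x : Fin n → Fin n → ℂ × ℂ, inducedQuatGinibreWeight n α x : ℝ) : ℂ)
      = z ^ (2 * n + 1) :=
  inducedQuatGinibre_odd_skew_orthogonal_poly_general n α
    (integrable_inducedQuatGinibreWeight n hα) z
end

section
/- Let n be a positive integer and let α₁, α₂ be real parameters with α₁ ≥ 0 and α₂ > α₁ + 3n + 1. For G drawn from the real spherical ensemble of size 2n with parameters (α₁, α₂), and for every complex number z, ⟨det(z·I − G)⟩ = z^{2n}. -/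
open MeasureTheory Matrix

/-- The (unnormalized) density of the real spherical ensemble of size `N` with
parameters `(α₁, α₂)`: `det(Gᵀ G)^{α₁} det(I + Gᵀ G)^{-α₂}`. -/
noncomputable def sphericalRealWeight (N : ℕ) (α₁ α₂ : ℝ) (g : Fin N → Fin N → ℝ) : ℝ :=
  ((Matrix.of g)ᵀ * Matrix.of g).det ^ α₁ *
    (1 + (Matrix.of g)ᵀ * Matrix.of g).det ^ (-α₂)

/-!
The weight depends on `G` only through `Gᵀ G`, so it is invariant under changing the signs of the
rows of `G`. By multilinearity of the determinant, averaging `det (A - G)` over all sign changes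
leaves `det A`, whatever the matrix `A`; the theorem is the case `A = z I`.

For convergence, the Schur complement of the Gram matrix
`[[1 + A Aᴴ, A - G], [(A - G)ᴴ, 1 + Gᴴ G]]` gives `|det (A - G)|² ≤ det (1 + A Aᴴ) det (1 + Gᴴ G)`,
and the powers of `det (1 + Gᵀ G)` can be integrated one row at a time by the matrix determinant
lemma.
-/

section Determinant

variable {n : Type*} [Fintype n] [DecidableEq n]

section Order

open scoped ComplexOrder

variable {𝕜 : Type*} [RCLike 𝕜]

lemma det_one_add_eq_prod_eigenvalues {A : Matrix n n 𝕜} (hA : A.IsHermitian) :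
    (1 + A).det = ∏ i, (1 + hA.eigenvalues i : 𝕜) := by
  have hdiag : 1 + A = Unitary.conjStarAlgAut 𝕜 _ hA.eigenvectorUnitary
      (diagonal fun i => (1 + hA.eigenvalues i : 𝕜)) := by
    conv_lhs => rw [hA.spectral_theorem,
      ← map_one (Unitary.conjStarAlgAut 𝕜 _ hA.eigenvectorUnitary), ← map_add, ← diagonal_one,
      diagonal_add]
    rfl
  rw [hdiag, Unitary.conjStarAlgAut_apply, det_mul_right_comm, ← Unitary.coe_star,
    Unitary.coe_mul_star_self, one_mul, det_diagonal]

lemma one_le_det_one_add {A : Matrix n n 𝕜} (hA : A.PosSemidef) : 1 ≤ (1 + A).det := by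
  rw [det_one_add_eq_prod_eigenvalues hA.isHermitian]
  refine Finset.one_le_prod fun i _ => ?_
  simpa using hA.eigenvalues_nonneg i

lemma det_le_det_add {A B : Matrix n n 𝕜} (hA : A.PosSemidef) (hB : B.PosSemidef) :
    A.det ≤ (A + B).det := by
  by_cases hdet : A.det = 0
  · exact hdet ▸ (hA.add hB).det_nonneg
  open scoped MatrixOrder in
  obtain ⟨C, rfl⟩ := CStarAlgebra.nonneg_iff_eq_star_mul_self.mp hB.nonneg
  rw [star_eq_conjTranspose, det_add_mul _ _ (isUnit_iff_ne_zero.mpr hdet)]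
  exact le_mul_of_one_le_right hA.det_nonneg
    (one_le_det_one_add (hA.inv.mul_mul_conjTranspose_same C))

lemma det_mul_star_det_le_of_posSemidef_fromBlocks {A B D : Matrix n n 𝕜} (hA : A.PosDef)
    (h : (fromBlocks A B Bᴴ D).PosSemidef) : B.det * star B.det ≤ A.det * D.det := by
  have := invertibleOfIsUnitDet A hA.det_pos.ne'.isUnit
  have hschur : (D - Bᴴ * A⁻¹ * B).PosSemidef := (hA.fromBlocks₁₁ B D).mp h
  have hle : star B.det * A.det⁻¹ * B.det ≤ D.det := by
    simpa [Ring.inverse_eq_inv] using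
      det_le_det_add (hA.inv.posSemidef.conjTranspose_mul_mul_same B) hschur
  convert mul_le_mul_of_nonneg_left hle hA.det_pos.le using 1
  field_simp [hA.det_pos.ne']

lemma norm_det_sub_sq_le (A B : Matrix n n 𝕜) :
    ‖(A - B).det‖ ^ 2 ≤ ‖(1 + A * Aᴴ).det‖ * ‖(1 + Bᴴ * B).det‖ := by
  have hA : (1 + A * Aᴴ).PosDef := PosDef.one.add_posSemidef (posSemidef_self_mul_conjTranspose A)
  have hblock : fromBlocks (1 + A * Aᴴ) (A - B) (A - B)ᴴ (1 + Bᴴ * B) =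
      (fromBlocks Aᴴ 1 1 (-B))ᴴ * fromBlocks Aᴴ 1 1 (-B) := by
    simp [fromBlocks_conjTranspose, fromBlocks_multiply, sub_eq_add_neg, add_comm]
  have h := det_mul_star_det_le_of_posSemidef_fromBlocks hA
    (hblock ▸ posSemidef_conjTranspose_mul_self _)
  rw [← starRingEnd_apply, RCLike.mul_conj, ← RCLike.ofReal_pow] at h
  calc ‖(A - B).det‖ ^ 2 ≤ RCLike.re ((1 + A * Aᴴ).det * (1 + Bᴴ * B).det) := by
        simpa only [RCLike.ofReal_re] using (RCLike.le_iff_re_im.mp h).1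
    _ ≤ _ := (RCLike.re_le_norm _).trans_eq (norm_mul _ _)

end Order

omit [Fintype n] in
lemma posDef_one_add_transpose_mul_self {m : Type*} [Fintype m] [Finite n] (G : Matrix m n ℝ) :
    (1 + Gᵀ * G).PosDef :=
  PosDef.one.add_posSemidef (posSemidef_conjTranspose_mul_self G)

lemma det_transpose_mul_self_le_det_one_add {m : Type*} [Fintype m] (G : Matrix m n ℝ) :
    (Gᵀ * G).det ≤ (1 + Gᵀ * G).det :=
  add_comm (Gᵀ * G) 1 ▸ det_le_det_add (posSemidef_conjTranspose_mul_self G) .one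

lemma norm_det_sub_map_ofReal_le (A : Matrix n n ℂ) (G : Matrix n n ℝ) :
    ‖(A - G.map ((↑) : ℝ → ℂ)).det‖ ≤
      √‖(1 + A * Aᴴ).det‖ * (1 + Gᵀ * G).det ^ (1 / 2 : ℝ) := by
  have hpos := (posDef_one_add_transpose_mul_self G).det_pos
  have hgram : (1 + (G.map ((↑) : ℝ → ℂ))ᴴ * G.map ((↑) : ℝ → ℂ)).det =
      ((1 + Gᵀ * G).det : ℂ) := by
    rw [← Complex.ofRealHom_eq_coe, RingHom.map_det]
    congr 1
    ext i j
    simp [mul_apply, one_apply, apply_ite]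
  rw [← Real.sqrt_eq_rpow, ← Real.sqrt_mul (norm_nonneg _)]
  refine Real.le_sqrt_of_sq_le ((norm_det_sub_sq_le A _).trans_eq ?_)
  rw [hgram, Complex.norm_real, Real.norm_of_nonneg hpos.le]

lemma det_transpose_mul_self_add_vecMulVec {R : Type*} [CommRing R] (B : Matrix n n R)
    (u : n → R) :
    (Bᵀ * B + vecMulVec (Bᵀ *ᵥ u) (Bᵀ *ᵥ u)).det = (Bᵀ * B).det * (1 + u ⬝ᵥ u) := by
  have hfactor : Bᵀ * B + vecMulVec (Bᵀ *ᵥ u) (Bᵀ *ᵥ u) = Bᵀ * (1 + vecMulVec u u) * B := by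
    rw [Matrix.mul_add, Matrix.add_mul, Matrix.mul_one, mul_vecMulVec, vecMulVec_mul,
      mulVec_transpose]
  rw [hfactor, det_mul_right_comm, det_mul, vecMulVec_eq Unit,
    det_one_add_replicateCol_mul_replicateRow]

/-- Expanding multilinearly in the rows, every term that contains a row of `B` cancels. -/
lemma sum_det_sub_units_smul {R : Type*} [CommRing R] (A B : Matrix n n R) :
    ∑ ε : n → ℤˣ, (A - of fun i => ε i • B i).det = 2 ^ Fintype.card n * A.det := by
  have hrows : (fun i => ∑ s : ℤˣ, (A i - s • B i)) = (2 : R) • A := by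
    ext i j
    simp [UnitsInt.univ]
  have h := (detRowAlternating (R := R)).toMultilinearMap.map_sum fun i (s : ℤˣ) => A i - s • B i
  rw [hrows] at h
  exact h.symm.trans (det_smul A 2)

end Determinant

section Gram

lemma transpose_mul_self_of_cons {R n : Type*} [NonUnitalNonAssocSemiring R] {k : ℕ} (u : n → R)
    (g : Fin k → n → R) :
    (of (Fin.cons u g : Fin (k + 1) → n → R))ᵀ * of (Fin.cons u g : Fin (k + 1) → n → R) =
      vecMulVec u u + (of g)ᵀ * of g := by
  ext i j
  simp [mul_apply, vecMulVec_apply, Fin.sum_univ_succ]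

variable {m n : Type*} [Fintype m]

lemma continuous_transpose_mul_self_of :
    Continuous fun g : m → n → ℝ => (of g)ᵀ * of g :=
  (Continuous.matrix_transpose continuous_id).matrix_mul continuous_id

lemma transpose_mul_self_units_smul {R : Type*} [NonUnitalNonAssocRing R] (ε : m → ℤˣ)
    (g : m → n → R) :
    (of fun i => ε i • g i)ᵀ * (of fun i => ε i • g i) = (of g)ᵀ * of g := by
  ext i j
  refine Finset.sum_congr rfl fun k _ => ?_
  rcases Int.units_eq_one_or (ε k) with h | h <;> simp [h]

lemma measurePreserving_units_smul [Fintype n] (ε : m → ℤˣ) :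
    MeasurePreserving fun (g : m → n → ℝ) i => ε i • g i := by
  refine volume_preserving_pi (f := fun i (u : n → ℝ) => ε i • u) fun i => ?_
  rcases Int.units_eq_one_or (ε i) with h | h
  · simpa [h, Function.id_def] using MeasurePreserving.id volume
  · simpa [h] using Measure.measurePreserving_neg volume

end Gram

section Integral

lemma lintegral_fin_succ_pi {E : Type*} [MeasureSpace E] [SigmaFinite (volume : Measure E)]
    {k : ℕ} {f : (Fin (k + 1) → E) → ENNReal} (hf : Measurable f) :
    ∫⁻ g, f g = ∫⁻ g : Fin k → E, ∫⁻ u : E, f (Fin.cons u g) := by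
  have hsplit := (volume_preserving_piFinSuccAbove (fun _ : Fin (k + 1) => E) 0).symm
  rw [← hsplit.lintegral_comp hf, Measure.volume_eq_prod]
  refine (lintegral_prod_symm' _ (hf.comp hsplit.measurable)).trans ?_
  simp [MeasurableEquiv.piFinSuccAbove, Fin.consEquiv]

variable {n : Type*} [Fintype n]

lemma integrable_one_add_dotProduct_self_rpow {p : ℝ} (hp : p < -(Fintype.card n / 2)) :
    Integrable fun u : n → ℝ => (1 + u ⬝ᵥ u) ^ p := by
  have h : Integrable fun x : EuclideanSpace ℝ n => (1 + ‖x‖ ^ 2) ^ (-(-2 * p) / 2) :=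
    integrable_rpow_neg_one_add_norm_sq (by rw [finrank_euclideanSpace]; linarith)
  rw [show -(-2 * p) / 2 = p by ring] at h
  simpa only [Function.comp_def, EuclideanSpace.real_norm_sq_eq, dotProduct, ← sq] using
    (PiLp.volume_preserving_toLp n).integrable_comp_of_integrable h

variable [DecidableEq n]

lemma volume_eq_smul_map_toLin' {B : Matrix n n ℝ} (hB : B.det ≠ 0) :
    (volume : Measure (n → ℝ)) = ENNReal.ofReal |B.det| • Measure.map (toLin' B) volume := by
  rw [Real.map_matrix_volume_pi_eq_smul_volume_pi hB, smul_smul,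
    ← ENNReal.ofReal_mul (abs_nonneg _), ← abs_mul, mul_inv_cancel₀ hB, abs_one,
    ENNReal.ofReal_one, one_smul]

/-- Substitute `g = Bᵀ u`, where `A = Bᵀ B`. -/
lemma lintegral_det_add_vecMulVec_rpow {A : Matrix n n ℝ} (hA : A.PosDef) (p : ℝ) :
    ∫⁻ g : n → ℝ, ENNReal.ofReal ((A + vecMulVec g g).det ^ p) =
      ENNReal.ofReal (A.det ^ (p + 1 / 2)) *
        ∫⁻ u : n → ℝ, ENNReal.ofReal ((1 + u ⬝ᵥ u) ^ p) := by
  open scoped MatrixOrder in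
  obtain ⟨B, hB : A = Bᵀ * B⟩ := CStarAlgebra.nonneg_iff_eq_star_mul_self.mp hA.posSemidef.nonneg
  have hdetA : A.det = |Bᵀ.det| ^ 2 := by rw [hB, det_mul, det_transpose, sq_abs, sq]
  have hdetB : Bᵀ.det ≠ 0 := fun h => hA.det_pos.ne' (by simp [hdetA, h])
  have hpull (u : n → ℝ) : |Bᵀ.det| * (A + vecMulVec (Bᵀ *ᵥ u) (Bᵀ *ᵥ u)).det ^ p =
      A.det ^ (p + 1 / 2) * (1 + u ⬝ᵥ u) ^ p := by
    have hu : 0 ≤ u ⬝ᵥ u := by simpa using dotProduct_star_self_nonneg u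
    have hsqrt : |Bᵀ.det| = A.det ^ (1 / 2 : ℝ) := by
      rw [hdetA, ← Real.sqrt_eq_rpow, Real.sqrt_sq (abs_nonneg _)]
    rw [Real.rpow_add hA.det_pos, ← hsqrt, hB, det_transpose_mul_self_add_vecMulVec, ← hB,
      Real.mul_rpow hA.det_pos.le (by positivity)]
    ring
  have hmeas : Measurable fun g : n → ℝ => ENNReal.ofReal ((A + vecMulVec g g).det ^ p) := by
    have hcont : Continuous fun g : n → ℝ => (A + vecMulVec g g).det := by fun_prop
    exact (hcont.measurable.pow_const _).ennreal_ofReal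
  conv_lhs => rw [volume_eq_smul_map_toLin' hdetB]
  rw [lintegral_smul_measure, lintegral_map hmeas (by fun_prop), smul_eq_mul,
    ← lintegral_const_mul' _ _ ENNReal.ofReal_ne_top,
    ← lintegral_const_mul' _ _ ENNReal.ofReal_ne_top]
  refine lintegral_congr fun u => ?_
  rw [toLin'_apply, ← ENNReal.ofReal_mul (abs_nonneg _), hpull,
    ENNReal.ofReal_mul (Real.rpow_nonneg hA.det_pos.le _)]

lemma measurable_det_add_transpose_mul_self_rpow {m : Type*} [Fintype m] (A : Matrix n n ℝ)
    (p : ℝ) : Measurable fun g : m → n → ℝ => (A + (of g)ᵀ * of g).det ^ p :=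
  (continuous_const.add continuous_transpose_mul_self_of).matrix_det.measurable.pow_const p

lemma lintegral_det_add_transpose_mul_self_rpow (k : ℕ) {A : Matrix n n ℝ} (hA : A.PosDef)
    (p : ℝ) :
    ∫⁻ g : Fin k → n → ℝ, ENNReal.ofReal ((A + (of g)ᵀ * of g).det ^ p) =
      ENNReal.ofReal (A.det ^ (p + k / 2)) *
        ∏ j ∈ Finset.range k, ∫⁻ u : n → ℝ, ENNReal.ofReal ((1 + u ⬝ᵥ u) ^ (p + j / 2)) := by
  induction k generalizing p with
  | zero => simp [volume_pi]
  | succ k ih =>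
    have hmeas := (measurable_det_add_transpose_mul_self_rpow (m := Fin (k + 1)) A p).ennreal_ofReal
    have hrow (g : Fin k → n → ℝ) :
        ∫⁻ u, ENNReal.ofReal ((A + (of (Fin.cons u g : Fin (k + 1) → n → ℝ))ᵀ *
          of (Fin.cons u g : Fin (k + 1) → n → ℝ)).det ^ p) =
        ENNReal.ofReal ((A + (of g)ᵀ * of g).det ^ (p + 1 / 2)) *
          ∫⁻ u : n → ℝ, ENNReal.ofReal ((1 + u ⬝ᵥ u) ^ p) := by
      simp_rw [transpose_mul_self_of_cons, add_left_comm A, add_comm (vecMulVec _ _)]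
      exact lintegral_det_add_vecMulVec_rpow
        (hA.add_posSemidef (posSemidef_conjTranspose_mul_self (of g))) p
    simp_rw [lintegral_fin_succ_pi hmeas, hrow]
    rw [lintegral_mul_const _ (measurable_det_add_transpose_mul_self_rpow A _).ennreal_ofReal,
      ih, Finset.prod_range_succ']
    push_cast
    ring_nf

lemma integrable_det_one_add_transpose_mul_self_rpow {k : ℕ} {p : ℝ}
    (hp : p < -((Fintype.card n + k - 1) / 2)) :
    Integrable fun g : Fin k → n → ℝ => (1 + (of g)ᵀ * of g).det ^ p := by
  refine ⟨(measurable_det_add_transpose_mul_self_rpow 1 p).aestronglyMeasurable, ?_⟩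
  rw [hasFiniteIntegral_iff_ofReal (.of_forall fun g =>
    Real.rpow_nonneg (posDef_one_add_transpose_mul_self (of g)).det_pos.le _),
    lintegral_det_add_transpose_mul_self_rpow k PosDef.one]
  refine ENNReal.mul_lt_top ENNReal.ofReal_lt_top (ENNReal.prod_lt_top fun j hj => ?_)
  have hjk : (j : ℝ) + 1 ≤ k := by exact_mod_cast Finset.mem_range.mp hj
  exact (integrable_one_add_dotProduct_self_rpow (by linarith)).lintegral_lt_top

lemma integral_mul_det_sub_of_units_smul_invariant {w : (n → n → ℝ) → ℂ}
    (hw : ∀ (ε : n → ℤˣ) g, w (fun i => ε i • g i) = w g) (A : Matrix n n ℂ)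
    (hint : Integrable fun g => w g * (A - (of g).map ((↑) : ℝ → ℂ)).det) :
    ∫ g, w g * (A - (of g).map ((↑) : ℝ → ℂ)).det = (∫ g, w g) * A.det := by
  set F : (n → n → ℝ) → ℂ := fun g => w g * (A - (of g).map ((↑) : ℝ → ℂ)).det with hF
  have hflip (ε : n → ℤˣ) : ∫ g : n → n → ℝ, F (fun i => ε i • g i) = ∫ g, F g := by
    have hε := measurePreserving_units_smul (n := n) ε
    rw [← integral_map hε.aemeasurable (hε.map_eq.symm ▸ hint.aestronglyMeasurable), hε.map_eq]
  have hsum (g : n → n → ℝ) :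
      ∑ ε : n → ℤˣ, F (fun i => ε i • g i) = 2 ^ Fintype.card n * (w g * A.det) := by
    have hmap (ε : n → ℤˣ) : (of fun i => ε i • g i).map ((↑) : ℝ → ℂ) =
        of fun i => ε i • (of g).map ((↑) : ℝ → ℂ) i := by
      ext i j
      simp [Units.smul_def]
    simp_rw [hF, hw, hmap, ← Finset.mul_sum, sum_det_sub_units_smul]
    ring
  refine mul_left_cancel₀ (pow_ne_zero (Fintype.card n) (two_ne_zero (α := ℂ))) ?_
  calc 2 ^ Fintype.card n * ∫ g, F g
      = ∑ ε : n → ℤˣ, ∫ g : n → n → ℝ, F (fun i => ε i • g i) := by simp [hflip]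
    _ = ∫ g : n → n → ℝ, ∑ ε : n → ℤˣ, F (fun i => ε i • g i) :=
        (integral_finsetSum _ fun ε _ =>
          (measurePreserving_units_smul ε).integrable_comp_of_integrable hint).symm
    _ = 2 ^ Fintype.card n * ((∫ g, w g) * A.det) := by
        simp_rw [hsum, integral_const_mul, integral_mul_const]

end Integral

section Weight

variable {N : ℕ} {α₁ α₂ : ℝ}

lemma sphericalRealWeight_nonneg (α₁ α₂ : ℝ) (g : Fin N → Fin N → ℝ) :
    0 ≤ sphericalRealWeight N α₁ α₂ g :=
  mul_nonneg (Real.rpow_nonneg (posSemidef_conjTranspose_mul_self (of g)).det_nonneg _)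
    (Real.rpow_nonneg (posDef_one_add_transpose_mul_self (of g)).det_pos.le _)

lemma sphericalRealWeight_units_smul (α₁ α₂ : ℝ) (ε : Fin N → ℤˣ) (g : Fin N → Fin N → ℝ) :
    sphericalRealWeight N α₁ α₂ (fun i => ε i • g i) = sphericalRealWeight N α₁ α₂ g := by
  rw [sphericalRealWeight, sphericalRealWeight, transpose_mul_self_units_smul]

lemma continuous_sphericalRealWeight (hα₁ : 0 ≤ α₁) (α₂ : ℝ) :
    Continuous (sphericalRealWeight N α₁ α₂) :=
  (continuous_transpose_mul_self_of.matrix_det.rpow_const fun _ => Or.inr hα₁).mul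
    ((continuous_const.add continuous_transpose_mul_self_of).matrix_det.rpow_const fun g =>
      Or.inl (posDef_one_add_transpose_mul_self (of g)).det_pos.ne')

lemma sphericalRealWeight_le (hα₁ : 0 ≤ α₁) (α₂ : ℝ) (g : Fin N → Fin N → ℝ) :
    sphericalRealWeight N α₁ α₂ g ≤ (1 + (of g)ᵀ * of g).det ^ (α₁ - α₂) := by
  have hpos := (posDef_one_add_transpose_mul_self (of g)).det_pos
  rw [sub_eq_add_neg, Real.rpow_add hpos, sphericalRealWeight]
  gcongr
  · exact (posSemidef_conjTranspose_mul_self (of g)).det_nonneg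
  · exact det_transpose_mul_self_le_det_one_add (of g)

lemma integrable_sphericalRealWeight (hα₁ : 0 ≤ α₁) (hα₂ : α₁ + N < α₂ + 1 / 2) :
    Integrable (sphericalRealWeight N α₁ α₂) := by
  refine (integrable_det_one_add_transpose_mul_self_rpow (p := α₁ - α₂) ?_).mono'
    (continuous_sphericalRealWeight hα₁ α₂).aestronglyMeasurable (.of_forall fun g => ?_)
  · rw [Fintype.card_fin]
    linarith
  · rw [Real.norm_of_nonneg (sphericalRealWeight_nonneg _ _ g)]
    exact sphericalRealWeight_le hα₁ α₂ g

lemma integral_sphericalRealWeight_pos (hα₁ : 0 ≤ α₁) (hα₂ : α₁ + N < α₂ + 1 / 2) :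
    0 < ∫ g, sphericalRealWeight N α₁ α₂ g := by
  refine integral_pos_of_integrable_nonneg_nonzero (x := (1 : Matrix (Fin N) (Fin N) ℝ))
    (continuous_sphericalRealWeight hα₁ α₂) (integrable_sphericalRealWeight hα₁ hα₂)
    (sphericalRealWeight_nonneg α₁ α₂) ?_
  have hpos := (posDef_one_add_transpose_mul_self (1 : Matrix (Fin N) (Fin N) ℝ)).det_pos
  refine mul_ne_zero ?_ (Real.rpow_pos_of_pos hpos _).ne'
  simp [show of (1 : Matrix (Fin N) (Fin N) ℝ) = 1 from rfl]

lemma integrable_sphericalRealWeight_mul_det_sub (hα₁ : 0 ≤ α₁) (hα₂ : α₁ + N < α₂)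
    (A : Matrix (Fin N) (Fin N) ℂ) :
    Integrable fun g =>
      (sphericalRealWeight N α₁ α₂ g : ℂ) * (A - (of g).map ((↑) : ℝ → ℂ)).det := by
  have hcont : Continuous fun g : Fin N → Fin N → ℝ => (A - (of g).map ((↑) : ℝ → ℂ)).det :=
    (continuous_const.sub
      (Continuous.matrix_map continuous_id Complex.continuous_ofReal)).matrix_det
  refine ((integrable_det_one_add_transpose_mul_self_rpow (p := α₁ - α₂ + 1 / 2) ?_).const_mul
    √‖(1 + A * Aᴴ).det‖).mono'
    ((Complex.continuous_ofReal.comp (continuous_sphericalRealWeight hα₁ α₂)).mul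
      hcont).aestronglyMeasurable (.of_forall fun g => ?_)
  · rw [Fintype.card_fin]
    linarith
  have hpos := (posDef_one_add_transpose_mul_self (of g)).det_pos
  rw [norm_mul, Complex.norm_real, Real.norm_of_nonneg (sphericalRealWeight_nonneg _ _ g),
    Real.rpow_add hpos, mul_left_comm]
  exact mul_le_mul (sphericalRealWeight_le hα₁ α₂ g) (norm_det_sub_map_ofReal_le A (of g))
    (norm_nonneg _) (Real.rpow_nonneg hpos.le _)

end Weight

theorem realSpherical_even_skew_orthogonal_poly_general (N : ℕ) {α₁ α₂ : ℝ} (hα₁ : 0 ≤ α₁)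
    (hα₂ : α₁ + N < α₂) (A : Matrix (Fin N) (Fin N) ℂ) :
    (∫ g : Fin N → Fin N → ℝ,
        (sphericalRealWeight N α₁ α₂ g : ℂ) * (A - (of g).map ((↑) : ℝ → ℂ)).det) /
      ((∫ g : Fin N → Fin N → ℝ, sphericalRealWeight N α₁ α₂ g : ℝ) : ℂ) = A.det := by
  have hmass : ((∫ g, sphericalRealWeight N α₁ α₂ g : ℝ) : ℂ) ≠ 0 := by
    exact_mod_cast (integral_sphericalRealWeight_pos hα₁ (by linarith)).ne'
  rw [integral_mul_det_sub_of_units_smul_invariant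
    (fun ε g => by rw [sphericalRealWeight_units_smul]) A
    (integrable_sphericalRealWeight_mul_det_sub hα₁ hα₂ A), integral_complex_ofReal,
    mul_div_cancel_left₀ _ hmass]

/-- The even-degree skew orthogonal polynomial for the real spherical ensemble:
`⟨det (z I - G)⟩ = z^(2n)`. -/
theorem realSpherical_even_skew_orthogonal_poly (n : ℕ) (hn : 0 < n)
    (α₁ α₂ : ℝ) (hα₁ : 0 ≤ α₁) (hα₂ : α₁ + 3 * n + 1 < α₂) (z : ℂ) :
    (∫ g : Fin (2 * n) → Fin (2 * n) → ℝ,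
        (sphericalRealWeight (2 * n) α₁ α₂ g : ℂ) *
          (z • (1 : Matrix (Fin (2 * n)) (Fin (2 * n)) ℂ)
            - (Matrix.of g).map ((↑) : ℝ → ℂ)).det) /
      ((∫ g : Fin (2 * n) → Fin (2 * n) → ℝ, sphericalRealWeight (2 * n) α₁ α₂ g : ℝ) : ℂ)
      = z ^ (2 * n) := by
  have hlt : α₁ + (2 * n : ℕ) < α₂ := by push_cast; linarith [n.cast_nonneg (α := ℝ)]
  simpa using realSpherical_even_skew_orthogonal_poly_general (2 * n) hα₁ hlt (z • 1)
end
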